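/- arXiv:1907.07801 — 5 statements merged into one kernel-verified Lean document; each statement's English description precedes it below -/
import Mathlib

section
/- Let P and Q be finite posets and let f, g : P → Q be monotone maps with f ≤ g pointwise. Let s(f), s(g) : s(P) → s(Q) be the induced maps on nonempty chains (given by taking images). Then s(f) and s(g) are strongly homotopic, i.e. they are related by the reflexive-transitive closure of pointwise comparability of monotone maps s(P) → s(Q). Consequently, if f and g lie in the same connected component of the poset of monotone maps P → Q, then s(f) and s(g) lie in the same connected component of the poset of monotone maps s(P) → s(Q). -/
/-- The poset `s(P)` of nonempty chains in `P`, ordered by inclusion. -/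
abbrev Chains (P : Type*) [Preorder P] : Type _ :=
  {s : Set P // s.Nonempty ∧ IsChain (· ≤ ·) s}

/-- The map `s(f) : s(P) → s(Q)` induced by a monotone map `f : P → Q`,
sending a nonempty chain to its image. -/
def sMap {P Q : Type*} [Preorder P] [Preorder Q] (f : P →o Q) : Chains P →o Chains Q where
  toFun σ := ⟨f '' σ.1, σ.2.1.image f, σ.2.2.image_of_map_rel _ _ f (fun _ _ h => f.monotone h)⟩
  monotone' := fun _ _ h => Set.image_mono h

/-- Two monotone maps are strongly homotopic if they are joined by a fence of pointwise
comparable monotone maps. -/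
abbrev StronglyHomotopic {R S : Type*} [Preorder R] [Preorder S] : (R →o S) → (R →o S) → Prop :=
  Relation.ReflTransGen (fun h k : R →o S => h ≤ k ∨ k ≤ h)

theorem StronglyHomotopic.symm {R S : Type*} [Preorder R] [Preorder S] {h k : R →o S}
    (H : StronglyHomotopic h k) : StronglyHomotopic k h := by
  induction H with
  | refl => exact Relation.ReflTransGen.refl
  | tail _ h ih => exact ih.head h.symm

/-- If `f ≤ g` and `g x ≤ f y` whenever `x < y`, then `σ ↦ f(σ) ∪ g(σ)` is a monotone map into
chains dominating both `s(f)` and `s(g)`. -/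
theorem sMap_stronglyHomotopic_of_lt {P Q : Type*} [PartialOrder P] [Preorder Q] {f g : P →o Q}
    (hfg : f ≤ g) (hlt : ∀ x y, x < y → g x ≤ f y) :
    StronglyHomotopic (sMap f) (sMap g) := by
  have comparable : ∀ σ : Chains P, ∀ x ∈ σ.1, ∀ y ∈ σ.1, f x ≤ g y ∨ g y ≤ f x := by
    intro σ x hx y hy
    rcases σ.2.2.total hx hy with h | h
    · exact Or.inl ((hfg x).trans (g.monotone h))
    · rcases h.eq_or_lt with rfl | h
      · exact Or.inl (hfg _)
      · exact Or.inr (hlt _ _ h)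
  let u : Chains P →o Chains Q :=
    { toFun := fun σ => ⟨f '' σ.1 ∪ g '' σ.1, (σ.2.1.image f).inl, by
        rintro _ (⟨x, hx, rfl⟩ | ⟨x, hx, rfl⟩) _ (⟨y, hy, rfl⟩ | ⟨y, hy, rfl⟩) _
        · exact (σ.2.2.total hx hy).imp (f.monotone ·) (f.monotone ·)
        · exact comparable σ x hx y hy
        · exact (comparable σ y hy x hx).symm
        · exact (σ.2.2.total hx hy).imp (g.monotone ·) (g.monotone ·)⟩
      monotone' := fun _ _ h => Set.union_subset_union (Set.image_mono h) (Set.image_mono h) }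
  have hfu : sMap f ≤ u := fun _ => Set.subset_union_left
  have hgu : sMap g ≤ u := fun _ => Set.subset_union_right
  exact Relation.ReflTransGen.head (b := u) (Or.inl hfu)
    (Relation.ReflTransGen.single (Or.inr hgu))

/-- If `f ≤ g` are distinct on a finite poset, then `f` can be raised to the value of `g` at a single point
where they differ, keeping it monotone. -/
theorem exists_orderHom_update_of_le_of_ne {P Q : Type*} [PartialOrder P] [Finite P] [PartialOrder Q]
    {f g : P →o Q} (hfg : f ≤ g) (hne : f ≠ g) :
    ∃ (p : P) (k : P →o Q), f p ≠ g p ∧ k p = g p ∧ ∀ x, x ≠ p → k x = f x := by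
  classical
  obtain ⟨x, hx⟩ : ∃ x, f x ≠ g x := by
    by_contra! h
    exact hne (OrderHom.ext _ _ (funext h))
  obtain ⟨p, hp⟩ := (Set.toFinite {x | f x ≠ g x}).exists_maximal ⟨x, hx⟩
  have heq : ∀ y, p < y → f y = g y := fun y hy => by
    by_contra h
    exact hp.not_gt h hy
  suffices hmono : Monotone (Function.update f p (g p)) from
    ⟨p, ⟨_, hmono⟩, hp.prop, by simp, fun x hx => by simp [hx]⟩
  intro x y hxy
  rcases eq_or_ne x p with rfl | hx
  · rcases hxy.eq_or_lt with rfl | hlt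
    · rfl
    · simpa [hlt.ne', heq y hlt] using g.monotone hxy
  · rcases eq_or_ne y p with rfl | hy
    · simpa [hx] using (hfg x).trans (g.monotone hxy)
    · simpa [hx, hy] using f.monotone hxy

theorem sMap_stronglyHomotopic_of_le {P Q : Type*} [PartialOrder P] [Finite P] [PartialOrder Q]
    {f g : P →o Q} (hfg : f ≤ g) : StronglyHomotopic (sMap f) (sMap g) := by
  induction hn : {x | f x ≠ g x}.ncard using Nat.strong_induction_on generalizing f with
  | _ n ih =>
    rcases eq_or_ne f g with rfl | hne
    · exact Relation.ReflTransGen.refl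
    obtain ⟨p, k, hp, hkp, hk⟩ := exists_orderHom_update_of_le_of_ne hfg hne
    have hfk : f ≤ k := fun x => by
      rcases eq_or_ne x p with rfl | hx
      · exact (hfg x).trans hkp.ge
      · exact (hk x hx).ge
    have hkg : k ≤ g := fun x => by
      rcases eq_or_ne x p with rfl | hx
      · exact hkp.le
      · exact (hk x hx).le.trans (hfg x)
    have hlt : ∀ x y, x < y → k x ≤ f y := fun x y hxy => by
      rcases eq_or_ne x p with rfl | hx
      · exact (k.monotone hxy.le).trans (hk y hxy.ne').le
      · exact (hk x hx).le.trans (f.monotone hxy.le)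
    have hcard : {x | k x ≠ g x}.ncard < n := by
      rw [← hn]
      refine Set.ncard_lt_ncard ⟨fun x hx => ?_, fun h => h hp hkp⟩ (Set.toFinite _)
      rcases eq_or_ne x p with rfl | hxp
      · exact absurd hkp hx
      · simpa [hk x hxp] using hx
    exact (sMap_stronglyHomotopic_of_lt hfk hlt).trans (ih _ hcard hkg rfl)

theorem stmt13 {P Q : Type*} [PartialOrder P] [Fintype P] [PartialOrder Q] [Fintype Q]
    (f g : P →o Q) :
    (f ≤ g → Relation.ReflTransGen
      (fun h k : Chains P →o Chains Q => h ≤ k ∨ k ≤ h) (sMap f) (sMap g)) ∧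
    (Relation.ReflTransGen (fun h k : P →o Q => h ≤ k ∨ k ≤ h) f g →
      Relation.ReflTransGen
        (fun h k : Chains P →o Chains Q => h ≤ k ∨ k ≤ h) (sMap f) (sMap g)) := by
  refine ⟨sMap_stronglyHomotopic_of_le, fun H => ?_⟩
  induction H with
  | refl => exact Relation.ReflTransGen.refl
  | tail _ h ih =>
    rcases h with h | h
    · exact ih.trans (sMap_stronglyHomotopic_of_le h)
    · exact ih.trans (sMap_stronglyHomotopic_of_le h).symm
end

section
/- Let 𝒯 be a triangulated category, let 𝒢 be a small set of objects of 𝒯, and let 𝒰 be the smallest thick triangulated subcategory of 𝒯 containing 𝒢. Then 𝒰 is essentially small (it has a small skeleton). -/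
open CategoryTheory Limits Pretriangulated

universe v u

namespace CategoryTheory.ObjectProperty

section Retract

variable {C : Type u} [Category.{v} C]

/-- A retract of `Y` is determined up to isomorphism by the induced idempotent of `Y`. -/
instance essentiallySmall_retractClosure (P : ObjectProperty C)
    [ObjectProperty.EssentiallySmall.{v} P] :
    ObjectProperty.EssentiallySmall.{v} P.retractClosure := by
  obtain ⟨Q, _, hQ⟩ := EssentiallySmall.exists_small_le'.{v} P
  let I := Σ Y : Subtype Q, { p : Y.1 ⟶ Y.1 // ∃ (X : C) (h : Retract X Y.1), h.r ≫ h.i = p }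
  choose X h hp using fun j : I ↦ j.2.2
  refine ⟨.ofObj X, inferInstance, ?_⟩
  refine (monotone_retractClosure hQ).trans ?_
  rw [retractClosure_isoClosure]
  rintro Z ⟨Y, hY, ⟨s⟩⟩
  let j : I := ⟨⟨Y, hY⟩, s.r ≫ s.i, Z, s, rfl⟩
  have hj : (h j).r ≫ (h j).i = s.r ≫ s.i := hp j
  refine ⟨X j, ⟨j⟩, ⟨{ hom := s.i ≫ (h j).r, inv := (h j).i ≫ s.r,
                       hom_inv_id := ?_, inv_hom_id := ?_ }⟩⟩
  · simp [reassoc_of% hj]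
  · simp [← reassoc_of% hj]

end Retract

variable {C : Type u} [Category.{v} C] [HasZeroObject C] [Preadditive C]
  [HasShift C ℤ] [∀ n : ℤ, (shiftFunctor C n).Additive] [Pretriangulated C]

/-- An extension of `Z` by `X` is determined up to isomorphism by a morphism `Z ⟶ X⟦1⟧`. -/
instance essentiallySmall_extensionProduct (P Q : ObjectProperty C)
    [ObjectProperty.EssentiallySmall.{v} P] [ObjectProperty.EssentiallySmall.{v} Q] :
    ObjectProperty.EssentiallySmall.{v} (extensionProduct P Q) := by
  obtain ⟨P', _, hP⟩ := EssentiallySmall.exists_small_le'.{v} P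
  obtain ⟨Q', _, hQ⟩ := EssentiallySmall.exists_small_le'.{v} Q
  let I := Σ (X : Subtype P') (Z : Subtype Q'), (Z.1 ⟶ X.1⟦(1 : ℤ)⟧)
  choose Y f g hT using fun j : I ↦ distinguished_cocone_triangle₂ j.2.2
  refine ⟨.ofObj Y, inferInstance, ?_⟩
  refine (monotone_extensionProduct_left Q hP).trans
    ((monotone_extensionProduct_right _ hQ).trans ?_)
  rw [extensionProduct_isoClosure_left, extensionProduct_isoClosure_right]
  rintro W ⟨X, Z, a, b, c, hW, hX, hZ⟩
  let j : I := ⟨⟨X, hX⟩, ⟨Z, hZ⟩, c⟩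
  have comm : c ≫ (shiftFunctor C (1 : ℤ)).map (𝟙 X) = 𝟙 Z ≫ c := by simp
  exact ⟨Y j, ⟨j⟩, ⟨Triangle.π₂.mapIso (isoTriangleOfIso₁₃ _ _ hW (hT j) (Iso.refl X)
    (Iso.refl Z) comm)⟩⟩

/-- The objects obtained from `P` by at most one shift, extension or retract. -/
def thickStep (P : ObjectProperty C) : ObjectProperty C :=
  P.retractClosure ⊔ extensionProduct P P ⊔ ⨆ n : ℤ, P.map (shiftFunctor C n)

instance essentiallySmall_thickStep (P : ObjectProperty C)
    [ObjectProperty.EssentiallySmall.{v} P] :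
    ObjectProperty.EssentiallySmall.{v} P.thickStep := by
  unfold thickStep
  infer_instance

lemma le_thickStep (P : ObjectProperty C) : P ≤ P.thickStep :=
  P.le_retractClosure.trans (le_sup_left.trans le_sup_left)

/-- The objects obtained from `P` by at most `n` successive shifts, extensions or retracts. -/
def thickIter (P : ObjectProperty C) (n : ℕ) : ObjectProperty C := thickStep^[n] P

lemma thickIter_succ (P : ObjectProperty C) (n : ℕ) :
    P.thickIter (n + 1) = (P.thickIter n).thickStep :=
  Function.iterate_succ_apply' _ _ _

lemma monotone_thickIter (P : ObjectProperty C) : Monotone P.thickIter :=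
  monotone_nat_of_le_succ fun n ↦ by
    rw [thickIter_succ]
    exact le_thickStep _

instance essentiallySmall_thickIter (P : ObjectProperty C)
    [ObjectProperty.EssentiallySmall.{v} P] (n : ℕ) :
    ObjectProperty.EssentiallySmall.{v} (P.thickIter n) := by
  induction n with
  | zero => assumption
  | succ n ih =>
    rw [thickIter_succ]
    infer_instance

/-- The objects obtained from `P` by finitely many shifts, extensions and retracts. -/
def thickClosure (P : ObjectProperty C) : ObjectProperty C := ⨆ n, P.thickIter n

instance essentiallySmall_thickClosure (P : ObjectProperty C)
    [ObjectProperty.EssentiallySmall.{v} P] :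
    ObjectProperty.EssentiallySmall.{v} P.thickClosure := by
  unfold thickClosure
  infer_instance

lemma thickClosure_iff (P : ObjectProperty C) (X : C) :
    P.thickClosure X ↔ ∃ n, P.thickIter n X := by
  simp [thickClosure]

lemma le_thickClosure (P : ObjectProperty C) : P ≤ P.thickClosure :=
  le_iSup P.thickIter 0

lemma thickClosure_of_thickStep {P : ObjectProperty C} {n : ℕ} {X : C}
    (hX : (P.thickIter n).thickStep X) : P.thickClosure X :=
  (P.thickClosure_iff X).2 ⟨n + 1, by rwa [thickIter_succ]⟩

instance (P : ObjectProperty C) : P.thickClosure.IsStableUnderRetracts where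
  of_retract {X Y} h hY := by
    obtain ⟨n, hn⟩ := (P.thickClosure_iff Y).1 hY
    exact thickClosure_of_thickStep (Or.inl (Or.inl (prop_retractClosure hn h)))

lemma thickClosure_shift {P : ObjectProperty C} {X : C} (hX : P.thickClosure X) (k : ℤ) :
    P.thickClosure (X⟦k⟧) := by
  obtain ⟨n, hn⟩ := (P.thickClosure_iff X).1 hX
  exact thickClosure_of_thickStep
    (Or.inr (le_iSup (fun k : ℤ ↦ (P.thickIter n).map (shiftFunctor C k)) k _
      (prop_map_obj _ _ hn)))

lemma thickClosure_ext₂ {P : ObjectProperty C} (T : Triangle C) (hT : T ∈ distTriang C)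
    (h₁ : P.thickClosure T.obj₁) (h₃ : P.thickClosure T.obj₃) : P.thickClosure T.obj₂ := by
  obtain ⟨m, hm⟩ := (P.thickClosure_iff _).1 h₁
  obtain ⟨n, hn⟩ := (P.thickClosure_iff _).1 h₃
  exact thickClosure_of_thickStep (n := max m n) (Or.inl (Or.inr ⟨_, _, _, _, _, hT,
    P.monotone_thickIter (le_max_left m n) _ hm, P.monotone_thickIter (le_max_right m n) _ hn⟩))

end CategoryTheory.ObjectProperty

/-- If `𝒰` (the objects satisfying `P`) is the smallest thick triangulated subcategory of a
triangulated category containing a small set of objects `G i`, then `𝒰` is essentially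
small. -/
theorem stmt16 (C : Type u) [Category.{v} C] [HasZeroObject C] [Preadditive C]
    [HasShift C ℤ] [∀ n : ℤ, (CategoryTheory.shiftFunctor C n).Additive]
    [Pretriangulated C]
    {ι : Type v} (G : ι → C)
    (P : C → Prop)
    -- `P` defines a thick triangulated subcategory containing the `G i` ...
    (hzero : ∀ Z : C, IsZero Z → P Z)
    (hiso : ∀ ⦃X Y : C⦄, (X ≅ Y) → P X → P Y)
    (hshift : ∀ (X : C) (n : ℤ), P X → P (X⟦n⟧))
    (hext : ∀ (T : Triangle C), T ∈ (distTriang C) → P T.obj₁ → P T.obj₃ → P T.obj₂)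
    (hretract : ∀ ⦃X Y : C⦄ (i : X ⟶ Y) (r : Y ⟶ X), i ≫ r = 𝟙 X → P Y → P X)
    (hG : ∀ i, P (G i))
    -- ... and it is the smallest such
    (hmin : ∀ (P' : C → Prop),
      (∀ Z : C, IsZero Z → P' Z) →
      (∀ ⦃X Y : C⦄, (X ≅ Y) → P' X → P' Y) →
      (∀ (X : C) (n : ℤ), P' X → P' (X⟦n⟧)) →
      (∀ (T : Triangle C), T ∈ (distTriang C) → P' T.obj₁ → P' T.obj₃ → P' T.obj₂) →
      (∀ ⦃X Y : C⦄ (i : X ⟶ Y) (r : Y ⟶ X), i ≫ r = 𝟙 X → P' Y → P' X) →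
      (∀ i, P' (G i)) → ∀ X, P X → P' X) :
    EssentiallySmall.{v} (ObjectProperty.FullSubcategory P) := by
  obtain ⟨O, -⟩ := HasZeroObject.zero (C := C)
  let Q : ObjectProperty C := .ofObj G ⊔ .ofObj fun _ : PUnit.{v + 1} ↦ O
  have hQ : P ≤ Q.thickClosure := by
    refine hmin _ (fun Z hZ ↦ ?_) (fun _ _ e ↦ ObjectProperty.prop_of_iso _ e)
      (fun _ n hX ↦ ObjectProperty.thickClosure_shift hX n) ObjectProperty.thickClosure_ext₂
      (fun _ _ i r h ↦ ObjectProperty.prop_of_retract _ ⟨i, r, h⟩)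
      (fun i ↦ Q.le_thickClosure _ (Or.inl ⟨i⟩))
    exact ObjectProperty.prop_of_retract _ (hZ.retract O)
      (Q.le_thickClosure _ (Or.inr ⟨PUnit.unit⟩))
  have : ObjectProperty.EssentiallySmall.{v} (C := C) P := .of_le hQ
  exact inferInstanceAs (EssentiallySmall.{v} (ObjectProperty.FullSubcategory (C := C) P))
end

section
/- (Brown representability) Let 𝒯 be a compactly generated triangulated category with small coproducts, and let K : 𝒯^op → Ab be a cohomology theory, i.e. an additive functor that sends small coproducts in 𝒯 to products of abelian groups and sends every distinguished triangle to an exact sequence. Then K is representable: there is an object X of 𝒯 and a natural isomorphism K ≅ Hom_𝒯(−, X). -/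
open CategoryTheory Limits Pretriangulated Opposite

universe v u

/-- An object `T` is compact if `Hom(T, -)`, as an additive functor to abelian groups,
preserves small coproducts. -/
def IsCompactObj (C : Type u) [Category.{v} C] [Preadditive C] (T : C) : Prop :=
  ∀ α : Type v, Nonempty
    (PreservesColimitsOfShape (Discrete α) (preadditiveCoyoneda.obj (op T)))

namespace BrownRepresentability

section Coproducts

variable {C : Type u} [Category.{v} C]

/-- A presheaf that turns coproducts into products identifies `K (∐ f)` with `∏ K (f a)`. -/
lemma bijective_map_ι (K : Cᵒᵖ ⥤ AddCommGrpCat.{v}) {α : Type v}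
    [PreservesLimitsOfShape (Discrete α) K] (f : α → C) [HasCoproduct f] :
    Function.Bijective
      (fun (x : K.obj (op (∐ f))) (a : α) => K.map (Sigma.ι f a).op x) := by
  have hc := isLimitOfPreserves (K ⋙ forget _) (Cofan.IsColimit.op (coproductIsCoproduct f))
  let e := Types.isLimitEquivSections hc
  constructor
  · intro x y hxy
    apply e.injective
    apply Subtype.ext
    funext ⟨a⟩
    exact congrFun hxy a
  · intro z
    refine ⟨e.symm ⟨fun a => z a.as, ?_⟩, ?_⟩
    · rintro ⟨a⟩ ⟨b⟩ g
      obtain rfl := Discrete.eq_of_hom g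
      obtain rfl : g = 𝟙 _ := Subsingleton.elim _ _
      simp
    · funext a
      exact Types.isLimitEquivSections_symm_apply hc _ (Discrete.mk a)

variable [Preadditive C]

/-- Any morphism from a compact object to a coproduct is a finite sum of morphisms
that factor through the inclusions. -/
lemma mem_closure_of_isCompactObj {T : C} (hT : IsCompactObj C T) {α : Type v} (f : α → C)
    [HasCoproduct f] (g : T ⟶ ∐ f) :
    g ∈ AddSubgroup.closure {h : T ⟶ ∐ f | ∃ (a : α) (k : T ⟶ f a), h = k ≫ Sigma.ι f a} := by
  set S := AddSubgroup.closure {h : T ⟶ ∐ f | ∃ (a : α) (k : T ⟶ f a), h = k ≫ Sigma.ι f a}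
    with hS
  have := (hT α).some
  have hc := isColimitOfPreserves (preadditiveCoyoneda.obj (op T)) (coproductIsCoproduct f)
  let q : (preadditiveCoyoneda.obj (op T)).obj (∐ f) ⟶ AddCommGrpCat.of ((T ⟶ ∐ f) ⧸ S) :=
    AddCommGrpCat.ofHom (QuotientAddGroup.mk' S)
  have hq : q = 0 := by
    refine hc.hom_ext ?_
    rintro ⟨a⟩
    ext (k : T ⟶ f a)
    exact (QuotientAddGroup.eq_zero_iff (N := S) (k ≫ Sigma.ι f a)).2
      (AddSubgroup.subset_closure ⟨a, k, rfl⟩)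
  exact (QuotientAddGroup.eq_zero_iff (N := S) g).1 (ConcreteCategory.congr_hom hq g)

lemma isCompactObj_shift [HasShift C ℤ] [∀ n : ℤ, (shiftFunctor C n).Additive]
    {T : C} (hT : IsCompactObj C T) (n : ℤ) : IsCompactObj C (T⟦n⟧) := by
  intro α
  have := (hT α).some
  let adj := (shiftEquiv C n).toAdjunction
  have : (shiftEquiv C n).functor.Additive := inferInstanceAs (shiftFunctor C n).Additive
  have : PreservesColimitsOfShape (Discrete α) (shiftFunctor C (-n)) := inferInstance
  let e : shiftFunctor C (-n) ⋙ preadditiveCoyoneda.obj (op T) ≅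
      preadditiveCoyoneda.obj (op (T⟦n⟧)) :=
    NatIso.ofComponents (fun Y => (adj.homAddEquiv T Y).symm.toAddCommGrpIso) (by
      intro Y Z g
      ext (h : T ⟶ Y⟦-n⟧)
      exact adj.homEquiv_naturality_right_symm h g)
  exact ⟨preservesColimitsOfShape_of_natIso e⟩

end Coproducts

section Evaluation

variable {C : Type u} [Category.{v} C] [Preadditive C] (K : Cᵒᵖ ⥤ AddCommGrpCat.{v}) [K.Additive]

/-- The additive map `Hom(Y, X) → K(Y)` determined by an element `k` of `K(X)`. -/
def yonedaEval {X : C} (k : K.obj (op X)) (Y : C) : (Y ⟶ X) →+ K.obj (op Y) where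
  toFun g := K.map g.op k
  map_zero' := by simp
  map_add' g h := by simp

variable {K}

@[simp]
lemma yonedaEval_apply {X : C} (k : K.obj (op X)) {Y : C} (g : Y ⟶ X) :
    yonedaEval K k Y g = K.map g.op k := rfl

lemma yonedaEval_comp {X : C} (k : K.obj (op X)) {Y Z : C} (h : Z ⟶ Y) (g : Y ⟶ X) :
    yonedaEval K k Z (h ≫ g) = K.map h.op (yonedaEval K k Y g) := by
  simp

lemma bijective_yonedaEval_of_retract {X : C} (k : K.obj (op X)) {Y Z : C} (i : Y ⟶ Z)
    (r : Z ⟶ Y) (hir : i ≫ r = 𝟙 Y) (hZ : Function.Bijective (yonedaEval K k Z)) :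
    Function.Bijective (yonedaEval K k Y) := by
  constructor
  · intro g h hgh
    have : r ≫ g = r ≫ h := hZ.1 (by rw [yonedaEval_comp, yonedaEval_comp, hgh])
    rw [← Category.id_comp g, ← Category.id_comp h, ← hir, Category.assoc, this, Category.assoc]
  · intro z
    obtain ⟨g, hg⟩ := hZ.2 (K.map r.op z)
    refine ⟨i ≫ g, ?_⟩
    rw [yonedaEval_comp, hg, ← ConcreteCategory.comp_apply, ← K.map_comp, ← op_comp, hir]
    simp

lemma bijective_yonedaEval_of_iso {X : C} (k : K.obj (op X)) {Y Z : C} (e : Y ≅ Z)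
    (hY : Function.Bijective (yonedaEval K k Y)) : Function.Bijective (yonedaEval K k Z) :=
  bijective_yonedaEval_of_retract k e.inv e.hom e.inv_hom_id hY

lemma bijective_yonedaEval_sigma {X : C} (k : K.obj (op X)) {α : Type v}
    [PreservesLimitsOfShape (Discrete α) K] (f : α → C) [HasCoproduct f]
    (hf : ∀ a, Function.Bijective (yonedaEval K k (f a))) :
    Function.Bijective (yonedaEval K k (∐ f)) := by
  constructor
  · intro g h hgh
    refine Sigma.hom_ext _ _ fun a => (hf a).1 ?_
    rw [yonedaEval_comp, yonedaEval_comp, hgh]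
  · intro z
    choose g hg using fun a => (hf a).2 (K.map (Sigma.ι f a).op z)
    refine ⟨Sigma.desc g, (bijective_map_ι K f).1 (funext fun a => ?_)⟩
    dsimp only
    rw [← yonedaEval_comp, Sigma.ι_desc, hg]

/-- If the maps attached to `k` are all bijective, then `k` represents `K`. -/
lemma nonempty_iso_preadditiveYoneda {X : C} (k : K.obj (op X))
    (hk : ∀ Y, Function.Bijective (yonedaEval K k Y)) :
    Nonempty (K ≅ preadditiveYoneda.obj X) := by
  refine ⟨Iso.symm (NatIso.ofComponents
    (fun Y => (AddEquiv.ofBijective _ (hk Y.unop)).toAddCommGrpIso) ?_)⟩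
  intro Y Z h
  ext (g : Y.unop ⟶ X)
  exact yonedaEval_comp k h.unop g

end Evaluation

section Triangles

variable {C : Type u} [Category.{v} C] [HasZeroObject C] [Preadditive C]
  [HasShift C ℤ] [∀ n : ℤ, (CategoryTheory.shiftFunctor C n).Additive] [Pretriangulated C]
  {K : Cᵒᵖ ⥤ AddCommGrpCat.{v}} [K.Additive]

lemma yoneda_exact (X : C) (T : Triangle C) (hT : T ∈ distTriang C) :
    Function.Exact (fun g : T.obj₃ ⟶ X => T.mor₂ ≫ g) (fun g : T.obj₂ ⟶ X => T.mor₁ ≫ g) := by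
  intro g
  constructor
  · intro hg
    obtain ⟨h, rfl⟩ := Triangle.yoneda_exact₂ T hT g hg
    exact ⟨h, rfl⟩
  · rintro ⟨h, rfl⟩
    simp [comp_distTriang_mor_zero₁₂_assoc _ hT]

/-- The five lemma for the natural transformation between cohomological functors
attached to an element `k` of `K(X)`. -/
lemma bijective_yonedaEval_of_distTriang
    (hexact : ∀ (T : Triangle C), T ∈ (distTriang C) →
      Function.Exact (K.map T.mor₂.op) (K.map T.mor₁.op))
    {X : C} (k : K.obj (op X)) (T : Triangle C) (hT : T ∈ distTriang C)
    (h₁ : Function.Bijective (yonedaEval K k T.obj₁))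
    (h₁' : Function.Bijective (yonedaEval K k (T.obj₁⟦(1 : ℤ)⟧)))
    (h₃ : Function.Bijective (yonedaEval K k T.obj₃))
    (h₃' : Function.Bijective (yonedaEval K k (T.obj₃⟦(-1 : ℤ)⟧))) :
    Function.Bijective (yonedaEval K k T.obj₂) := by
  have hrot := rot_of_distTriang _ hT
  have hinv := inv_rot_of_distTriang _ hT
  refine AddMonoidHom.bijective_of_surjective_of_bijective_of_bijective_of_injective
    (Preadditive.leftComp X T.mor₃) (Preadditive.leftComp X T.mor₂)
    (Preadditive.leftComp X T.mor₁) (Preadditive.leftComp X T.invRotate.mor₁)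
    (K.map T.mor₃.op).hom (K.map T.mor₂.op).hom (K.map T.mor₁.op).hom
    (K.map T.invRotate.mor₁.op).hom
    (yonedaEval K k _) (yonedaEval K k _) (yonedaEval K k _) (yonedaEval K k _)
    (yonedaEval K k _) ?_ ?_ ?_ ?_
    (yoneda_exact X _ hrot) (yoneda_exact X _ hT) (yoneda_exact X _ hinv)
    (hexact _ hrot) (hexact _ hT) (hexact _ hinv) h₁'.2 h₃ h₁ h₃'.1
  all_goals
    ext g
    exact (yonedaEval_comp k _ g).symm

end Triangles

section Telescope

variable {C : Type u} [Category.{v} C] [Preadditive C]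

/-- A morphism from a compact object to a coproduct is determined by its components. -/
lemma eq_zero_of_forall_comp_π_eq_zero {T : C} (hT : IsCompactObj C T) {α : Type v} (f : α → C)
    [HasCoproduct f] [DecidableEq α] (g : T ⟶ ∐ f) (hg : ∀ a, g ≫ Sigma.π f a = 0) : g = 0 := by
  have key : ∃ s : Finset α, ∀ t, s ⊆ t → g = ∑ a ∈ t, (g ≫ Sigma.π f a) ≫ Sigma.ι f a := by
    refine AddSubgroup.closure_induction
      (p := fun (g : T ⟶ ∐ f) _ => ∃ s : Finset α, ∀ t, s ⊆ t →
        g = ∑ a ∈ t, (g ≫ Sigma.π f a) ≫ Sigma.ι f a) ?_ ?_ ?_ ?_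
      (mem_closure_of_isCompactObj hT f g)
    · rintro _ ⟨a, k, rfl⟩
      refine ⟨{a}, fun t ht => ?_⟩
      rw [Finset.sum_eq_single a]
      · simp [Sigma.ι_π_eq_id]
      · intro b _ hb
        simp [Sigma.ι_π_of_ne f hb.symm]
      · intro ha
        exact absurd (ht (Finset.mem_singleton_self a)) ha
    · exact ⟨∅, fun t _ => by simp⟩
    · rintro g h _ _ ⟨s, hs⟩ ⟨t, ht⟩
      refine ⟨s ∪ t, fun w hw => ?_⟩
      simp only [Preadditive.add_comp, Finset.sum_add_distrib]
      rw [← hs w (Finset.union_subset_left hw), ← ht w (Finset.union_subset_right hw)]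
    · rintro g _ ⟨s, hs⟩
      refine ⟨s, fun w hw => ?_⟩
      simp only [Preadditive.neg_comp, Finset.sum_neg_distrib]
      rw [← hs w hw]
  obtain ⟨s, hs⟩ := key
  rw [hs s subset_rfl]
  exact Finset.sum_eq_zero fun a _ => by rw [hg, zero_comp]

variable [HasCoproducts.{v} C] (X : ℕ → C) (s : ∀ n, X n ⟶ X (n + 1))

/-- The coproduct of a sequence of objects. -/
noncomputable abbrev seqCoproduct : C := ∐ fun i : ULift.{v} ℕ => X i.down

/-- The inclusion of a term of a sequence into the coproduct. -/
noncomputable abbrev seqι (n : ℕ) : X n ⟶ seqCoproduct X :=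
  Sigma.ι (fun i : ULift.{v} ℕ => X i.down) ⟨n⟩

variable {X}

/-- The map `1 - shift` whose cone is the homotopy colimit of a sequence. -/
noncomputable def oneSubShift : seqCoproduct X ⟶ seqCoproduct X :=
  𝟙 _ - Limits.Sigma.desc fun i : ULift.{v} ℕ => s i.down ≫ seqι X (i.down + 1)

lemma seqι_oneSubShift (n : ℕ) :
    seqι X n ≫ oneSubShift s = seqι X n - s n ≫ seqι X (n + 1) := by
  simp [oneSubShift]

lemma eq_zero_of_comp_oneSubShift_eq_zero {T : C} (hT : IsCompactObj C T)
    (g : T ⟶ seqCoproduct X) (hg : g ≫ oneSubShift s = 0) : g = 0 := by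
  let f := fun i : ULift.{v} ℕ => X i.down
  have hzero : oneSubShift s ≫ Sigma.π f ⟨0⟩ = Sigma.π f ⟨0⟩ := by
    refine Sigma.hom_ext _ _ ?_
    rintro ⟨n⟩
    have hne : (⟨n + 1⟩ : ULift.{v} ℕ) ≠ ⟨0⟩ := by simp
    have h := seqι_oneSubShift s n =≫ Sigma.π f ⟨0⟩
    simp only [Category.assoc, Preadditive.sub_comp] at h
    rw [h, Sigma.ι_π_of_ne f hne]
    simp
  have hsucc (m : ℕ) : oneSubShift s ≫ Sigma.π f ⟨m + 1⟩ =
      Sigma.π f ⟨m + 1⟩ - Sigma.π f ⟨m⟩ ≫ s m := by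
    refine Sigma.hom_ext _ _ ?_
    rintro ⟨n⟩
    have h := seqι_oneSubShift s n =≫ Sigma.π f ⟨m + 1⟩
    simp only [Category.assoc, Preadditive.sub_comp] at h
    rw [h, Preadditive.comp_sub]
    congr 1
    by_cases hnm : n = m
    · subst hnm
      rw [Sigma.ι_π_eq_id, ← Category.assoc, Sigma.ι_π_eq_id f]
      simp [f]
    · have h₁ : (⟨n + 1⟩ : ULift.{v} ℕ) ≠ ⟨m + 1⟩ := by simpa using hnm
      have h₂ : (⟨n⟩ : ULift.{v} ℕ) ≠ ⟨m⟩ := by simpa using hnm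
      rw [Sigma.ι_π_of_ne f h₁, ← Category.assoc, Sigma.ι_π_of_ne f h₂]
      simp
  refine eq_zero_of_forall_comp_π_eq_zero hT f g ?_
  rintro ⟨m⟩
  induction m with
  | zero => rw [← hzero, reassoc_of% hg, zero_comp]
  | succ m ih =>
    have h := g ≫= hsucc m
    rw [reassoc_of% hg, zero_comp, Preadditive.comp_sub, ← Category.assoc g (Sigma.π f ⟨m⟩), ih,
      zero_comp, sub_zero] at h
    exact h.symm

variable [HasZeroObject C] [HasShift C ℤ] [∀ n : ℤ, (CategoryTheory.shiftFunctor C n).Additive]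
  [Pretriangulated C]
  {K : Cᵒᵖ ⥤ AddCommGrpCat.{v}} [∀ α : Type v, PreservesLimitsOfShape (Discrete α) K]

/-- Existence of a homotopy colimit `L`: compact objects map to `L` through the terms of the
sequence, and compatible elements of a cohomology theory lift to `L`. -/
lemma exists_hocolim [K.Additive]
    (hexact : ∀ (T : Triangle C), T ∈ (distTriang C) →
      Function.Exact (K.map T.mor₂.op) (K.map T.mor₁.op))
    (k : ∀ n, K.obj (op (X n))) (hk : ∀ n, K.map (s n).op (k (n + 1)) = k n) :
    ∃ (L : C) (j : ∀ n, X n ⟶ L) (l : K.obj (op L)),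
      (∀ n, s n ≫ j (n + 1) = j n) ∧ (∀ n, K.map (j n).op l = k n) ∧
      ∀ T, IsCompactObj C T → ∀ g : T ⟶ L, ∃ (n : ℕ) (h : T ⟶ X n), g = h ≫ j n := by
  obtain ⟨L, p, δ, hL⟩ := distinguished_cocone_triangle (oneSubShift s)
  have hzero : oneSubShift s ≫ p = 0 := comp_distTriang_mor_zero₁₂ _ hL
  have hex : Function.Exact (K.map p.op) (K.map (oneSubShift s).op) := hexact _ hL
  have hp (n : ℕ) : s n ≫ seqι X (n + 1) ≫ p = seqι X n ≫ p := by
    have h := seqι X n ≫= hzero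
    rw [← Category.assoc, seqι_oneSubShift, Preadditive.sub_comp, comp_zero, sub_eq_zero] at h
    simpa using h.symm
  obtain ⟨x, hx⟩ := (bijective_map_ι K fun i : ULift.{v} ℕ => X i.down).2 fun i => k i.down
  replace hx (n : ℕ) : K.map (seqι X n).op x = k n := congrFun hx ⟨n⟩
  obtain ⟨l, hl⟩ := (hex x).1 (by
    refine (bijective_map_ι K fun i : ULift.{v} ℕ => X i.down).1 (funext ?_)
    rintro ⟨n⟩
    dsimp only
    rw [← ConcreteCategory.comp_apply, ← K.map_comp, ← op_comp, seqι_oneSubShift]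
    simp [hx, hk])
  refine ⟨L, fun n => seqι X n ≫ p, l, hp, fun n => ?_, fun T hT g => ?_⟩
  · simp [hl, hx]
  · have hδ : g ≫ δ = 0 := by
      let e := (shiftFunctorCompIsoId C (1 : ℤ) (-1) (add_neg_cancel 1)).app (seqCoproduct X)
      have he : (-(δ⟦(-1 : ℤ)⟧' ≫ e.hom)) ≫ oneSubShift s = 0 :=
        comp_distTriang_mor_zero₁₂ _ (inv_rot_of_distTriang _ hL)
      rw [Preadditive.neg_comp, neg_eq_zero] at he
      have h0 : g⟦(-1 : ℤ)⟧' ≫ δ⟦(-1 : ℤ)⟧' ≫ e.hom = 0 :=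
        eq_zero_of_comp_oneSubShift_eq_zero s (isCompactObj_shift hT (-1)) _ (by
          rw [Category.assoc, he, comp_zero])
      apply (shiftFunctor C (-1 : ℤ)).map_injective
      rw [Functor.map_comp, Functor.map_zero, ← cancel_mono e.hom, Category.assoc, h0, zero_comp]
    obtain ⟨g, rfl⟩ := Triangle.coyoneda_exact₃ _ hL g hδ
    dsimp at g ⊢
    have key : ∃ N : ℕ, ∀ n, N ≤ n → ∃ h : T ⟶ X n, g ≫ p = h ≫ seqι X n ≫ p := by
      refine AddSubgroup.closure_induction
        (p := fun (g : T ⟶ seqCoproduct X) _ =>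
          ∃ N : ℕ, ∀ n, N ≤ n → ∃ h : T ⟶ X n, g ≫ p = h ≫ seqι X n ≫ p) ?_ ?_ ?_ ?_
        (mem_closure_of_isCompactObj hT _ g)
      · rintro _ ⟨⟨N⟩, h, rfl⟩
        refine ⟨N, fun n hn => ?_⟩
        induction n, hn using Nat.le_induction with
        | base => exact ⟨h, Category.assoc _ _ _⟩
        | succ n _ ih =>
          obtain ⟨h', hh'⟩ := ih
          exact ⟨h' ≫ s n, by rw [hh', Category.assoc, hp]⟩
      · exact ⟨0, fun n _ => ⟨0, by simp⟩⟩
      · rintro g g' _ _ ⟨N, hN⟩ ⟨N', hN'⟩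
        refine ⟨max N N', fun n hn => ?_⟩
        obtain ⟨h, hh⟩ := hN n (le_of_max_le_left hn)
        obtain ⟨h', hh'⟩ := hN' n (le_of_max_le_right hn)
        exact ⟨h + h', by rw [Preadditive.add_comp, Preadditive.add_comp, hh, hh']⟩
      · rintro g _ ⟨N, hN⟩
        refine ⟨N, fun n hn => ?_⟩
        obtain ⟨h, hh⟩ := hN n hn
        exact ⟨-h, by rw [Preadditive.neg_comp, Preadditive.neg_comp, hh]⟩
    obtain ⟨N, hN⟩ := key
    exact ⟨N, hN N le_rfl⟩

/-- Attaching cones kills the morphisms from the objects `G i` which `k` sends to zero. -/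
lemma exists_attach
    (hexact : ∀ (T : Triangle C), T ∈ (distTriang C) →
      Function.Exact (K.map T.mor₂.op) (K.map T.mor₁.op))
    {ι : Type v} (G : ι → C) (X : C) (k : K.obj (op X)) :
    ∃ (Y : C) (f : X ⟶ Y) (l : K.obj (op Y)), K.map f.op l = k ∧
      ∀ i (g : G i ⟶ X), K.map g.op k = 0 → g ≫ f = 0 := by
  let J := Σ i, {g : G i ⟶ X // K.map g.op k = 0}
  let d : ∐ (fun q : J => G q.1) ⟶ X := Limits.Sigma.desc fun q => q.2.1
  obtain ⟨Y, f, δ, hY⟩ := distinguished_cocone_triangle d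
  have hdf : d ≫ f = 0 := comp_distTriang_mor_zero₁₂ _ hY
  have hex : Function.Exact (K.map f.op) (K.map d.op) := hexact _ hY
  obtain ⟨l, hl⟩ := (hex k).1 (by
    refine (bijective_map_ι K fun q : J => G q.1).1 (funext fun q => ?_)
    dsimp only
    rw [← ConcreteCategory.comp_apply, ← K.map_comp, ← op_comp, Sigma.ι_desc, map_zero]
    exact q.2.2)
  refine ⟨Y, f, l, hl, fun i g hg => ?_⟩
  have h := Sigma.ι (fun q : J => G q.1) ⟨i, g, hg⟩ ≫= hdf
  rw [← Category.assoc, Sigma.ι_desc, comp_zero] at h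
  exact h

/-- There is an element of `K` that is universal with respect to compact objects. -/
lemma exists_bijective_yonedaEval_of_isCompactObj [K.Additive]
    (hsmall : EssentiallySmall.{v} (ObjectProperty.FullSubcategory (IsCompactObj C)))
    (hexact : ∀ (T : Triangle C), T ∈ (distTriang C) →
      Function.Exact (K.map T.mor₂.op) (K.map T.mor₁.op)) :
    ∃ (L : C) (l : K.obj (op L)), ∀ T, IsCompactObj C T →
      Function.Bijective (yonedaEval K l T) := by
  let E := equivSmallModel.{v} (ObjectProperty.FullSubcategory (IsCompactObj C))
  let G (i : SmallModel.{v} (ObjectProperty.FullSubcategory (IsCompactObj C))) : C :=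
    (E.inverse.obj i).obj
  let S := Σ X : C, K.obj (op X)
  choose Y f l hl hf using exists_attach hexact G
  obtain ⟨x₀, hx₀⟩ := (bijective_map_ι K fun q : Σ i, K.obj (op (G i)) => G q.1).2 fun q => q.2
  let A : ℕ → S := fun n => Nat.rec ⟨_, x₀⟩ (fun _ p => ⟨Y p.1 p.2, l p.1 p.2⟩) n
  obtain ⟨L, j, z, hj, hz, hL⟩ := exists_hocolim (X := fun n => (A n).1)
    (fun n => f (A n).1 (A n).2) hexact (fun n => (A n).2) (fun n => hl (A n).1 (A n).2)
  refine ⟨L, z, fun T hT => ?_⟩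
  obtain ⟨i, ⟨e⟩⟩ : ∃ i, Nonempty (G i ≅ T) :=
    ⟨E.functor.obj ⟨T, hT⟩, ⟨(ObjectProperty.ι _).mapIso (E.unitIso.symm.app ⟨T, hT⟩)⟩⟩
  refine bijective_yonedaEval_of_iso z e ⟨?_, fun y => ?_⟩
  · rw [injective_iff_map_eq_zero]
    intro g hg
    obtain ⟨n, h, rfl⟩ := hL (G i) (E.inverse.obj i).property g
    rw [yonedaEval_comp, yonedaEval_apply, hz] at hg
    rw [← hj, ← Category.assoc, hf _ _ i h hg, zero_comp]
  · refine ⟨Sigma.ι (fun q : Σ i, K.obj (op (G i)) => G q.1) ⟨i, y⟩ ≫ j 0, ?_⟩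
    rw [yonedaEval_comp, yonedaEval_apply, hz]
    exact congrFun hx₀ ⟨i, y⟩

end Telescope

end BrownRepresentability

open BrownRepresentability in
/-- Brown representability: if `𝒯` is a compactly generated triangulated category with small
coproducts and `K : 𝒯ᵒᵖ ⥤ Ab` is a cohomology theory (additive, sends coproducts in `𝒯` to
products of abelian groups, and distinguished triangles to exact sequences), then `K` is
representable. -/
theorem stmt17 (C : Type u) [Category.{v} C] [HasZeroObject C] [Preadditive C]
    [HasShift C ℤ] [∀ n : ℤ, (CategoryTheory.shiftFunctor C n).Additive]
    [Pretriangulated C] [HasCoproducts.{v} C]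
    -- the subcategory of compact objects is essentially small ...
    (hsmall : EssentiallySmall.{v} (ObjectProperty.FullSubcategory (IsCompactObj C)))
    -- ... and the only localising subcategory containing all compact objects is `𝒯` itself
    (hgen : ∀ (P : C → Prop),
      (∀ Z : C, IsZero Z → P Z) →
      (∀ ⦃X Y : C⦄, (X ≅ Y) → P X → P Y) →
      (∀ (X : C) (n : ℤ), P X → P (X⟦n⟧)) →
      (∀ (T : Triangle C), T ∈ (distTriang C) → P T.obj₁ → P T.obj₃ → P T.obj₂) →
      (∀ ⦃X Y : C⦄ (i : X ⟶ Y) (r : Y ⟶ X), i ≫ r = 𝟙 X → P Y → P X) →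
      (∀ ⦃α : Type v⦄ (f : α → C), (∀ a, P (f a)) → P (∐ f)) →
      (∀ T : C, IsCompactObj C T → P T) → ∀ X, P X)
    (K : Cᵒᵖ ⥤ AddCommGrpCat.{v}) [K.Additive]
    -- `K` sends small coproducts in `𝒯` to products of abelian groups ...
    [∀ α : Type v, PreservesLimitsOfShape (Discrete α) K]
    -- ... and distinguished triangles to exact sequences
    (hexact : ∀ (T : Triangle C), T ∈ (distTriang C) →
      Function.Exact (K.map T.mor₂.op) (K.map T.mor₁.op)) :
    ∃ X : C, Nonempty (K ≅ preadditiveYoneda.obj X) := by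
  obtain ⟨L, l, hl⟩ := exists_bijective_yonedaEval_of_isCompactObj hsmall hexact
  refine ⟨L, nonempty_iso_preadditiveYoneda l fun Y => ?_⟩
  have key : ∀ n : ℤ, Function.Bijective (yonedaEval K l (Y⟦n⟧)) := by
    refine hgen (fun Y => ∀ n : ℤ, Function.Bijective (yonedaEval K l (Y⟦n⟧)))
      ?_ ?_ ?_ ?_ ?_ ?_ (fun T hT n => hl _ (isCompactObj_shift hT n)) Y
    · intro Z hZ n
      exact bijective_yonedaEval_of_retract l 0 0 (((shiftFunctor C n).map_isZero hZ).eq_of_src _ _)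
        (bijective_yonedaEval_sigma l (PEmpty.elim : PEmpty.{v + 1} → C) nofun)
    · intro X Y e hX n
      exact bijective_yonedaEval_of_iso l ((shiftFunctor C n).mapIso e) (hX n)
    · intro X m hX n
      exact bijective_yonedaEval_of_iso l ((shiftFunctorAdd C m n).app X) (hX (m + n))
    · intro T hT h₁ h₃ n
      have hshift (Z : C) (m : ℤ)
          (hZ : ∀ n : ℤ, Function.Bijective (yonedaEval K l (Z⟦n⟧))) :
          Function.Bijective (yonedaEval K l (Z⟦n⟧⟦m⟧)) :=
        bijective_yonedaEval_of_iso l ((shiftFunctorAdd C n m).app Z) (hZ (n + m))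
      exact bijective_yonedaEval_of_distTriang hexact l _ (Triangle.shift_distinguished T hT n)
        (h₁ n) (hshift _ _ h₁) (h₃ n) (hshift _ _ h₃)
    · intro X Y i r hir hY n
      exact bijective_yonedaEval_of_retract l (i⟦n⟧') (r⟦n⟧')
        (by rw [← Functor.map_comp, hir, CategoryTheory.Functor.map_id]) (hY n)
    · intro α f hf n
      exact bijective_yonedaEval_of_iso l (PreservesCoproduct.iso (shiftFunctor C n) f).symm
        (bijective_yonedaEval_sigma l _ fun a => hf a n)
  exact bijective_yonedaEval_of_iso l ((shiftFunctorZero C ℤ).app Y) (key 0)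
end

section
/- Let 𝒯 be a compactly generated triangulated category with small coproducts, let K : 𝒯 → Ab be a homology theory, and let 𝒰 = ker(K_*) = {X : K(Σ^n X) = 0 for all n ∈ ℤ}. Then for every object X of 𝒯 there exists a distinguished triangle CX → X → LX → Σ CX with CX ∈ 𝒰 and LX ∈ 𝒰^⊥ (i.e. Hom(U, LX) = 0 for all U ∈ 𝒰); moreover CX → X is a terminal object of the comma category 𝒰/X and X → LX is an initial object of the comma category X/𝒰^⊥. (Bousfield localisation with respect to K exists.) -/
open CategoryTheory Limits Pretriangulated Opposite

universe v u

/-- `X` is `K`-acyclic: `K(Σⁿ X) = 0` for all `n : ℤ`; these objects form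
`𝒰 = ker K_*`. -/
def KAcyclic (C : Type u) [Category.{v} C] [HasShift C ℤ]
    (K : C ⥤ AddCommGrpCat.{v}) (X : C) : Prop :=
  ∀ n : ℤ, IsZero (K.obj (X⟦n⟧))


set_option linter.unusedSectionVars false

namespace BousfieldLocalization

section Additive

variable {C : Type u} [Category.{v} C] [Preadditive C]

section Elements

variable (H : C ⥤ AddCommGrpCat.{v})

lemma map_comp_apply {X Y Z : C} (f : X ⟶ Y) (g : Y ⟶ Z) (x : H.obj X) :
    H.map (f ≫ g) x = H.map g (H.map f x) := by
  simp

lemma map_id_apply {X : C} (x : H.obj X) : H.map (𝟙 X) x = x := by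
  simp

variable [H.Additive]

lemma map_zero_apply {X Y : C} (x : H.obj X) : H.map (0 : X ⟶ Y) x = 0 := by
  simp

lemma map_add_apply {X Y : C} (f g : X ⟶ Y) (x : H.obj X) :
    H.map (f + g) x = H.map f x + H.map g x := by
  rw [H.map_add]; rfl

lemma map_sub_apply {X Y : C} (f g : X ⟶ Y) (x : H.obj X) :
    H.map (f - g) x = H.map f x - H.map g x := by
  rw [H.map_sub]; rfl

lemma map_neg_apply {X Y : C} (f : X ⟶ Y) (x : H.obj X) :
    H.map (-f) x = -H.map f x := by
  rw [H.map_neg]; rfl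

end Elements

/-- If `H` preserves coproducts, then `H(∐ X)` is generated by the images of the `H(X i)`. -/
lemma mem_of_map_ι_mem (H : C ⥤ AddCommGrpCat.{v}) {α : Type v} (X : α → C) [HasCoproduct X]
    [PreservesColimitsOfShape (Discrete α) H] (N : AddSubgroup (H.obj (∐ X)))
    (hN : ∀ i (x : H.obj (X i)), H.map (Sigma.ι X i) x ∈ N) (x : H.obj (∐ X)) : x ∈ N := by
  have key : AddCommGrpCat.ofHom (QuotientAddGroup.mk' N) = 0 := by
    refine (isColimitOfPreserves H (colimit.isColimit (Discrete.functor X))).hom_ext ?_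
    rintro ⟨i⟩
    ext x
    simpa using! hN i x
  have := congrArg (fun f => f x) key
  simpa using! this

end Additive

section Shift

variable {C : Type u} [Category.{v} C] [HasZeroObject C] [Preadditive C]
    [HasShift C ℤ] [∀ n : ℤ, (CategoryTheory.shiftFunctor C n).Additive]
    [Pretriangulated C]

/-- Exactness of a homology theory: distinguished triangles are sent to exact sequences. -/
def IsExact (H : C ⥤ AddCommGrpCat.{v}) : Prop :=
  ∀ (T : Triangle C), T ∈ (distTriang C) → Function.Exact (H.map T.mor₁) (H.map T.mor₂)

lemma IsExact.lift {H : C ⥤ AddCommGrpCat.{v}} (hH : IsExact H) {X Y Z : C} {f : X ⟶ Y}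
    {g : Y ⟶ Z} {h : Z ⟶ X⟦(1 : ℤ)⟧} (hT : Triangle.mk f g h ∈ (distTriang C)) (y : H.obj Y)
    (hy : H.map g y = 0) : ∃ x : H.obj X, H.map f x = y :=
  (hH _ hT y).1 hy

lemma IsExact.lift₃ {H : C ⥤ AddCommGrpCat.{v}} (hH : IsExact H) {X Y Z : C} {f : X ⟶ Y}
    {g : Y ⟶ Z} {h : Z ⟶ X⟦(1 : ℤ)⟧} (hT : Triangle.mk f g h ∈ (distTriang C)) (z : H.obj Z)
    (hz : H.map h z = 0) : ∃ y : H.obj Y, H.map g y = z :=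
  (hH _ (rot_of_distTriang _ hT) z).1 hz

lemma isExact_shift (H : C ⥤ AddCommGrpCat.{v}) [H.Additive] (hH : IsExact H) (n : ℤ) :
    IsExact (shiftFunctor C n ⋙ H) := by
  intro T hT
  have h : Function.Exact (H.map (n.negOnePow • T.mor₁⟦n⟧')) (H.map (n.negOnePow • T.mor₂⟦n⟧')) :=
    hH _ (T.shift_distinguished hT n)
  change Function.Exact (H.map (T.mor₁⟦n⟧')) (H.map (T.mor₂⟦n⟧'))
  rcases Int.units_eq_one_or n.negOnePow with hn | hn
  · simpa only [hn, one_smul] using h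
  · intro x
    have hx := h x
    simp only [hn, Units.neg_smul, one_smul, map_neg_apply, neg_eq_zero] at hx
    rw [hx]
    constructor
    · rintro ⟨y, rfl⟩
      exact ⟨-y, by simp⟩
    · rintro ⟨y, rfl⟩
      exact ⟨-y, by simp⟩

lemma isExact_coyoneda (A : C) : IsExact (preadditiveCoyoneda.obj (op A)) := by
  intro T hT x
  constructor
  · intro hx
    obtain ⟨y, hy⟩ := T.coyoneda_exact₂ hT x hx
    exact ⟨y, hy.symm⟩
  · rintro ⟨y, rfl⟩
    rw [← map_comp_apply, comp_distTriang_mor_zero₁₂ _ hT, map_zero_apply]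

lemma isCompactObj_shift {X : C} (hX : IsCompactObj C X) (n : ℤ) :
    IsCompactObj C (X⟦n⟧) := fun α => by
  obtain ⟨h⟩ := hX α
  have : (shiftEquiv C n).functor.Additive := inferInstanceAs (shiftFunctor C n).Additive
  have e : shiftFunctor C (-n) ⋙ preadditiveCoyoneda.obj (op X) ≅
      preadditiveCoyoneda.obj (op (X⟦n⟧)) :=
    NatIso.ofComponents (fun Y => (AddEquiv.toAddCommGrpIso
      ((shiftEquiv C n).toAdjunction.homAddEquiv X Y)).symm) (fun {Y Z} f => by
        ext g
        exact ((shiftEquiv C n).toAdjunction.homEquiv_naturality_right_symm g f))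
  exact ⟨preservesColimitsOfShape_of_natIso e⟩

end Shift

section Closure

open scoped ZeroObject

variable {C : Type u} [Category.{v} C] [HasZeroObject C] [Preadditive C]
    [HasShift C ℤ] [∀ n : ℤ, (CategoryTheory.shiftFunctor C n).Additive]
    [Pretriangulated C]

section Unbundled

variable {X Y Z : C} {f : X ⟶ Y} {g : Y ⟶ Z} {h : Z ⟶ X⟦(1 : ℤ)⟧}
  (hT : Triangle.mk f g h ∈ (distTriang C)) {A : C}

include hT

lemma dist_comp : f ≫ g = 0 :=
  comp_distTriang_mor_zero₁₂ _ hT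

lemma dist_comp₂₃ : g ≫ h = 0 :=
  comp_distTriang_mor_zero₂₃ _ hT

lemma dist_desc (k : Y ⟶ A) (hk : f ≫ k = 0) : ∃ l : Z ⟶ A, g ≫ l = k :=
  let ⟨l, hl⟩ := Triangle.yoneda_exact₂ _ hT k hk
  ⟨l, hl.symm⟩

lemma dist_desc₃ (k : Z ⟶ A) (hk : g ≫ k = 0) : ∃ l : X⟦(1 : ℤ)⟧ ⟶ A, h ≫ l = k :=
  let ⟨l, hl⟩ := Triangle.yoneda_exact₃ _ hT k hk
  ⟨l, hl.symm⟩

lemma dist_lift (k : A ⟶ Y) (hk : k ≫ g = 0) : ∃ l : A ⟶ X, l ≫ f = k :=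
  let ⟨l, hl⟩ := Triangle.coyoneda_exact₂ _ hT k hk
  ⟨l, hl.symm⟩

lemma dist_lift₃ (k : A ⟶ Z) (hk : k ≫ h = 0) : ∃ l : A ⟶ Y, l ≫ g = k :=
  let ⟨l, hl⟩ := Triangle.coyoneda_exact₃ _ hT k hk
  ⟨l, hl.symm⟩

lemma dist_lift₁ (k : A ⟶ X⟦(1 : ℤ)⟧) (hk : k ≫ f⟦(1 : ℤ)⟧' = 0) :
    ∃ l : A ⟶ Z, l ≫ h = k :=
  let ⟨l, hl⟩ := Triangle.coyoneda_exact₁ _ hT k hk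
  ⟨l, hl.symm⟩

end Unbundled

/-- The isomorphism between the zeroth shift of an object and the object. -/
noncomputable def shiftZeroIso (X : C) : X⟦(0 : ℤ)⟧ ≅ X :=
  (shiftFunctorZero C ℤ).app X

/-- A class of objects closed under isomorphisms, shifts and cones. -/
structure TriClosed (Q : C → Prop) : Prop where
  iso : ∀ ⦃X Y : C⦄, (X ≅ Y) → Q X → Q Y
  shift : ∀ ⦃X : C⦄ (n : ℤ), Q X → Q (X⟦n⟧)
  cone : ∀ (T : Triangle C), T ∈ (distTriang C) → Q T.obj₁ → Q T.obj₂ → Q T.obj₃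

namespace TriClosed

variable {Q : C → Prop} (hQ : TriClosed Q)

include hQ

lemma fiber (T : Triangle C) (hT : T ∈ (distTriang C)) (h₂ : Q T.obj₂) (h₃ : Q T.obj₃) :
    Q T.obj₁ :=
  hQ.iso ((shiftEquiv C (1 : ℤ)).unitIso.app T.obj₁).symm
    (hQ.shift (-1) (hQ.cone _ (rot_of_distTriang _ hT) h₂ h₃))

lemma ext (T : Triangle C) (hT : T ∈ (distTriang C)) (h₁ : Q T.obj₁) (h₃ : Q T.obj₃) :
    Q T.obj₂ :=
  hQ.cone _ (inv_rot_of_distTriang _ hT) (hQ.shift (-1) h₃) h₁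

lemma biprod {X Y : C} (hX : Q X) (hY : Q Y) : Q (X ⊞ Y) :=
  hQ.ext _ (binaryBiproductTriangle_distinguished X Y) hX hY

lemma zero {X : C} (hX : Q X) : Q (0 : C) :=
  hQ.cone _ (contractible_distinguished X) hX hX

lemma and {Q' : C → Prop} (hQ' : TriClosed Q') : TriClosed (fun X => Q X ∧ Q' X) where
  iso _ _ e h := ⟨hQ.iso e h.1, hQ'.iso e h.2⟩
  shift _ n h := ⟨hQ.shift n h.1, hQ'.shift n h.2⟩
  cone T hT h₁ h₂ := ⟨hQ.cone T hT h₁.1 h₂.1, hQ'.cone T hT h₁.2 h₂.2⟩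

end TriClosed

/-- A criterion for the class of objects all of whose shifts satisfy `R` to be closed under cones. -/
lemma triClosed_forall_shift {R : C → Prop} (iso : ∀ ⦃X Y : C⦄, (X ≅ Y) → R X → R Y)
    (cone : ∀ (T : Triangle C), T ∈ (distTriang C) → (∀ n : ℤ, R (T.obj₁⟦n⟧)) →
      R T.obj₂ → R T.obj₃) :
    TriClosed (fun X : C => ∀ n : ℤ, R (X⟦n⟧)) where
  iso _ _ e h n := iso ((shiftFunctor C n).mapIso e) (h n)
  shift X n h m := iso ((shiftFunctorAdd C n m).app X) (h _)
  cone T hT h₁ h₂ n := cone _ (T.shift_distinguished hT n)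
    (fun m => iso ((shiftFunctorAdd C n m).app _) (h₁ _)) (h₂ n)

variable [HasCoproducts.{v} C]

/-- The coproduct of the fibres of a family of morphisms maps onto everything in the coproduct of
the sources which is killed in the coproduct of the targets. -/
lemma exists_lift_sigma_map {α : Type v} {F V U : α → C} {i : ∀ k, F k ⟶ V k}
    {p : ∀ k, V k ⟶ U k} {d : ∀ k, U k ⟶ (F k)⟦(1 : ℤ)⟧}
    (hT : ∀ k, Triangle.mk (i k) (p k) (d k) ∈ (distTriang C))
    {A : C} (g : A ⟶ ∐ V) (hg : g ≫ Limits.Sigma.map p = 0) :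
    ∃ h : A ⟶ ∐ F, h ≫ Limits.Sigma.map i = g := by
  obtain ⟨D, c, d', hD⟩ := distinguished_cocone_triangle (Limits.Sigma.map i)
  have key : ∀ k, ∃ w : U k ⟶ D, p k ≫ w = Sigma.ι V k ≫ c := fun k => by
    obtain ⟨w, hw, -⟩ := complete_distinguished_triangle_morphism _ _ (hT k) hD
      (Sigma.ι F k) (Sigma.ι V k) (Limits.Sigma.ι_map i k).symm
    exact ⟨w, hw⟩
  choose w hw using key
  have hc : c = Limits.Sigma.map p ≫ Sigma.desc w := by
    ext k
    simp [hw]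
  exact dist_lift hD g (by rw [hc, ← Category.assoc, hg, zero_comp])

open Classical in
/-- The idempotent endomorphism of a coproduct projecting onto finitely many summands. -/
noncomputable def trunc {α : Type v} (X : α → C) (F : Finset α) : ∐ X ⟶ ∐ X :=
  ∑ i ∈ F, Sigma.π X i ≫ Sigma.ι X i

open Classical in
lemma ι_trunc {α : Type v} (X : α → C) (F : Finset α) (j : α) :
    Sigma.ι X j ≫ trunc X F = if j ∈ F then Sigma.ι X j else 0 := by
  unfold trunc
  rw [Preadditive.comp_sum]
  split_ifs with hj
  · rw [Finset.sum_eq_single_of_mem j hj]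
    · simp
    · intro i _ hi
      rw [Sigma.ι_π_of_ne_assoc _ hi.symm, zero_comp]
  · refine Finset.sum_eq_zero fun i hi => ?_
    rw [Sigma.ι_π_of_ne_assoc _ (by rintro rfl; exact hj hi), zero_comp]

open Classical in
lemma one_sub_trunc_comp {α : Type v} (X : α → C) (F G : Finset α) :
    (𝟙 _ - trunc X F) ≫ (𝟙 _ - trunc X G) = 𝟙 _ - trunc X (F ∪ G) := by
  ext j
  simp only [Preadditive.comp_sub, Preadditive.sub_comp, ← Category.assoc, Category.comp_id,
    Category.id_comp, ι_trunc, Finset.mem_union]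
  by_cases h₁ : j ∈ F <;> by_cases h₂ : j ∈ G <;> simp [h₁, h₂, ι_trunc]

/-- Every morphism from `A` to a coproduct factors through a finite subcoproduct. -/
def FactorsFinitely (A : C) : Prop :=
  ∀ ⦃α : Type v⦄ (X : α → C) (f : A ⟶ ∐ X), ∃ F : Finset α, f ≫ (𝟙 _ - trunc X F) = 0

lemma factorsFinitely_of_isCompactObj {A : C} (hA : IsCompactObj C A) : FactorsFinitely A := by
  classical
  intro α X f
  obtain ⟨_⟩ := hA α
  let N : AddSubgroup (A ⟶ ∐ X) :=
    { carrier := {f | ∃ F : Finset α, f ≫ (𝟙 _ - trunc X F) = 0}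
      zero_mem' := ⟨∅, zero_comp⟩
      neg_mem' := by
        rintro f ⟨F, hF⟩
        exact ⟨F, by rw [Preadditive.neg_comp, hF, neg_zero]⟩
      add_mem' := by
        rintro f g ⟨F, hF⟩ ⟨G, hG⟩
        refine ⟨F ∪ G, ?_⟩
        rw [Preadditive.add_comp, ← one_sub_trunc_comp, reassoc_of% hF, one_sub_trunc_comp,
          Finset.union_comm, ← one_sub_trunc_comp, reassoc_of% hG]
        simp }
  refine mem_of_map_ι_mem (preadditiveCoyoneda.obj (op A)) X N (fun i x => ?_) f
  refine ⟨{i}, ?_⟩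
  have : Sigma.ι X i ≫ (𝟙 (∐ X) - trunc X {i}) = 0 := by
    simp [Preadditive.comp_sub, ι_trunc]
  exact (Category.assoc (show A ⟶ X i from x) _ _).trans (by rw [this, comp_zero])

lemma triClosed_factorsFinitely :
    TriClosed (fun X : C => ∀ n : ℤ, FactorsFinitely (X⟦n⟧)) := by
  classical
  refine triClosed_forall_shift (fun X Y e hX α Z f => ?_) (fun T hT h₁ h₂ α Z f => ?_)
  · obtain ⟨F, hF⟩ := hX Z (e.hom ≫ f)
    exact ⟨F, by rwa [Category.assoc, ← cancel_epi e.inv, e.inv_hom_id_assoc, comp_zero] at hF⟩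
  · obtain ⟨F, hF⟩ := h₂ Z (T.mor₂ ≫ f)
    obtain ⟨g, hg⟩ := T.yoneda_exact₃ hT (f ≫ (𝟙 _ - trunc Z F)) (by simpa using hF)
    obtain ⟨G, hG⟩ := h₁ 1 Z g
    refine ⟨F ∪ G, ?_⟩
    rw [← one_sub_trunc_comp, ← Category.assoc, hg, Category.assoc, hG, comp_zero]

end Closure

section Generated

variable {C : Type u} [Category.{v} C] [HasZeroObject C] [Preadditive C]
    [HasShift C ℤ] [∀ n : ℤ, (CategoryTheory.shiftFunctor C n).Additive]
    [Pretriangulated C] [HasCoproducts.{v} C]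

/-- The objects built from compact ones by cones and coproducts indexed by `J`. -/
inductive Gen (J : Type v) : C → Prop
  | compact {X : C} (hX : IsCompactObj C X) : Gen J X
  | iso {X Y : C} (e : X ≅ Y) (hX : Gen J X) : Gen J Y
  | coprod (X : J → C) (hX : ∀ j, Gen J (X j)) : Gen J (∐ X)
  | cone (T : Triangle C) (hT : T ∈ (distTriang C)) (h₁ : Gen J T.obj₁) (h₂ : Gen J T.obj₂) :
      Gen J T.obj₃

variable {J : Type v}

/-- An induction principle for `Gen J` with respect to a property of all shifts of an object. -/
lemma Gen.induction_shift {R : C → Prop} (hR : TriClosed (fun X : C => ∀ n : ℤ, R (X⟦n⟧)))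
    (iso : ∀ ⦃X Y : C⦄, (X ≅ Y) → R X → R Y)
    (compact : ∀ ⦃X : C⦄, IsCompactObj C X → R X)
    (coprod : ∀ X : J → C, (∀ j, R (X j)) → R (∐ X)) {X : C} (hX : Gen J X) :
    ∀ n : ℤ, R (X⟦n⟧) := by
  induction hX with
  | compact hX => exact fun n => compact (isCompactObj_shift hX n)
  | iso e _ ih => exact hR.iso e ih
  | coprod X _ ih =>
    exact fun n => iso (PreservesCoproduct.iso (shiftFunctor C n) X).symm
      (coprod _ fun j => ih j n)
  | cone T hT _ _ ih₁ ih₂ => exact hR.cone T hT ih₁ ih₂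

lemma Gen.induction {R : C → Prop} (hR : TriClosed (fun X : C => ∀ n : ℤ, R (X⟦n⟧)))
    (iso : ∀ ⦃X Y : C⦄, (X ≅ Y) → R X → R Y)
    (compact : ∀ ⦃X : C⦄, IsCompactObj C X → R X)
    (coprod : ∀ X : J → C, (∀ j, R (X j)) → R (∐ X)) {X : C} (hX : Gen J X) : R X :=
  iso (shiftZeroIso X) (Gen.induction_shift hR iso compact coprod hX 0)

lemma triClosed_gen : TriClosed (Gen J : C → Prop) where
  iso _ _ := Gen.iso
  shift _ n hX := Gen.induction_shift
    (triClosed_forall_shift (fun _ _ => Gen.iso) (fun T hT h₁ h₂ => Gen.cone T hT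
      (Gen.iso (shiftZeroIso _) (h₁ 0)) h₂))
    (fun _ _ => Gen.iso) (fun _ => Gen.compact) Gen.coprod hX n
  cone := Gen.cone

/-- Every morphism from `A` to a coproduct factors through a coproduct of morphisms whose sources
are in `Gen J`. -/
def FactorsThroughGen (J : Type v) (A : C) : Prop :=
  ∀ ⦃α : Type v⦄ (X : α → C) (f : A ⟶ ∐ X), ∃ (Y : α → C) (a : ∀ i, Y i ⟶ X i) (b : A ⟶ ∐ Y),
    (∀ i, Gen J (Y i)) ∧ b ≫ Limits.Sigma.map a = f

lemma FactorsThroughGen.of_iso {X Y : C} (e : X ≅ Y) (hX : FactorsThroughGen J X) :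
    FactorsThroughGen J Y := by
  intro α Z f
  obtain ⟨W, a, b, hW, h⟩ := hX Z (e.hom ≫ f)
  exact ⟨W, a, e.inv ≫ b, hW, by simp [h]⟩

lemma factorsThroughGen_of_isCompactObj {A : C} (hA : IsCompactObj C A) :
    FactorsThroughGen J A := by
  classical
  intro α X f
  obtain ⟨F, hF⟩ := factorsFinitely_of_isCompactObj hA X f
  refine ⟨fun _ => A, fun i => f ≫ Sigma.π X i, ∑ i ∈ F, Sigma.ι (fun _ => A) i,
    fun _ => Gen.compact hA, ?_⟩
  rw [Preadditive.comp_sub, Category.comp_id, sub_eq_zero] at hF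
  conv_rhs => rw [hF]
  simp [trunc, Preadditive.comp_sum, Preadditive.sum_comp]

lemma triClosed_factorsThroughGen :
    TriClosed (fun X : C => ∀ n : ℤ, FactorsThroughGen J (X⟦n⟧)) := by
  refine triClosed_forall_shift (fun X Y e hX => hX.of_iso e) (fun T hT h₁ h₂ α X f => ?_)
  obtain ⟨Y, a, b, hY, hb⟩ := h₂ X (T.mor₂ ≫ f)
  choose F i d hF using fun k => distinguished_cocone_triangle₁ (a k)
  obtain ⟨g, hg⟩ := exists_lift_sigma_map hF (T.mor₁ ≫ b) (by
    rw [Category.assoc, hb, ← Category.assoc, comp_distTriang_mor_zero₁₂ _ hT, zero_comp])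
  obtain ⟨Z, p, q, hZ, hq⟩ := ((h₁ 0).of_iso (shiftZeroIso _)) F g
  choose W r e hW using fun k => distinguished_cocone_triangle (p k ≫ i k)
  have hpir : Limits.Sigma.map p ≫ Limits.Sigma.map i ≫ Limits.Sigma.map r = 0 := by
    ext k
    have := dist_comp (hW k)
    rw [Category.assoc] at this
    simp [reassoc_of% this]
  obtain ⟨c, hc⟩ := T.yoneda_exact₂ hT (b ≫ Limits.Sigma.map r) (by
    rw [← reassoc_of% hg, ← hq, Category.assoc, hpir, comp_zero])
  choose s hs using fun k => dist_desc (hW k) (a k) (by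
    rw [Category.assoc, dist_comp (hF k), comp_zero])
  obtain ⟨l, hl⟩ := T.yoneda_exact₃ hT (f - c ≫ Limits.Sigma.map s) (by
    have : Limits.Sigma.map r ≫ Limits.Sigma.map s = Limits.Sigma.map a := by
      ext k
      simp [reassoc_of% (hs k)]
    rw [Preadditive.comp_sub, ← reassoc_of% hc, this, hb, sub_self])
  obtain ⟨V, m, n, hV, hn⟩ := h₁ 1 X l
  refine ⟨fun k => W k ⊞ V k, fun k => biprod.desc (s k) (m k),
    c ≫ Limits.Sigma.map (fun k => biprod.inl) +
      T.mor₃ ≫ n ≫ Limits.Sigma.map (fun k => biprod.inr),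
    fun k => triClosed_gen.biprod (Gen.cone _ (hW k) (hZ k) (hY k)) (hV k), ?_⟩
  have h₃ : Limits.Sigma.map (fun k => (biprod.inl : W k ⟶ W k ⊞ V k)) ≫
      Limits.Sigma.map (fun k => biprod.desc (s k) (m k)) = Limits.Sigma.map s := by
    ext k
    simp
  have h₄ : Limits.Sigma.map (fun k => (biprod.inr : V k ⟶ W k ⊞ V k)) ≫
      Limits.Sigma.map (fun k => biprod.desc (s k) (m k)) = Limits.Sigma.map m := by
    ext k
    simp
  rw [Preadditive.add_comp, Category.assoc, Category.assoc, Category.assoc, h₃, h₄, hn, ← hl]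
  abel

lemma Gen.factorsThroughGen {X : C} (hX : Gen J X) : FactorsThroughGen J X := by
  refine Gen.induction triClosed_factorsThroughGen (fun X Y e hX => hX.of_iso e)
    (fun X => factorsThroughGen_of_isCompactObj) (fun X hX α Z f => ?_) hX
  choose Y a b hY hb using fun j => hX j Z (Sigma.ι X j ≫ f)
  refine ⟨fun i => ∐ fun j => Y j i, fun i => Sigma.desc fun j => a j i,
    Sigma.desc fun j => b j ≫ Limits.Sigma.map fun i => Sigma.ι (fun j => Y j i) j,
    fun i => Gen.coprod _ fun j => hY j i, ?_⟩
  ext j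
  rw [← hb j, Sigma.ι_desc_assoc, Category.assoc]
  congr 1
  ext i
  simp

end Generated

section CompactApproximation

variable {C : Type u} [Category.{v} C] [HasZeroObject C] [Preadditive C]
    [HasShift C ℤ] [∀ n : ℤ, (CategoryTheory.shiftFunctor C n).Additive]
    [Pretriangulated C] [HasCoproducts.{v} C]

lemma isCompactObj_of_isZero {Z : C} (hZ : IsZero Z) : IsCompactObj C Z := fun α => by
  have h₀ : ∀ Y : C, IsZero ((preadditiveCoyoneda.obj (op Z)).obj Y) := fun Y => by
    refine @AddCommGrpCat.isZero_of_subsingleton _ ⟨fun f g => ?_⟩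
    exact hZ.eq_of_src (show Z ⟶ Y from f) g
  refine ⟨⟨fun {D} => ⟨fun {c} _ => ⟨⟨fun s => 0, fun s j => ?_, fun s m _ => ?_⟩⟩⟩⟩⟩
  · exact (h₀ _).eq_of_src _ _
  · exact (h₀ _).eq_of_src _ _

variable (C) in
/-- The smallest thick triangulated subcategory with small coproducts containing the compact
objects is everything. -/
def CompactsGenerate : Prop :=
  ∀ (P : C → Prop),
    (∀ Z : C, IsZero Z → P Z) →
    (∀ ⦃X Y : C⦄, (X ≅ Y) → P X → P Y) →
    (∀ (X : C) (n : ℤ), P X → P (X⟦n⟧)) →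
    (∀ (T : Triangle C), T ∈ (distTriang C) → P T.obj₁ → P T.obj₃ → P T.obj₂) →
    (∀ ⦃X Y : C⦄ (i : X ⟶ Y) (r : Y ⟶ X), i ≫ r = 𝟙 X → P Y → P X) →
    (∀ ⦃α : Type v⦄ (f : α → C), (∀ a, P (f a)) → P (∐ f)) →
    (∀ T : C, IsCompactObj C T → P T) → ∀ X, P X

variable (H : C ⥤ AddCommGrpCat.{v}) (Q : C → Prop)

/-- Every element of `H(X)` comes from an object in `Q`. -/
def IsHit (X : C) : Prop :=
  ∀ x : H.obj X, ∃ (A : C) (_ : Q A) (f : A ⟶ X) (z : H.obj A), H.map f z = x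

/-- The morphism `f` factors through an object in `Q` in which `x` vanishes. -/
def DiesAlong {A X : C} (x : H.obj A) (f : A ⟶ X) : Prop :=
  ∃ (B : C) (_ : Q B) (a : A ⟶ B) (b : B ⟶ X), a ≫ b = f ∧ H.map a x = 0

/-- Elements of `H(A)` with `A` in `Q` which vanish in `H(X)` already vanish in an object
of `Q` over `X`. -/
def IsDetected (X : C) : Prop :=
  ∀ (A : C), Q A → ∀ (f : A ⟶ X) (x : H.obj A), H.map f x = 0 → DiesAlong H Q x f

variable {H Q}

lemma DiesAlong.comp {A X Y : C} {x : H.obj A} {f : A ⟶ X} (h : DiesAlong H Q x f) (g : X ⟶ Y) :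
    DiesAlong H Q x (f ≫ g) := by
  obtain ⟨B, hB, a, b, rfl, hx⟩ := h
  exact ⟨B, hB, a, b ≫ g, by simp, hx⟩

lemma IsHit.of_retract {X Y : C} (i : X ⟶ Y) (r : Y ⟶ X) (h : i ≫ r = 𝟙 X) (hY : IsHit H Q Y) :
    IsHit H Q X := fun x => by
  obtain ⟨A, hA, f, z, hz⟩ := hY (H.map i x)
  exact ⟨A, hA, f ≫ r, z, by rw [map_comp_apply, hz, ← map_comp_apply, h, map_id_apply]⟩

lemma IsDetected.of_retract {X Y : C} (i : X ⟶ Y) (r : Y ⟶ X) (h : i ≫ r = 𝟙 X)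
    (hY : IsDetected H Q Y) : IsDetected H Q X := fun A hA f x hx => by
  have := (hY A hA (f ≫ i) x (by rw [map_comp_apply, hx, map_zero])).comp r
  rwa [Category.assoc, h, Category.comp_id] at this

lemma isHit_of_mem {X : C} (hX : Q X) : IsHit H Q X :=
  fun x => ⟨X, hX, 𝟙 X, x, map_id_apply _ _⟩

lemma isDetected_of_mem {X : C} (hX : Q X) : IsDetected H Q X :=
  fun _ _ f _ hx => ⟨X, hX, f, 𝟙 X, Category.comp_id _, hx⟩

variable [H.Additive]

section

variable (hQ : TriClosed Q)

include hQ

open scoped ZeroObject in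
lemma diesAlong_zero {A X : C} (hA : Q A) (x : H.obj A) : DiesAlong H Q x (0 : A ⟶ X) :=
  ⟨0, hQ.zero hA, 0, 0, by simp, by simp⟩

lemma DiesAlong.add {A X : C} {x : H.obj A} {f g : A ⟶ X} (hf : DiesAlong H Q x f)
    (hg : DiesAlong H Q x g) : DiesAlong H Q x (f + g) := by
  obtain ⟨B, hB, a, b, rfl, hx⟩ := hf
  obtain ⟨B', hB', a', b', rfl, hx'⟩ := hg
  refine ⟨B ⊞ B', hQ.biprod hB hB', a ≫ biprod.inl + a' ≫ biprod.inr, biprod.desc b b', by simp, ?_⟩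
  rw [map_add_apply, map_comp_apply, map_comp_apply, hx, hx']
  simp

lemma exists_hit_add {X : C} {x y : H.obj X}
    (hx : ∃ (A : C) (_ : Q A) (f : A ⟶ X) (z : H.obj A), H.map f z = x)
    (hy : ∃ (A : C) (_ : Q A) (f : A ⟶ X) (z : H.obj A), H.map f z = y) :
    ∃ (A : C) (_ : Q A) (f : A ⟶ X) (z : H.obj A), H.map f z = x + y := by
  obtain ⟨A, hA, f, z, rfl⟩ := hx
  obtain ⟨B, hB, g, w, rfl⟩ := hy
  refine ⟨A ⊞ B, hQ.biprod hA hB, biprod.desc f g,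
    H.map biprod.inl z + H.map biprod.inr w, ?_⟩
  rw [map_add, ← map_comp_apply, ← map_comp_apply, biprod.inl_desc, biprod.inr_desc]

lemma IsHit.ext (hH : IsExact H) {X Y Z : C} {f : X ⟶ Y} {g : Y ⟶ Z} {h : Z ⟶ X⟦(1 : ℤ)⟧}
    (hT : Triangle.mk f g h ∈ (distTriang C)) (hX : IsHit H Q X)
    (hX' : IsDetected H Q (X⟦(1 : ℤ)⟧)) (hZ : IsHit H Q Z) : IsHit H Q Y := fun y => by
  obtain ⟨A, hA, p, z, hz⟩ := hZ (H.map g y)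
  obtain ⟨B, hB, a, b, hab, hza⟩ := hX' A hA (p ≫ h) z (by
    rw [map_comp_apply, hz, ← map_comp_apply, dist_comp₂₃ hT, map_zero_apply])
  obtain ⟨F, i, d, hF⟩ := distinguished_cocone_triangle₁ a
  obtain ⟨z', hz'⟩ := hH.lift hF z hza
  obtain ⟨q, hq⟩ := dist_lift₃ hT (i ≫ p) (by
    rw [Category.assoc, ← hab, ← Category.assoc, dist_comp hF, zero_comp])
  obtain ⟨w, hw⟩ := hH.lift hT (y - H.map q z') (by
    rw [map_sub, ← map_comp_apply, hq, map_comp_apply, hz', hz, sub_self])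
  obtain ⟨A', hA', p', z'', rfl⟩ := hX w
  have := exists_hit_add hQ ⟨F, hQ.fiber _ hF hA hB, q, z', rfl⟩
    ⟨A', hA', p' ≫ f, z'', (map_comp_apply H p' f z'').trans hw⟩
  rwa [add_sub_cancel] at this

lemma IsDetected.ext (hH : IsExact H) {W X Y Z : C} {k : W ⟶ X} {m : X ⟶ Y} {l : Y ⟶ W⟦(1 : ℤ)⟧}
    {g : Y ⟶ Z} {h : Z ⟶ X⟦(1 : ℤ)⟧}
    (hT : Triangle.mk k m l ∈ (distTriang C)) (hT' : Triangle.mk m g h ∈ (distTriang C))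
    (hW : IsHit H Q W) (hX : IsDetected H Q X) (hZ : IsDetected H Q Z) : IsDetected H Q Y := by
  intro A hA f x hx
  obtain ⟨B, hB, a, b, hab, hxa⟩ := hZ A hA (f ≫ g) x (by rw [map_comp_apply, hx, map_zero])
  obtain ⟨F, i, d, hF⟩ := distinguished_cocone_triangle₁ a
  obtain ⟨x', hx'⟩ := hH.lift hF x hxa
  obtain ⟨t, ht⟩ := dist_lift hT' (i ≫ f) (by
    rw [Category.assoc, ← hab, ← Category.assoc, dist_comp hF, zero_comp])
  obtain ⟨w, hw⟩ := hH.lift hT (H.map t x') (by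
    rw [← map_comp_apply, ht, map_comp_apply, hx', hx])
  obtain ⟨A₀, hA₀, s, z, rfl⟩ := hW w
  have hQF : Q F := hQ.fiber _ hF hA hB
  obtain ⟨D, hD, u, v, huv, hu⟩ := hX (F ⊞ A₀) (hQ.biprod hQF hA₀) (biprod.desc t (s ≫ k))
    (H.map biprod.inl x' - H.map biprod.inr z) (by
      rw [map_sub, ← map_comp_apply, ← map_comp_apply, biprod.inl_desc, biprod.inr_desc,
        map_comp_apply, hw, sub_self])
  obtain ⟨E, r, e, hE⟩ := distinguished_cocone_triangle
    (biprod.desc (biprod.lift i (-(biprod.inl ≫ u))) (biprod.lift 0 (biprod.inr ≫ u)) :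
      F ⊞ A₀ ⟶ A ⊞ D)
  have huv₁ : biprod.inl ≫ u ≫ v = t := by rw [huv, biprod.inl_desc]
  have huv₂ : biprod.inr ≫ u ≫ v = s ≫ k := by rw [huv, biprod.inr_desc]
  obtain ⟨c, hc⟩ := dist_desc hE (biprod.desc f (v ≫ m)) (by
    ext
    · simp [reassoc_of% huv₁, ht]
    · simp [reassoc_of% huv₂, dist_comp hT])
  have h₁ : i ≫ biprod.inl ≫ r = biprod.inl ≫ u ≫ biprod.inr ≫ r := by
    have := biprod.inl ≫= dist_comp hE
    rw [biprod.inl_desc_assoc, comp_zero, biprod.lift_eq] at this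
    simpa [sub_eq_zero, ← sub_eq_add_neg] using this
  have h₂ : biprod.inr ≫ u ≫ biprod.inr ≫ r = 0 := by
    have := biprod.inr ≫= dist_comp hE
    rw [biprod.inr_desc_assoc, comp_zero, biprod.lift_eq] at this
    simpa using this
  refine ⟨E, hQ.cone _ hE (hQ.biprod hQF hA₀) (hQ.biprod hA hD), biprod.inl ≫ r, c, ?_, ?_⟩
  · rw [Category.assoc, hc, biprod.inl_desc]
  · rw [map_sub, sub_eq_zero] at hu
    rw [← hx', ← map_comp_apply, h₁, map_comp_apply, map_comp_apply H u, hu, ← map_comp_apply,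
      ← map_comp_apply, h₂, map_zero_apply]

lemma isHit_coprod {α : Type v} [PreservesColimitsOfShape (Discrete α) H] {A₀ : C} (hA₀ : Q A₀)
    (X : α → C) (hX : ∀ i, IsHit H Q (X i)) : IsHit H Q (∐ X) := by
  let N : AddSubgroup (H.obj (∐ X)) :=
    { carrier := {x | ∃ (A : C) (_ : Q A) (f : A ⟶ ∐ X) (z : H.obj A), H.map f z = x}
      zero_mem' := ⟨A₀, hA₀, 0, 0, by simp⟩
      neg_mem' := by
        rintro _ ⟨A, hA, f, z, rfl⟩
        exact ⟨A, hA, f, -z, by simp⟩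
      add_mem' := exists_hit_add hQ }
  refine mem_of_map_ι_mem H X N fun i x => ?_
  obtain ⟨A, hA, f, z, rfl⟩ := hX i x
  exact ⟨A, hA, f ≫ Sigma.ι X i, z, map_comp_apply _ _ _ _⟩

lemma isDetected_coprod (hfin : ∀ A : C, Q A → FactorsFinitely A) {α : Type v}
    (X : α → C) (hX : ∀ i, IsDetected H Q (X i)) : IsDetected H Q (∐ X) := by
  classical
  intro A hA f x hx
  obtain ⟨F, hF⟩ := hfin A hA X f
  rw [Preadditive.comp_sub, Category.comp_id, sub_eq_zero] at hF
  rw [hF, trunc, Preadditive.comp_sum]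
  refine Finset.sum_induction _ (fun g => DiesAlong H Q x g) (fun _ _ h h' => h.add hQ h')
    (diesAlong_zero hQ hA x) fun i _ => ?_
  rw [← Category.assoc]
  exact (hX i A hA _ x (by rw [map_comp_apply, hx, map_zero])).comp _

end

/-- In a compactly generated category, values of homology theories come from compact objects. -/
lemma isHit_shift
    (hgen : CompactsGenerate C)
    (hH : IsExact H) [∀ α : Type v, PreservesColimitsOfShape (Discrete α) H]
    (hQ : TriClosed Q) (hfin : ∀ A : C, Q A → FactorsFinitely A)
    (hcomp : ∀ A : C, IsCompactObj C A → Q A) (X : C) : ∀ n : ℤ, IsHit H Q (X⟦n⟧) := by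
  let R : C → Prop := fun X => IsHit H Q X ∧ IsDetected H Q X
  have hR : ∀ ⦃X Y : C⦄ (i : X ⟶ Y) (r : Y ⟶ X), i ≫ r = 𝟙 X → R Y → R X :=
    fun X Y i r h hY => ⟨hY.1.of_retract i r h, hY.2.of_retract i r h⟩
  have hiso : ∀ ⦃X Y : C⦄, (X ≅ Y) → R X → R Y := fun X Y e => hR e.inv e.hom e.inv_hom_id
  have hc : ∀ T : C, IsCompactObj C T → ∀ n : ℤ, R (T⟦n⟧) := fun T hT n =>
    have := hQ.shift n (hcomp T hT)
    ⟨isHit_of_mem this, isDetected_of_mem this⟩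
  suffices h : ∀ n : ℤ, R (X⟦n⟧) from fun n => (h n).1
  refine hgen (fun X => ∀ n : ℤ, R (X⟦n⟧)) (fun Z hZ => hc Z (isCompactObj_of_isZero hZ))
    (fun X Y e h n => hiso ((shiftFunctor C n).mapIso e) (h n))
    (fun X n h m => hiso ((shiftFunctorAdd C n m).app X) (h _)) (fun T hT h₁ h₃ n => ?_)
    (fun X Y i r h hY n => hR (i⟦n⟧') (r⟦n⟧') (by rw [← CategoryTheory.Functor.map_comp, h, CategoryTheory.Functor.map_id])
      (hY n))
    (fun α X h n => ?_) hc X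
  · have hT' := T.shift_distinguished hT n
    refine ⟨IsHit.ext hQ hH hT' (h₁ n).1 ?_ (h₃ n).1,
      IsDetected.ext hQ hH (inv_rot_of_distTriang _ hT') hT' ?_ (h₁ n).2 (h₃ n).2⟩
    · exact (hiso ((shiftFunctorAdd C n 1).app _) (h₁ _)).2
    · exact (hiso ((shiftFunctorAdd C n (-1)).app _) (h₃ _)).1
  · refine hiso (PreservesCoproduct.iso (shiftFunctor C n) X).symm
      ⟨isHit_coprod hQ (hcomp _ (isCompactObj_of_isZero (isZero_zero C))) _ fun i => (h i n).1,
        isDetected_coprod hQ hfin _ fun i => (h i n).2⟩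

end CompactApproximation

section Cardinality

open Cardinal

variable {C : Type u} [Category.{v} C] [HasZeroObject C] [Preadditive C]
    [HasShift C ℤ] [∀ n : ℤ, (CategoryTheory.shiftFunctor C n).Additive]
    [Pretriangulated C] [HasCoproducts.{v} C]

lemma mk_le_mul_of_exact {A B D : Type v} [AddCommGroup A] [AddCommGroup B] [AddCommGroup D]
    (f : A → B) (g : B →+ D) (h : ∀ b, g b = 0 → ∃ a, f a = b) : #B ≤ #A * #D := by
  rw [mul_def]
  refine mk_le_of_surjective (f := fun x => f x.1 + Function.invFun g x.2) fun b => ?_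
  have hb : g (Function.invFun g (g b)) = g b := Function.invFun_eq ⟨b, rfl⟩
  obtain ⟨a, ha⟩ := h (b - Function.invFun g (g b)) (by rw [map_sub, hb, sub_self])
  exact ⟨(a, g b), by simp [ha]⟩

lemma mk_obj_eq_of_iso (H : C ⥤ AddCommGrpCat.{v}) {X Y : C} (e : X ≅ Y) :
    #(H.obj X) = #(H.obj Y) :=
  mk_congr ((forget _).mapIso (H.mapIso e)).toEquiv

variable {J : Type v} (hJ : ℵ₀ ≤ #J)

include hJ

/-- The values of a homology theory on `Gen J` are at most as large as `J`, if this holds for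
compact objects. -/
lemma Gen.mk_obj_le {H : C ⥤ AddCommGrpCat.{v}} [H.Additive] (hH : IsExact H)
    [∀ α : Type v, PreservesColimitsOfShape (Discrete α) H]
    (hc : ∀ A : C, IsCompactObj C A → #(H.obj A) ≤ #J) {X : C} (hX : Gen J X) :
    ∀ n : ℤ, #(H.obj (X⟦n⟧)) ≤ #J := by
  have hiso : ∀ ⦃X Y : C⦄, (X ≅ Y) → #(H.obj X) ≤ #J → #(H.obj Y) ≤ #J :=
    fun X Y e h => (mk_obj_eq_of_iso H e).ge.trans h
  refine Gen.induction_shift (R := fun X => #(H.obj X) ≤ #J)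
    (triClosed_forall_shift hiso fun T hT h₁ h₂ => ?_) hiso hc (fun X hX => ?_) hX
  · refine (mk_le_mul_of_exact (H.map T.mor₂) (H.map T.mor₃).hom fun b hb =>
      (hH _ (rot_of_distTriang _ hT) b).1 hb).trans ?_
    exact (mul_le_mul' h₂ (h₁ 1)).trans (mul_eq_self hJ).le
  · let φ : FreeAbelianGroup (Σ j, H.obj (X j)) →+ H.obj (∐ X) :=
      FreeAbelianGroup.lift fun x => H.map (Sigma.ι X x.1) x.2
    have hφ : Function.Surjective φ := fun x => by
      refine mem_of_map_ι_mem H X φ.range (fun j y => ⟨FreeAbelianGroup.of ⟨j, y⟩, ?_⟩) x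
      exact FreeAbelianGroup.lift_apply_of _ _
    refine (mk_le_of_surjective hφ).trans ?_
    have hle : #(Σ j, H.obj (X j)) ≤ #J := by
      rw [mk_sigma]
      refine (sum_le_sum _ (fun _ => #J) hX).trans ?_
      rw [sum_const', mul_eq_self hJ]
    cases isEmpty_or_nonempty (Σ j, H.obj (X j)) with
    | inl h => exact (le_one_iff_subsingleton.2 inferInstance).trans (one_le_aleph0.trans hJ)
    | inr h =>
      rw [mk_freeAbelianGroup]
      exact max_le hle hJ

/-- There are at most `2 ^ #J` morphisms between objects of `Gen J`. -/
lemma Gen.mk_hom_le (hc : ∀ A B : C, IsCompactObj C A → IsCompactObj C B → #(A ⟶ B) ≤ #J)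
    {X Y : C} (hX : Gen J X) (hY : Gen J Y) : #(X ⟶ Y) ≤ #(Set J) := by
  have hiso : ∀ ⦃X X' : C⦄, (X ≅ X') → (∀ Y, Gen J Y → #(X ⟶ Y) ≤ #(Set J)) →
      ∀ Y, Gen J Y → #(X' ⟶ Y) ≤ #(Set J) := fun X X' e h Y hY =>
    (mk_congr (e.homCongr (Iso.refl Y))).ge.trans (h Y hY)
  have hJ' : ℵ₀ ≤ #(Set J) := hJ.trans (by rw [mk_set]; exact (cantor _).le)
  refine Gen.induction (R := fun X => ∀ Y, Gen J Y → #(X ⟶ Y) ≤ #(Set J))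
    (triClosed_forall_shift hiso fun T hT h₁ h₂ Y hY => ?_) hiso (fun A hA Y hY => ?_)
    (fun X hX Y hY => ?_) hX Y hY
  · refine (mk_le_mul_of_exact (fun k : T.obj₁⟦(1 : ℤ)⟧ ⟶ Y => T.mor₃ ≫ k)
      (AddMonoidHom.mk' (fun k : T.obj₃ ⟶ Y => T.mor₂ ≫ k) fun _ _ => Preadditive.comp_add ..)
      fun b hb => ?_).trans ((mul_le_mul' (h₁ 1 Y hY) (h₂ Y hY)).trans (mul_eq_self hJ').le)
    obtain ⟨a, ha⟩ := T.yoneda_exact₃ hT b hb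
    exact ⟨a, ha.symm⟩
  · have : ∀ α : Type v, PreservesColimitsOfShape (Discrete α) (preadditiveCoyoneda.obj (op A)) :=
      fun α => (hA α).some
    have h := Gen.mk_obj_le hJ (isExact_coyoneda A) (fun B => hc A B hA) hY 0
    rw [mk_obj_eq_of_iso _ (shiftZeroIso Y)] at h
    refine LE.le.trans h ?_
    rw [mk_set]
    exact (cantor _).le
  · have h : #(∐ X ⟶ Y) ≤ #(∀ j, X j ⟶ Y) :=
      mk_le_of_injective (f := fun k j => Sigma.ι X j ≫ k) fun k l hkl =>
        Sigma.hom_ext _ _ fun j => congrFun hkl j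
    refine h.trans ?_
    rw [mk_pi]
    refine (prod_le_prod _ (fun _ => #(Set J)) fun j => hX j Y hY).trans ?_
    rw [prod_const', mk_set, ← power_mul, mul_eq_self hJ]

end Cardinality

section Codes

variable {C : Type u} [Category.{v} C] [HasZeroObject C] [Preadditive C]
    [HasShift C ℤ] [∀ n : ℤ, (CategoryTheory.shiftFunctor C n).Additive]
    [Pretriangulated C] [HasCoproducts.{v} C]

/-- Codes for the isomorphism classes of objects of `Gen J`. -/
inductive Code (J L M : Type v) : Type v
  | compact (m : M) : Code J L M
  | coprod (c : J → Code J L M) : Code J L M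
  | cone (a b : Code J L M) (l : L) : Code J L M

/-- A parametrisation of the morphisms `X ⟶ Y` which is surjective whenever possible. -/
noncomputable def decode (L : Type v) (X Y : C) : L → (X ⟶ Y) :=
  Classical.epsilon Function.Surjective

/-- The object described by a code. -/
noncomputable def Code.realize {J L M : Type v} (G : M → C) : Code J L M → C
  | compact m => G m
  | coprod c => ∐ fun j => (c j).realize G
  | cone a b l => (distinguished_cocone_triangle (decode L (a.realize G) (b.realize G) l)).choose

variable {J L M : Type v} {G : M → C}

lemma Code.gen_realize (hG : ∀ m, IsCompactObj C (G m)) (c : Code J L M) :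
    Gen J (c.realize G) := by
  induction c with
  | compact m => exact Gen.compact (hG m)
  | coprod c ih => exact Gen.coprod _ ih
  | cone a b l iha ihb =>
    exact Gen.cone _ (distinguished_cocone_triangle
      (decode L (a.realize G) (b.realize G) l)).choose_spec.choose_spec.choose_spec iha ihb

open Cardinal in
lemma Gen.exists_code [Nonempty L] (hG : ∀ m, IsCompactObj C (G m))
    (hG' : ∀ X, IsCompactObj C X → ∃ m, Nonempty (X ≅ G m))
    (hL : ∀ X Y : C, Gen J X → Gen J Y → #(X ⟶ Y) ≤ #L) {X : C} (hX : Gen J X) :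
    ∃ c : Code J L M, Nonempty (X ≅ c.realize G) := by
  induction hX with
  | compact hX =>
    obtain ⟨m, hm⟩ := hG' _ hX
    exact ⟨.compact m, hm⟩
  | iso e _ ih =>
    obtain ⟨c, ⟨e'⟩⟩ := ih
    exact ⟨c, ⟨e.symm ≪≫ e'⟩⟩
  | coprod X _ ih =>
    choose c hc using ih
    exact ⟨.coprod c, ⟨Sigma.mapIso fun j => (hc j).some⟩⟩
  | cone T hT _ _ ih₁ ih₂ =>
    obtain ⟨a, ⟨ea⟩⟩ := ih₁
    obtain ⟨b, ⟨eb⟩⟩ := ih₂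
    have hsurj : Function.Surjective (decode L (a.realize G) (b.realize G)) := by
      obtain ⟨φ⟩ := hL _ _ (a.gen_realize hG) (b.gen_realize hG)
      exact Classical.epsilon_spec ⟨_, Function.invFun_surjective φ.injective⟩
    obtain ⟨l, hl⟩ := hsurj (ea.inv ≫ T.mor₁ ≫ eb.hom)
    exact ⟨.cone a b l, ⟨Triangle.π₃.mapIso (isoTriangleOfIso₁₂ T _ hT
      (distinguished_cocone_triangle
        (decode L (a.realize G) (b.realize G) l)).choose_spec.choose_spec.choose_spec
      ea eb (by
        rw [Triangle.mk_mor₁, hl]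
        exact (ea.hom_inv_id_assoc _).symm))⟩⟩

open Cardinal in
/-- For suitable `J`, the class `Gen J` is essentially small and a given homology theory takes
values of size at most `J` on it. -/
lemma exists_gen_small
    (hsmall : EssentiallySmall.{v} (ObjectProperty.FullSubcategory (IsCompactObj C)))
    (K : C ⥤ AddCommGrpCat.{v}) [K.Additive]
    [∀ α : Type v, PreservesColimitsOfShape (Discrete α) K] (hK : IsExact K) :
    ∃ J : Type v, ℵ₀ ≤ #J ∧ (∀ X : C, Gen J X → ∀ n : ℤ, #(K.obj (X⟦n⟧)) ≤ #J) ∧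
      ∃ (I : Type v) (S : I → C), ∀ X : C, Gen J X → ∃ i, Nonempty (X ≅ S i) := by
  let M := SmallModel.{v} (ObjectProperty.FullSubcategory (IsCompactObj C))
  let ε := equivSmallModel.{v} (ObjectProperty.FullSubcategory (IsCompactObj C))
  let G : M → C := fun m => (ε.inverse.obj m).obj
  have hG : ∀ m, IsCompactObj C (G m) := fun m => (ε.inverse.obj m).property
  have hG' : ∀ X, IsCompactObj C X → ∃ m, Nonempty (X ≅ G m) := fun X hX =>
    ⟨ε.functor.obj ⟨X, hX⟩, ⟨(ObjectProperty.ι _).mapIso (ε.unitIso.app ⟨X, hX⟩)⟩⟩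
  let J : Type v := ULift.{v} ℕ ⊕ (Σ m, K.obj (G m)) ⊕ (Σ m m', G m ⟶ G m')
  have hJ : ℵ₀ ≤ #J := by
    have : Infinite J := Sum.infinite_of_left
    exact aleph0_le_mk J
  have hKJ : ∀ A : C, IsCompactObj C A → #(K.obj A) ≤ #J := fun A hA => by
    obtain ⟨m, ⟨e⟩⟩ := hG' A hA
    rw [mk_obj_eq_of_iso K e]
    exact mk_le_of_injective (f := fun x => Sum.inr (Sum.inl ⟨m, x⟩))
      (Sum.inr_injective.comp (Sum.inl_injective.comp sigma_mk_injective))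
  have hJ' : ∀ A B : C, IsCompactObj C A → IsCompactObj C B → #(A ⟶ B) ≤ #J :=
    fun A B hA hB => by
      obtain ⟨m, ⟨e⟩⟩ := hG' A hA
      obtain ⟨m', ⟨e'⟩⟩ := hG' B hB
      rw [mk_congr (e.homCongr e')]
      exact mk_le_of_injective (f := fun x => Sum.inr (Sum.inr ⟨m, m', x⟩))
        (Sum.inr_injective.comp (Sum.inr_injective.comp
          (sigma_mk_injective.comp sigma_mk_injective)))
  refine ⟨J, hJ, fun X hX => hX.mk_obj_le hJ hK hKJ, Code J (Set J) M, Code.realize G,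
    fun X hX => ?_⟩
  exact hX.exists_code hG hG' fun X Y hX hY => hX.mk_hom_le hJ hJ' hY

end Codes

section Towers

variable {C : Type u} [Category.{v} C] [HasZeroObject C] [Preadditive C]
    [HasShift C ℤ] [∀ n : ℤ, (CategoryTheory.shiftFunctor C n).Additive]
    [Pretriangulated C] [HasCoproducts.{v} C]

/-- The coproduct of a sequence of objects. -/
noncomputable abbrev tot (X : ℕ → C) : C :=
  ∐ fun n : ULift.{v} ℕ => X n.down

/-- The inclusion of a term into the coproduct of a sequence. -/
noncomputable def inc (X : ℕ → C) (n : ℕ) : X n ⟶ tot X :=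
  Sigma.ι (fun n : ULift.{v} ℕ => X n.down) ⟨n⟩

lemma tot_hom_ext {X : ℕ → C} {Y : C} {f g : tot X ⟶ Y} (h : ∀ n, inc X n ≫ f = inc X n ≫ g) :
    f = g :=
  Sigma.hom_ext _ _ fun n => h n.down

/-- The morphism from the coproduct of a sequence induced by morphisms from its terms. -/
noncomputable def totDesc {X : ℕ → C} {Y : C} (f : ∀ n, X n ⟶ Y) : tot X ⟶ Y :=
  Sigma.desc fun n => f n.down

@[simp]
lemma inc_totDesc {X : ℕ → C} {Y : C} (f : ∀ n, X n ⟶ Y) (n : ℕ) : inc X n ≫ totDesc f = f n :=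
  Sigma.ι_desc _ _

@[simp]
lemma inc_totDesc_assoc {X : ℕ → C} {Y Z : C} (f : ∀ n, X n ⟶ Y) (n : ℕ) (g : Y ⟶ Z) :
    inc X n ≫ totDesc f ≫ g = f n ≫ g := by
  rw [← Category.assoc, inc_totDesc]

/-- The shift endomorphism of the coproduct of a tower. -/
noncomputable def sh {X : ℕ → C} (i : ∀ n, X n ⟶ X (n + 1)) : tot X ⟶ tot X :=
  totDesc fun n => i n ≫ inc X (n + 1)

@[simp]
lemma inc_sh {X : ℕ → C} (i : ∀ n, X n ⟶ X (n + 1)) (n : ℕ) :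
    inc X n ≫ sh i = i n ≫ inc X (n + 1) :=
  inc_totDesc _ _

@[simp]
lemma inc_sh_assoc {X : ℕ → C} (i : ∀ n, X n ⟶ X (n + 1)) (n : ℕ) {Y : C} (g : tot X ⟶ Y) :
    inc X n ≫ sh i ≫ g = i n ≫ inc X (n + 1) ≫ g := by
  rw [← Category.assoc, inc_sh, Category.assoc]

lemma one_sub_sh_totDesc {X : ℕ → C} (i : ∀ n, X n ⟶ X (n + 1)) {Y : C} (p : ∀ n, X n ⟶ Y)
    (hp : ∀ n, i n ≫ p (n + 1) = p n) : (𝟙 _ - sh i) ≫ totDesc p = 0 :=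
  tot_hom_ext fun n => by simp [Preadditive.sub_comp, hp]

lemma mem_of_map_inc_mem (H : C ⥤ AddCommGrpCat.{v})
    [∀ α : Type v, PreservesColimitsOfShape (Discrete α) H] (X : ℕ → C)
    (N : AddSubgroup (H.obj (tot X))) (hN : ∀ n (x : H.obj (X n)), H.map (inc X n) x ∈ N)
    (x : H.obj (tot X)) : x ∈ N :=
  mem_of_map_ι_mem H _ N (fun n y => hN n.down y) x

open Cardinal in
lemma Gen.coprod_of_le {J α : Type v} (h : #α ≤ #J) (X : α → C) (hX : ∀ a, Gen J (X a)) :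
    Gen J (∐ X) := by
  obtain ⟨e⟩ := h
  let Y : J → C := fun j => ∐ fun a : {a // e a = j} => X a.1
  have hY : ∀ j, Gen J (Y j) := fun j => by
    have : Subsingleton {a // e a = j} := ⟨fun a b => Subtype.ext (e.injective (a.2.trans b.2.symm))⟩
    cases isEmpty_or_nonempty {a // e a = j} with
    | inl h =>
      refine Gen.compact (isCompactObj_of_isZero ?_)
      rw [IsZero.iff_id_eq_zero]
      exact Sigma.hom_ext _ _ fun a => isEmptyElim a
    | inr h =>
      obtain ⟨a⟩ := h
      have : Unique {a // e a = j} := uniqueOfSubsingleton a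
      exact Gen.iso (coproductUniqueIso _).symm (hX _)
  refine Gen.iso (X := ∐ Y) ⟨Sigma.desc fun j => Sigma.desc fun a : {a // e a = j} => Sigma.ι X a.1,
    Sigma.desc fun a => Sigma.ι (fun b : {b // e b = e a} => X b.1) ⟨a, rfl⟩ ≫ Sigma.ι Y (e a),
    ?_, ?_⟩ (Gen.coprod Y hY)
  · refine Sigma.hom_ext _ _ fun j => Sigma.hom_ext _ _ ?_
    rintro ⟨a, rfl⟩
    simp [Y]
  · refine Sigma.hom_ext _ _ fun a => ?_
    simp [Y]

open Cardinal in
lemma Gen.tot {J : Type v} (hJ : ℵ₀ ≤ #J) (X : ℕ → C) (hX : ∀ n, Gen J (X n)) :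
    Gen J (tot X) :=
  Gen.coprod_of_le (by simpa using hJ) _ fun n => hX n.down

end Towers

section Acyclic

variable {C : Type u} [Category.{v} C] [HasZeroObject C] [Preadditive C]
    [HasShift C ℤ] [∀ n : ℤ, (CategoryTheory.shiftFunctor C n).Additive]
    [Pretriangulated C] [HasCoproducts.{v} C]
    (K : C ⥤ AddCommGrpCat.{v}) [K.Additive]

lemma kAcyclic_iff {X : C} : KAcyclic C K X ↔ ∀ (n : ℤ) (x : K.obj (X⟦n⟧)), x = 0 := by
  refine forall_congr' fun n => ?_
  rw [IsZero.iff_id_eq_zero]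
  constructor
  · intro h x
    exact congrArg (fun f => f x) h
  · intro h
    ext x
    exact h x

variable {K}

lemma triClosed_kAcyclic (hK : IsExact K) : TriClosed (KAcyclic C K) :=
  triClosed_forall_shift (R := fun X => IsZero (K.obj X))
    (fun _ _ e h => h.of_iso (K.mapIso e.symm))
    (fun T hT h₁ h₂ => by
      rw [IsZero.iff_id_eq_zero]
      ext x
      obtain ⟨y, rfl⟩ := hK.lift₃ hT x (by
        rw [(h₁ 1).eq_of_tgt (K.map T.mor₃) 0]
        rfl)
      rw [h₂.eq_of_src (K.map T.mor₂) 0]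
      rfl)

lemma kAcyclic_coprod [∀ α : Type v, PreservesColimitsOfShape (Discrete α) K] {α : Type v}
    (X : α → C) (hX : ∀ a, KAcyclic C K (X a)) : KAcyclic C K (∐ X) := by
  rw [kAcyclic_iff]
  intro n x
  refine mem_of_map_ι_mem (shiftFunctor C n ⋙ K) X ⊥ (fun a y => ?_) x
  rw [(kAcyclic_iff K).1 (hX a) n y, map_zero]
  exact AddSubgroup.zero_mem _

variable (K) in
/-- The morphism `f` induces zero on all shifts of `K`. -/
def Vanishes {X Y : C} (f : X ⟶ Y) : Prop :=
  ∀ (n : ℤ) (x : K.obj (X⟦n⟧)), K.map (f⟦n⟧') x = 0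

lemma Vanishes.shift {X Y : C} {f : X ⟶ Y} (hf : Vanishes K f) (m : ℤ) :
    Vanishes K (f⟦m⟧') := fun n x => by
  have h : f⟦m⟧'⟦n⟧' = (shiftFunctorAdd C m n).inv.app X ≫ f⟦m + n⟧' ≫
      (shiftFunctorAdd C m n).hom.app Y := by
    rw [NatTrans.naturality, Iso.inv_hom_id_app_assoc]
    rfl
  rw [h, map_comp_apply, map_comp_apply, hf, map_zero]

/-- If all maps of a tower vanish on a homology theory, so does its homotopy colimit. -/
lemma kAcyclic_of_tower [∀ α : Type v, PreservesColimitsOfShape (Discrete α) K] (hK : IsExact K)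
    {X : ℕ → C} {i : ∀ n, X n ⟶ X (n + 1)} (hi : ∀ n, Vanishes K (i n)) {V : C} {q : tot X ⟶ V}
    {d : V ⟶ (tot X)⟦(1 : ℤ)⟧} (hT : Triangle.mk (𝟙 _ - sh i) q d ∈ (distTriang C)) :
    KAcyclic C K V := by
  have hsh : Vanishes K (sh i) := fun n x => by
    refine mem_of_map_inc_mem (shiftFunctor C n ⋙ K) X (K.map ((sh i)⟦n⟧')).hom.ker
      (fun k y => ?_) x
    change (shiftFunctor C n ⋙ K).map (sh i) ((shiftFunctor C n ⋙ K).map (inc X k) y) = 0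
    rw [← map_comp_apply, inc_sh, map_comp_apply]
    change (shiftFunctor C n ⋙ K).map _ (K.map ((i k)⟦n⟧') y) = 0
    rw [hi k n y, map_zero]
  rw [kAcyclic_iff]
  intro n x
  have hKn := isExact_shift K hK n
  have h₃ : (shiftFunctor C n ⋙ K).map d x = 0 := by
    have h := map_comp_apply (shiftFunctor C n ⋙ K) d ((𝟙 _ - sh i)⟦(1 : ℤ)⟧') x
    rw [show d ≫ (𝟙 _ - sh i)⟦(1 : ℤ)⟧' = 0 from comp_distTriang_mor_zero₃₁ _ hT, map_zero_apply,
      CategoryTheory.Functor.map_sub, map_sub_apply, CategoryTheory.Functor.map_id,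
      map_id_apply] at h
    have h' : (shiftFunctor C n ⋙ K).map ((sh i)⟦(1 : ℤ)⟧')
      ((shiftFunctor C n ⋙ K).map d x) = 0 := hsh.shift 1 n _
    rw [h', sub_zero] at h
    exact h.symm
  obtain ⟨y, rfl⟩ := hKn.lift₃ hT x h₃
  have hy : (shiftFunctor C n ⋙ K).map (𝟙 _ - sh i) y = y := by
    have h' : (shiftFunctor C n ⋙ K).map (sh i) y = 0 := hsh n y
    rw [map_sub_apply, map_id_apply, h', sub_zero]
  rw [← hy, ← map_comp_apply, dist_comp hT, map_zero_apply]

end Acyclic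

section AcyclicFactorization

open Cardinal

variable {C : Type u} [Category.{v} C] [HasZeroObject C] [Preadditive C]
    [HasShift C ℤ] [∀ n : ℤ, (CategoryTheory.shiftFunctor C n).Additive]
    [Pretriangulated C] [HasCoproducts.{v} C]
    {K : C ⥤ AddCommGrpCat.{v}} [K.Additive]
    [∀ α : Type v, PreservesColimitsOfShape (Discrete α) K] {J : Type v}

/-- The acyclic objects in `Gen J`. -/
def SmallAcyclic (K : C ⥤ AddCommGrpCat.{v}) (J : Type v) (X : C) : Prop :=
  Gen J X ∧ KAcyclic C K X

lemma triClosed_smallAcyclic (hK : IsExact K) : TriClosed (SmallAcyclic K J) :=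
  triClosed_gen.and (triClosed_kAcyclic hK)

section

variable (hgen : CompactsGenerate C) (hK : IsExact K) (hJ : ℵ₀ ≤ #J)
  (hKJ : ∀ X : C, Gen J X → ∀ n : ℤ, #(K.obj (X⟦n⟧)) ≤ #J)

include hgen hK hJ hKJ

/-- A morphism from an object of `Gen J` to an acyclic object factors through a morphism within
`Gen J` on which `K` vanishes. -/
lemma exists_vanishing_factorization {S U : C} (hS : Gen J S) (hU : KAcyclic C K U) (f : S ⟶ U) :
    ∃ (S' : C) (i : S ⟶ S') (f' : S' ⟶ U), Gen J S' ∧ i ≫ f' = f ∧ Vanishes K i := by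
  obtain ⟨F, a, d, hF⟩ := distinguished_cocone_triangle₁ f
  have key : ∀ x : (Σ n : ULift.{v} ℤ, K.obj (S⟦n.down⟧)), ∃ (A : C) (g : A ⟶ F)
      (z : K.obj (A⟦x.1.down⟧)), Gen J A ∧ K.map ((g ≫ a)⟦x.1.down⟧') z = x.2 := by
    rintro ⟨⟨n⟩, x⟩
    have hhit : IsHit (shiftFunctor C n ⋙ K)
        (fun X : C => Gen J X ∧ ∀ n : ℤ, FactorsFinitely (X⟦n⟧)) F := by
      refine IsHit.of_retract (shiftZeroIso F).inv (shiftZeroIso F).hom (Iso.inv_hom_id _)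
        (isHit_shift hgen (isExact_shift K hK n) (triClosed_gen.and triClosed_factorsFinitely)
          (fun A hA => ?_) (fun A hA => ⟨Gen.compact hA, fun n =>
            factorsFinitely_of_isCompactObj (isCompactObj_shift hA n)⟩) F 0)
      intro α X g
      obtain ⟨E, hE⟩ := hA.2 0 X ((shiftZeroIso A).hom ≫ g)
      exact ⟨E, by rwa [Category.assoc, ← cancel_epi (shiftZeroIso A).inv,
        Iso.inv_hom_id_assoc, comp_zero] at hE⟩
    obtain ⟨y, hy⟩ := (isExact_shift K hK n).lift hF x ((kAcyclic_iff K).1 hU n _)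
    obtain ⟨A, hA, g, z, hz⟩ := hhit y
    refine ⟨A, g, z, hA.1, ?_⟩
    change (shiftFunctor C n ⋙ K).map (g ≫ a) z = x
    rw [map_comp_apply, hz, hy]
  choose A g z hA hz using key
  have hcard : #(Σ n : ULift.{v} ℤ, K.obj (S⟦n.down⟧)) ≤ #J := by
    rw [mk_sigma]
    refine (sum_le_sum _ (fun _ => #J) fun n : ULift.{v} ℤ => hKJ S hS n.down).trans ?_
    rw [sum_const']
    exact (mul_le_mul' (by simpa using hJ) le_rfl).trans (mul_eq_self hJ).le
  obtain ⟨S', i, e, hT⟩ := distinguished_cocone_triangle (Sigma.desc fun x => g x ≫ a)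
  obtain ⟨f', hf'⟩ := dist_desc hT f (Sigma.hom_ext _ _ fun x => by simp [dist_comp hF])
  refine ⟨S', i, f', Gen.cone _ hT (Gen.coprod_of_le hcard _ hA) hS, hf', fun n x => ?_⟩
  obtain ⟨y, hy⟩ : ∃ y, K.map ((g ⟨⟨n⟩, x⟩ ≫ a)⟦n⟧') y = x := ⟨_, hz ⟨⟨n⟩, x⟩⟩
  have h₀ : (g ⟨⟨n⟩, x⟩ ≫ a) ≫ i = 0 := by
    rw [← Sigma.ι_desc (fun x => g x ≫ a), Category.assoc, dist_comp hT, comp_zero]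
  rw [← hy, ← map_comp_apply, ← CategoryTheory.Functor.map_comp, h₀,
    CategoryTheory.Functor.map_zero, map_zero_apply]

/-- A morphism from an object of `Gen J` to an acyclic object factors through an acyclic object
of `Gen J`. -/
lemma exists_smallAcyclic_factorization {S U : C} (hS : Gen J S) (hU : KAcyclic C K U)
    (f : S ⟶ U) : ∃ (V : C) (a : S ⟶ V) (b : V ⟶ U), SmallAcyclic K J V ∧ a ≫ b = f := by
  let Stage := {p : Over U // Gen J p.left}
  have step : ∀ p : Stage, ∃ (q : Stage) (i : p.1.left ⟶ q.1.left),
      i ≫ q.1.hom = p.1.hom ∧ Vanishes K i := fun p => by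
    obtain ⟨S', i, f', hS', hf', hi⟩ :=
      exists_vanishing_factorization hgen hK hJ hKJ p.2 hU p.1.hom
    exact ⟨⟨Over.mk f', hS'⟩, i, hf', hi⟩
  choose nxt i hi hv using step
  let seq : ℕ → Stage := fun n => Nat.rec ⟨Over.mk f, hS⟩ (fun _ p => nxt p) n
  let X : ℕ → C := fun n => (seq n).1.left
  let t : ∀ n, X n ⟶ X (n + 1) := fun n => i (seq n)
  obtain ⟨V, q, d, hT⟩ := distinguished_cocone_triangle (𝟙 _ - sh t)
  have hX : Gen J (tot X) := Gen.tot hJ X fun n => (seq n).2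
  obtain ⟨b, hb⟩ := dist_desc hT (totDesc fun n => (seq n).1.hom)
    (one_sub_sh_totDesc t _ fun n => hi (seq n))
  refine ⟨V, inc X 0 ≫ q, b, ⟨Gen.cone _ hT hX hX, kAcyclic_of_tower hK (fun n => hv _) hT⟩, ?_⟩
  rw [Category.assoc, hb, inc_totDesc]
  rfl

/-- A morphism from an acyclic object of `Gen J` to a coproduct of acyclic objects factors through
a coproduct of morphisms from acyclic objects of `Gen J`. -/
lemma exists_smallAcyclic_sigma {S : C} (hS : Gen J S) {α : Type v} (U : α → C)
    (hU : ∀ i, KAcyclic C K (U i)) (f : S ⟶ ∐ U) : ∃ (Y : α → C) (a : ∀ i, Y i ⟶ U i)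
      (b : S ⟶ ∐ Y), (∀ i, SmallAcyclic K J (Y i)) ∧ b ≫ Limits.Sigma.map a = f := by
  obtain ⟨Z, a, b, hZ, rfl⟩ := hS.factorsThroughGen U f
  choose Y c e hY he using fun i => exists_smallAcyclic_factorization hgen hK hJ hKJ (hZ i) (hU i)
    (a i)
  refine ⟨Y, e, b ≫ Limits.Sigma.map c, hY, ?_⟩
  rw [Category.assoc]
  congr 1
  ext i
  simp [reassoc_of% (he i)]

end

end AcyclicFactorization

section TowerOverObject

variable {C : Type u} [Category.{v} C] [HasZeroObject C] [Preadditive C]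
    [HasShift C ℤ] [∀ n : ℤ, (CategoryTheory.shiftFunctor C n).Additive]
    [Pretriangulated C] [HasCoproducts.{v} C]

lemma eq_zero_of_comp_shift {s A B : C} (f : A ⟶ B)
    (hf : ∀ y : s⟦(-1 : ℤ)⟧ ⟶ A, y ≫ f = 0 → y = 0) (k : s ⟶ A⟦(1 : ℤ)⟧)
    (hk : k ≫ f⟦(1 : ℤ)⟧' = 0) : k = 0 := by
  let e : (s⟦(-1 : ℤ)⟧)⟦(1 : ℤ)⟧ ≅ s := (shiftEquiv C (1 : ℤ)).counitIso.app s
  obtain ⟨y, hy⟩ := (shiftFunctor C (1 : ℤ)).map_surjective (e.hom ≫ k)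
  have hy₀ : y = 0 := by
    refine hf y ((shiftFunctor C (1 : ℤ)).map_injective ?_)
    rw [CategoryTheory.Functor.map_comp, hy, Category.assoc, hk, comp_zero,
      CategoryTheory.Functor.map_zero]
  rw [hy₀, CategoryTheory.Functor.map_zero] at hy
  rw [← cancel_epi e.hom, ← hy, comp_zero]

/-- The morphism between coproducts of sequences induced by a sequence of morphisms. -/
noncomputable def totMap {X Y : ℕ → C} (f : ∀ n, X n ⟶ Y n) : tot X ⟶ tot Y :=
  totDesc fun n => f n ≫ inc Y n

@[simp]
lemma inc_totMap {X Y : ℕ → C} (f : ∀ n, X n ⟶ Y n) (n : ℕ) :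
    inc X n ≫ totMap f = f n ≫ inc Y n :=
  inc_totDesc _ _

@[simp]
lemma inc_totMap_assoc {X Y : ℕ → C} (f : ∀ n, X n ⟶ Y n) (n : ℕ) {Z : C} (g : tot Y ⟶ Z) :
    inc X n ≫ totMap f ≫ g = f n ≫ inc Y n ≫ g := by
  rw [← Category.assoc, inc_totMap, Category.assoc]

lemma totMap_eq_sigma_map {X Y : ℕ → C} (f : ∀ n, X n ⟶ Y n) :
    totMap f = Limits.Sigma.map (fun n : ULift.{v} ℕ => f n.down) :=
  tot_hom_ext fun n => by
    rw [inc_totMap]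
    exact (Limits.Sigma.ι_map (fun n : ULift.{v} ℕ => f n.down) ⟨n⟩).symm

lemma eq_zero_of_comp_sh_const {A Y : C} (k : A ⟶ tot fun _ : ℕ => Y)
    (hk : k ≫ sh (fun _ => 𝟙 Y) = k) : k = 0 := by
  let r : tot (fun _ : ℕ => Y) ⟶ tot (fun _ : ℕ => Y) :=
    totDesc fun n => -∑ j ∈ Finset.range n, inc (fun _ : ℕ => Y) j
  have hr : (𝟙 _ - sh (fun _ : ℕ => 𝟙 Y)) ≫ r = 𝟙 _ := tot_hom_ext fun n => by
    simp [r, Preadditive.sub_comp, Finset.sum_range_succ]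
  rw [← Category.comp_id k, ← hr, ← Category.assoc, Preadditive.comp_sub, hk, Category.comp_id,
    sub_self, zero_comp]

/-- Every morphism from an object in `S` to a coproduct of objects in `Q` factors through a
coproduct of morphisms with sources in `S`. -/
def FactorsSequences (S Q : C → Prop) : Prop :=
  ∀ ⦃s : C⦄, S s → ∀ U : ℕ → C, (∀ n, Q (U n)) → ∀ f : s ⟶ tot U,
    ∃ (Y : ℕ → C) (a : ∀ n, Y n ⟶ U n) (b : s ⟶ tot Y), (∀ n, S (Y n)) ∧ b ≫ totMap a = f

variable {S Q : C → Prop}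

lemma FactorsSequences.of_comp_eq_zero (h : FactorsSequences S Q) (hQ : TriClosed Q) {s : C}
    (hs : S s) {V U : ℕ → C} (hV : ∀ n, Q (V n)) (hU : ∀ n, Q (U n)) (φ : ∀ n, V n ⟶ U n)
    (g : s ⟶ tot V) (hg : g ≫ totMap φ = 0) : ∃ (Y : ℕ → C) (t : ∀ n, Y n ⟶ V n) (b : s ⟶ tot Y),
      (∀ n, S (Y n)) ∧ b ≫ totMap t = g ∧ ∀ n, t n ≫ φ n = 0 := by
  choose F i d hF using fun n => distinguished_cocone_triangle₁ (φ n)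
  obtain ⟨l, hl⟩ := exists_lift_sigma_map (fun n : ULift.{v} ℕ => hF n.down) g
    (by rwa [← totMap_eq_sigma_map])
  obtain ⟨Y, a, b, hY, rfl⟩ := h hs F (fun n => hQ.fiber _ (hF n) (hV n) (hU n)) l
  refine ⟨Y, fun n => a n ≫ i n, b, hY, ?_, fun n => by simp [dist_comp (hF n)]⟩
  rw [← hl, ← totMap_eq_sigma_map, Category.assoc]
  congr 1
  exact tot_hom_ext fun n => by simp

variable (S) in
/-- A tower over `X` which approximates `X` from the point of view of objects in `S`. -/
structure ApproxTower (X : C) where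
  /-- the terms -/
  obj : ℕ → C
  /-- the transition morphisms -/
  map : ∀ n, obj n ⟶ obj (n + 1)
  /-- the structure morphisms -/
  hom : ∀ n, obj n ⟶ X
  map_hom : ∀ n, map n ≫ hom (n + 1) = hom n
  lift : ∀ ⦃s : C⦄, S s → ∀ f : s ⟶ X, ∃ f' : s ⟶ obj 0, f' ≫ hom 0 = f
  kill : ∀ ⦃s : C⦄, S s → ∀ n (g : s ⟶ obj n), g ≫ hom n = 0 → g ≫ map n = 0

namespace ApproxTower

variable {X : C} (T : ApproxTower S X)

/-- The composite transition morphism from the beginning of the tower. -/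
def fromZero : ∀ n, T.obj 0 ⟶ T.obj n
  | 0 => 𝟙 _
  | n + 1 => fromZero n ≫ T.map n

lemma fromZero_hom (n : ℕ) : T.fromZero n ≫ T.hom n = T.hom 0 := by
  induction n with
  | zero => exact Category.id_comp _
  | succ n ih => rw [fromZero, Category.assoc, T.map_hom, ih]

lemma exists_fromZero_succ_eq (n : ℕ) :
    ∃ m : T.obj 1 ⟶ T.obj (n + 1), T.map 0 ≫ m = T.fromZero (n + 1) := by
  induction n with
  | zero => exact ⟨𝟙 _, by simp [fromZero]⟩
  | succ n ih =>
    obtain ⟨m, hm⟩ := ih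
    exact ⟨m ≫ T.map (n + 1), by rw [← Category.assoc, hm]; rfl⟩

lemma exists_replace {s : C} (hs : S s) (n : ℕ) (a : s ⟶ T.obj n) :
    ∃ a' : s ⟶ T.obj 0, a' ≫ T.hom 0 = a ≫ T.hom n ∧
      a ≫ T.map n = a' ≫ T.fromZero (n + 1) := by
  obtain ⟨a', ha'⟩ := T.lift hs (a ≫ T.hom n)
  refine ⟨a', ha', ?_⟩
  have := T.kill hs n (a - a' ≫ T.fromZero n) (by
    rw [Preadditive.sub_comp, Category.assoc, fromZero_hom, ha', sub_self])
  rwa [Preadditive.sub_comp, sub_eq_zero, Category.assoc] at this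

lemma comp_map_zero {s : C} (hs : S s) (n : ℕ) (t : s ⟶ T.obj 0) (ht : t ≫ T.fromZero n = 0) :
    t ≫ T.map 0 = 0 :=
  T.kill hs 0 t (by rw [← T.fromZero_hom n, ← Category.assoc, ht, zero_comp])

variable (h : FactorsSequences S Q) (hT : ∀ n, Q (T.obj n))

include h hT

lemma eq_zero_of_comp_sh (hQ : TriClosed Q) {s : C} (hs : S s) (g : s ⟶ tot T.obj)
    (hg : g ≫ sh T.map = g) : g = 0 := by
  obtain ⟨Y, a, b, hY, rfl⟩ := h hs T.obj hT g
  choose a' _ ha' using fun n => T.exists_replace (hY n) n (a n)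
  choose m hm using T.exists_fromZero_succ_eq
  let c : tot (fun _ : ℕ => T.obj 0) ⟶ tot (fun _ : ℕ => T.obj 0) := sh fun _ => 𝟙 _
  let θ : tot (fun _ : ℕ => T.obj 0) ⟶ tot T.obj := totMap T.fromZero
  have hθ : θ ≫ sh T.map = c ≫ θ := tot_hom_ext fun n => by simp [θ, c, fromZero]
  have haθ : totMap a ≫ sh T.map = totMap a' ≫ c ≫ θ := tot_hom_ext fun n => by
    simp [θ, c, reassoc_of% (ha' n)]
  obtain ⟨w, hw⟩ : ∃ w : s ⟶ tot (fun _ : ℕ => T.obj 0), b ≫ totMap a = w ≫ θ :=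
    ⟨b ≫ totMap a' ≫ c, by rw [← hg, Category.assoc, haθ]; simp⟩
  have hw' : b ≫ totMap a = w ≫ c ≫ θ := by
    rw [← hθ, ← Category.assoc, ← hw, hg]
  obtain ⟨Z, t, b', hZ, hb', ht⟩ := h.of_comp_eq_zero hQ hs (fun _ => hT 0) hT T.fromZero
    (w - w ≫ c) (by
      rw [Preadditive.sub_comp, Category.assoc]
      exact sub_eq_zero.2 (hw.symm.trans hw'))
  have hw₁ : (w - w ≫ c) ≫ totMap (fun _ : ℕ => T.map 0) = 0 := by
    have h₀ : totMap t ≫ totMap (fun _ : ℕ => T.map 0) = 0 := tot_hom_ext fun n => by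
      simp [reassoc_of% (T.comp_map_zero (hZ n) n (t n) (ht n))]
    rw [← hb', Category.assoc, h₀, comp_zero]
  have hc : c ≫ totMap (fun _ : ℕ => T.map 0) =
      totMap (fun _ : ℕ => T.map 0) ≫ sh (fun _ => 𝟙 _) := tot_hom_ext fun n => by simp [c]
  have hw₀ : w ≫ totMap (fun _ : ℕ => T.map 0) = 0 := by
    refine eq_zero_of_comp_sh_const _ ?_
    rw [Preadditive.sub_comp, sub_eq_zero, Category.assoc, hc] at hw₁
    rw [Category.assoc, ← hw₁]
  have hcθ : c ≫ θ = totMap (fun _ : ℕ => T.map 0) ≫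
      totDesc (fun n => m n ≫ inc T.obj (n + 1)) := tot_hom_ext fun n => by
    simp [c, θ, ← reassoc_of% (hm n)]
  rw [hw', hcθ, ← Category.assoc, hw₀, zero_comp]

lemma exists_comp_one_sub_sh {s : C} (hs : S s) (f : s ⟶ tot T.obj)
    (hf : f ≫ totDesc T.hom = 0) : ∃ l : s ⟶ tot T.obj, l ≫ (𝟙 _ - sh T.map) = f := by
  obtain ⟨Y, a, b, hY, rfl⟩ := h hs T.obj hT f
  choose a' ha ha' using fun n => T.exists_replace (hY n) n (a n)
  let e : ℕ → (T.obj 0 ⟶ tot T.obj) := fun n =>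
    ∑ k ∈ Finset.range (n + 1), T.fromZero k ≫ inc T.obj k
  have he : ∀ n, e n ≫ (𝟙 _ - sh T.map) =
      inc T.obj 0 - T.fromZero (n + 1) ≫ inc T.obj (n + 1) := fun n => by
    have := Finset.sum_range_sub' (fun k => T.fromZero k ≫ inc T.obj k) (n + 1)
    simp only [e, Preadditive.sum_comp, Preadditive.comp_sub, Category.comp_id, Category.assoc,
      inc_sh]
    simpa [fromZero] using this
  have hsh : totMap a ≫ sh T.map =
      totDesc a' ≫ inc T.obj 0 - totDesc (fun n => a' n ≫ e n) ≫ (𝟙 _ - sh T.map) :=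
    tot_hom_ext fun n => by
      rw [Preadditive.comp_sub, inc_totDesc_assoc, inc_totDesc_assoc, Category.assoc, he,
        Preadditive.comp_sub, sub_sub_cancel, inc_totMap_assoc, inc_sh, ← Category.assoc, ha',
        Category.assoc]
  have hh : (b ≫ totDesc a') ≫ T.map 0 = 0 := by
    refine T.kill hs 0 _ ?_
    have h₀ : totDesc a' ≫ T.hom 0 = totMap a ≫ totDesc T.hom := tot_hom_ext fun n => by
      simp [ha]
    rw [Category.assoc, h₀, ← Category.assoc, hf]
  refine ⟨b ≫ totMap a + (b ≫ totDesc a') ≫ inc T.obj 0 -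
    b ≫ totDesc (fun n => a' n ≫ e n), ?_⟩
  have h₁ : ((b ≫ totDesc a') ≫ inc T.obj 0) ≫ (𝟙 _ - sh T.map) =
      (b ≫ totDesc a') ≫ inc T.obj 0 := by
    rw [Preadditive.comp_sub, Category.comp_id, Category.assoc _ _ (sh T.map), inc_sh,
      ← Category.assoc _ (T.map 0), hh, zero_comp, sub_zero]
  rw [Preadditive.sub_comp, Preadditive.add_comp, h₁, Preadditive.comp_sub, Category.comp_id,
    Category.assoc b (totMap a), hsh, Preadditive.comp_sub]
  simp only [Category.assoc]
  abel

/-- The homotopy colimit of an approximating tower has the same morphisms from objects of `S`. -/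
lemma exists_colimit (hQ : TriClosed Q) (hQtot : Q (tot T.obj))
    (hS : ∀ s : C, S s → S (s⟦(-1 : ℤ)⟧)) :
    ∃ (V : C) (p : V ⟶ X), Q V ∧ (∀ s, S s → ∀ f : s ⟶ X, ∃ f' : s ⟶ V, f' ≫ p = f) ∧
      ∀ s, S s → ∀ k : s ⟶ V, k ≫ p = 0 → k = 0 := by
  obtain ⟨V, q, d, hV⟩ := distinguished_cocone_triangle (𝟙 _ - sh T.map)
  obtain ⟨p, hp⟩ := dist_desc hV (totDesc T.hom) (one_sub_sh_totDesc _ _ T.map_hom)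
  refine ⟨V, p, hQ.cone _ hV hQtot hQtot, fun s hs f => ?_, fun s hs k hk => ?_⟩
  · obtain ⟨f', hf'⟩ := T.lift hs f
    exact ⟨f' ≫ inc T.obj 0 ≫ q, by rw [Category.assoc, Category.assoc, hp, inc_totDesc, hf']⟩
  · have hkd : k ≫ d = 0 := by
      refine eq_zero_of_comp_shift (𝟙 _ - sh T.map) (fun y hy => ?_) (k ≫ d) (by
        rw [Category.assoc, show d ≫ (𝟙 _ - sh T.map)⟦(1 : ℤ)⟧' = 0 from
          comp_distTriang_mor_zero₃₁ _ hV, comp_zero])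
      rw [Preadditive.comp_sub, Category.comp_id, sub_eq_zero] at hy
      exact T.eq_zero_of_comp_sh h hT hQ (hS s hs) y hy.symm
    obtain ⟨k', rfl⟩ := dist_lift₃ hV k hkd
    rw [Category.assoc, hp] at hk
    obtain ⟨l, rfl⟩ := T.exists_comp_one_sub_sh h hT hs k' hk
    rw [Category.assoc, dist_comp hV, comp_zero]

end ApproxTower

/-- The cone of an approximation receives no nonzero morphisms from objects of `S`. -/
lemma eq_zero_of_approximation {S : C → Prop} (hS : TriClosed S) {V X L : C} {p : V ⟶ X}
    {j : X ⟶ L} {d : L ⟶ V⟦(1 : ℤ)⟧} (hT : Triangle.mk p j d ∈ (distTriang C))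
    (hlift : ∀ s, S s → ∀ f : s ⟶ X, ∃ f' : s ⟶ V, f' ≫ p = f)
    (hinj : ∀ s, S s → ∀ k : s ⟶ V, k ≫ p = 0 → k = 0) {s : C} (hs : S s) (f : s ⟶ L) :
    f = 0 := by
  have hfd : f ≫ d = 0 := eq_zero_of_comp_shift p (hinj _ (hS.shift (-1) hs)) (f ≫ d) (by
    rw [Category.assoc, show d ≫ p⟦(1 : ℤ)⟧' = 0 from comp_distTriang_mor_zero₃₁ _ hT, comp_zero])
  obtain ⟨g, rfl⟩ := dist_lift₃ hT f hfd
  obtain ⟨g', rfl⟩ := hlift s hs g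
  rw [Category.assoc, dist_comp hT, comp_zero]

lemma exists_approxTower (hQ : TriClosed Q) (hcoprod : ∀ {α : Type v} (X : α → C),
      (∀ a, Q (X a)) → Q (∐ X)) {I : Type v} (G : I → C) (hG : ∀ i, Q (G i))
    (hG' : ∀ s, S s → ∃ i, Nonempty (s ≅ G i)) (X : C) :
    ∃ T : ApproxTower S X, ∀ n, Q (T.obj n) := by
  let Stage := {p : Over X // Q p.left}
  have step : ∀ p : Stage, ∃ (q : Stage) (i : p.1.left ⟶ q.1.left), i ≫ q.1.hom = p.1.hom ∧
      ∀ s, S s → ∀ g : s ⟶ p.1.left, g ≫ p.1.hom = 0 → g ≫ i = 0 := fun p => by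
    let φ : (∐ fun x : (Σ i, {g : G i ⟶ p.1.left // g ≫ p.1.hom = 0}) => G x.1) ⟶ p.1.left :=
      Sigma.desc fun x => x.2.1
    obtain ⟨Y, i, d, hY⟩ := distinguished_cocone_triangle φ
    obtain ⟨f, hf⟩ := dist_desc hY p.1.hom (Sigma.hom_ext _ _ fun x => by simp [φ, x.2.2])
    refine ⟨⟨Over.mk f, hQ.cone _ hY (hcoprod _ fun x => hG _) p.2⟩, i, hf, fun s hs g hg => ?_⟩
    obtain ⟨j, ⟨e⟩⟩ := hG' s hs
    have hφ : Sigma.ι (fun x : (Σ i, {g : G i ⟶ p.1.left // g ≫ p.1.hom = 0}) => G x.1)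
        ⟨j, e.inv ≫ g, by rw [Category.assoc, hg, comp_zero]⟩ ≫ φ = e.inv ≫ g := Sigma.ι_desc _ _
    rw [← cancel_epi e.inv, ← Category.assoc, ← hφ, Category.assoc, dist_comp hY, comp_zero,
      comp_zero]
  choose nxt i hi hk using step
  let U₀ : C := ∐ fun x : (Σ i, G i ⟶ X) => G x.1
  let p₀ : U₀ ⟶ X := Sigma.desc fun x => x.2
  let seq : ℕ → Stage := fun n => Nat.rec ⟨Over.mk p₀, hcoprod _ fun x => hG _⟩ (fun _ p => nxt p) n
  refine ⟨⟨fun n => (seq n).1.left, fun n => i (seq n), fun n => (seq n).1.hom,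
    fun n => hi (seq n), fun s hs f => ?_, fun s hs n g hg => hk (seq n) s hs g hg⟩,
    fun n => (seq n).2⟩
  obtain ⟨j, ⟨e⟩⟩ := hG' s hs
  refine ⟨e.hom ≫ Sigma.ι (fun x : (Σ i, G i ⟶ X) => G x.1) ⟨j, e.inv ≫ f⟩, ?_⟩
  change (e.hom ≫ Sigma.ι (fun x : (Σ i, G i ⟶ X) => G x.1) ⟨j, e.inv ≫ f⟩) ≫ p₀ = f
  rw [Category.assoc, Sigma.ι_desc, Iso.hom_inv_id_assoc]

end TowerOverObject

section Localization

open Cardinal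

variable {C : Type u} [Category.{v} C] [HasZeroObject C] [Preadditive C]
    [HasShift C ℤ] [∀ n : ℤ, (CategoryTheory.shiftFunctor C n).Additive]
    [Pretriangulated C] [HasCoproducts.{v} C]
    {K : C ⥤ AddCommGrpCat.{v}} [K.Additive]
    [∀ α : Type v, PreservesColimitsOfShape (Discrete α) K] {J : Type v}
    (hgen : CompactsGenerate C) (hK : IsExact K) (hJ : ℵ₀ ≤ #J)
    (hKJ : ∀ X : C, Gen J X → ∀ n : ℤ, #(K.obj (X⟦n⟧)) ≤ #J)

include hgen hK hJ hKJ

lemma factorsSequences_smallAcyclic {Q : C → Prop} (hQK : ∀ X, Q X → KAcyclic C K X) :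
    FactorsSequences (SmallAcyclic K J) Q := fun s hs U hU f => by
  obtain ⟨Y, a, b, hY, hb⟩ := exists_smallAcyclic_sigma hgen hK hJ hKJ hs.1
    (fun n : ULift.{v} ℕ => U n.down) (fun n => hQK _ (hU n.down)) f
  refine ⟨fun n => Y ⟨n⟩, fun n => a ⟨n⟩, b, fun n => hY ⟨n⟩, ?_⟩
  rw [totMap_eq_sigma_map]
  exact hb

/-- Every object is approximated by an object of `Q` as seen from small acyclic objects, for
suitable classes `Q` of acyclic objects. -/
lemma exists_approximation {I : Type v} (G : I → C)
    (hG : ∀ X : C, Gen J X → ∃ i, Nonempty (X ≅ G i)) {Q : C → Prop} (hQ : TriClosed Q)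
    (hcoprod : ∀ {α : Type v} (X : α → C), (∀ a, Q (X a)) → Q (∐ X))
    (hQK : ∀ X, Q X → KAcyclic C K X) (hSQ : ∀ X, SmallAcyclic K J X → Q X) (X : C) :
    ∃ (V : C) (p : V ⟶ X), Q V ∧
      (∀ s, SmallAcyclic K J s → ∀ f : s ⟶ X, ∃ f' : s ⟶ V, f' ≫ p = f) ∧
      ∀ s, SmallAcyclic K J s → ∀ k : s ⟶ V, k ≫ p = 0 → k = 0 := by
  obtain ⟨T, hT⟩ := exists_approxTower (S := SmallAcyclic K J) hQ hcoprod
    (fun i : {i // SmallAcyclic K J (G i)} => G i.1) (fun i => hSQ _ i.2) (fun s hs => by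
      obtain ⟨i, ⟨e⟩⟩ := hG s hs.1
      exact ⟨⟨i, (triClosed_smallAcyclic hK).iso e hs⟩, ⟨e⟩⟩) X
  exact T.exists_colimit (factorsSequences_smallAcyclic hgen hK hJ hKJ hQK) hT hQ
    (hcoprod _ fun n => hT n.down) fun s hs => (triClosed_smallAcyclic hK).shift _ hs

/-- An acyclic object receiving no nonzero morphisms from small acyclic objects is zero. -/
lemma isZero_of_kAcyclic {W : C} (hW : KAcyclic C K W)
    (h : ∀ s, SmallAcyclic K J s → ∀ f : s ⟶ W, f = 0) : IsZero W := by
  have hc : ∀ T : C, IsCompactObj C T → ∀ (n : ℤ) (f : T⟦n⟧ ⟶ W), f = 0 := fun T hT n f => by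
    obtain ⟨V, a, b, hV, rfl⟩ := exists_smallAcyclic_factorization hgen hK hJ hKJ
      (Gen.compact (isCompactObj_shift hT n)) hW f
    rw [h V hV b, comp_zero]
  have hret : ∀ ⦃X Y : C⦄ (i : X ⟶ Y) (r : Y ⟶ X), i ≫ r = 𝟙 X → (∀ f : Y ⟶ W, f = 0) →
      ∀ f : X ⟶ W, f = 0 := fun X Y i r hir hY f => by
    rw [← Category.id_comp f, ← hir, Category.assoc, hY (r ≫ f), comp_zero]
  have hiso : ∀ ⦃X Y : C⦄, (X ≅ Y) → (∀ f : X ⟶ W, f = 0) → ∀ f : Y ⟶ W, f = 0 :=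
    fun X Y e => hret e.inv e.hom e.inv_hom_id
  have key : ∀ X : C, ∀ (n : ℤ) (f : X⟦n⟧ ⟶ W), f = 0 := by
    refine hgen (fun X => ∀ (n : ℤ) (f : X⟦n⟧ ⟶ W), f = 0)
      (fun Z hZ => hc Z (isCompactObj_of_isZero hZ))
      (fun X Y e hX n => hiso ((shiftFunctor C n).mapIso e) (hX n))
      (fun X n hX m => hiso ((shiftFunctorAdd C n m).app X) (hX _))
      (fun T hT h₁ h₃ n f => ?_)
      (fun X Y i r hir hY n => hret (i⟦n⟧') (r⟦n⟧')
        (by rw [← CategoryTheory.Functor.map_comp, hir, CategoryTheory.Functor.map_id]) (hY n))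
      (fun α X hX n => hiso (PreservesCoproduct.iso (shiftFunctor C n) X).symm fun f => ?_) hc
    · obtain ⟨g, rfl⟩ := dist_desc (T.shift_distinguished hT n) f (h₁ n _)
      rw [h₃ n g, comp_zero]
    · exact Sigma.hom_ext _ _ fun a => (hX a n _).trans comp_zero.symm
  rw [IsZero.iff_id_eq_zero]
  exact hiso (shiftZeroIso W) (key W 0) _

/-- Morphisms out of acyclic objects are detected on small acyclic objects. -/
lemma eq_zero_of_forall_smallAcyclic {I : Type v} (G : I → C)
    (hG : ∀ X : C, Gen J X → ∃ i, Nonempty (X ≅ G i)) {L : C}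
    (hL : ∀ s, SmallAcyclic K J s → ∀ f : s ⟶ L, f = 0) {U : C} (hU : KAcyclic C K U)
    (f : U ⟶ L) : f = 0 := by
  have hiso : ∀ ⦃X Y : C⦄, (X ≅ Y) → (∀ f : X ⟶ L, f = 0) → ∀ f : Y ⟶ L, f = 0 :=
    fun X Y e h f => by rw [← cancel_epi e.hom, h (e.hom ≫ f), comp_zero]
  have hQ : TriClosed (fun X : C => KAcyclic C K X ∧ ∀ (n : ℤ) (f : X⟦n⟧ ⟶ L), f = 0) :=
    (triClosed_kAcyclic hK).and (triClosed_forall_shift hiso fun T hT h₁ h₂ f => by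
      obtain ⟨g, rfl⟩ := dist_desc₃ hT f (h₂ _)
      rw [h₁ 1 g, comp_zero])
  obtain ⟨V, p, hV, hlift, hinj⟩ := exists_approximation hgen hK hJ hKJ G hG hQ
    (fun X hX => ⟨kAcyclic_coprod X fun a => (hX a).1, fun n =>
      hiso (PreservesCoproduct.iso (shiftFunctor C n) X).symm fun f =>
        Sigma.hom_ext _ _ fun a => ((hX a).2 n _).trans comp_zero.symm⟩)
    (fun X hX => hX.1)
    (fun X hX => ⟨hX.2, fun n => hL _ ((triClosed_smallAcyclic hK).shift n hX)⟩) U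
  obtain ⟨W, j, d, hT⟩ := distinguished_cocone_triangle p
  have hW : IsZero W := isZero_of_kAcyclic hgen hK hJ hKJ
    ((triClosed_kAcyclic hK).cone _ hT hV.1 hU) fun s hs =>
      eq_zero_of_approximation (triClosed_smallAcyclic hK) hT hlift hinj hs
  obtain ⟨g, rfl⟩ := dist_desc hT f (hiso (shiftZeroIso V) (hV.2 0) _)
  rw [hW.eq_of_src g 0, comp_zero]

end Localization
end BousfieldLocalization

/-- Bousfield localisation with respect to a homology theory `K` exists on a compactly
generated triangulated category: every `X` sits in a distinguished triangle
`CX → X → LX → ΣCX` with `CX ∈ 𝒰 = ker K_*` and `LX ∈ 𝒰^⊥`; moreover `CX → X` is terminal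
in `𝒰/X` and `X → LX` is initial in `X/𝒰^⊥`. -/
theorem stmt18 (C : Type u) [Category.{v} C] [HasZeroObject C] [Preadditive C]
    [HasShift C ℤ] [∀ n : ℤ, (CategoryTheory.shiftFunctor C n).Additive]
    [Pretriangulated C] [HasCoproducts.{v} C]
    -- `𝒯` is compactly generated:
    (hsmall : EssentiallySmall.{v} (ObjectProperty.FullSubcategory (IsCompactObj C)))
    (hgen : ∀ (P : C → Prop),
      (∀ Z : C, IsZero Z → P Z) →
      (∀ ⦃X Y : C⦄, (X ≅ Y) → P X → P Y) →
      (∀ (X : C) (n : ℤ), P X → P (X⟦n⟧)) →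
      (∀ (T : Triangle C), T ∈ (distTriang C) → P T.obj₁ → P T.obj₃ → P T.obj₂) →
      (∀ ⦃X Y : C⦄ (i : X ⟶ Y) (r : Y ⟶ X), i ≫ r = 𝟙 X → P Y → P X) →
      (∀ ⦃α : Type v⦄ (f : α → C), (∀ a, P (f a)) → P (∐ f)) →
      (∀ T : C, IsCompactObj C T → P T) → ∀ X, P X)
    -- `K` is a homology theory:
    (K : C ⥤ AddCommGrpCat.{v}) [K.Additive]
    [∀ α : Type v, PreservesColimitsOfShape (Discrete α) K]
    (hexact : ∀ (T : Triangle C), T ∈ (distTriang C) →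
      Function.Exact (K.map T.mor₁) (K.map T.mor₂))
    (X : C) :
    ∃ (CX LX : C) (q : CX ⟶ X) (j : X ⟶ LX) (d : LX ⟶ CX⟦(1 : ℤ)⟧),
      Triangle.mk q j d ∈ (distTriang C) ∧
      KAcyclic C K CX ∧
      (∀ U : C, KAcyclic C K U → ∀ f : U ⟶ LX, f = 0) ∧
      (∀ U : C, KAcyclic C K U → ∀ g : U ⟶ X, ∃! h : U ⟶ CX, h ≫ q = g) ∧
      (∀ Z : C, (∀ U : C, KAcyclic C K U → ∀ f : U ⟶ Z, f = 0) →
        ∀ g : X ⟶ Z, ∃! h : LX ⟶ Z, j ≫ h = g) := by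
  have hK : BousfieldLocalization.IsExact K := hexact
  obtain ⟨J, hJ, hKJ, I, G, hG⟩ := BousfieldLocalization.exists_gen_small hsmall K hK
  obtain ⟨V, q, hV, hlift, hinj⟩ := BousfieldLocalization.exists_approximation hgen hK hJ hKJ G hG
    (BousfieldLocalization.triClosed_kAcyclic hK) BousfieldLocalization.kAcyclic_coprod
    (fun _ h => h) (fun _ h => h.2) X
  obtain ⟨L, j, d, hT⟩ := distinguished_cocone_triangle q
  have hL : ∀ U : C, KAcyclic C K U → ∀ f : U ⟶ L, f = 0 := fun U hU =>
    BousfieldLocalization.eq_zero_of_forall_smallAcyclic hgen hK hJ hKJ G hG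
      (fun s hs => BousfieldLocalization.eq_zero_of_approximation
        (BousfieldLocalization.triClosed_smallAcyclic hK) hT hlift hinj hs) hU
  refine ⟨V, L, q, j, d, hT, hV, hL, fun U hU g => ?_, fun Z hZ g => ?_⟩
  · obtain ⟨h, hh⟩ := BousfieldLocalization.dist_lift hT g (hL U hU _)
    refine ⟨h, hh, fun h' hh' => sub_eq_zero.1 ?_⟩
    obtain ⟨l, hl⟩ := BousfieldLocalization.dist_lift₁ hT ((h' - h)⟦(1 : ℤ)⟧') (by
      rw [← CategoryTheory.Functor.map_comp, Preadditive.sub_comp, hh, hh', sub_self,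
        CategoryTheory.Functor.map_zero])
    refine (shiftFunctor C (1 : ℤ)).map_injective ?_
    rw [← hl, hL _ ((BousfieldLocalization.triClosed_kAcyclic hK).shift 1 hU) l, zero_comp,
      CategoryTheory.Functor.map_zero]
  · obtain ⟨h, hh⟩ := BousfieldLocalization.dist_desc hT g (hZ V hV _)
    refine ⟨h, hh, fun h' hh' => sub_eq_zero.1 ?_⟩
    obtain ⟨l, hl⟩ := BousfieldLocalization.dist_desc₃ hT (h' - h) (by
      rw [Preadditive.comp_sub, hh, hh', sub_self])
    rw [← hl, hZ _ ((BousfieldLocalization.triClosed_kAcyclic hK).shift 1 hV) l, comp_zero]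
end

section
/- Let 𝒯 be a compactly generated triangulated category with small coproducts and let K : 𝒯 → Ab be a homology theory. Put 𝒰 = ker(K_*) = {X : K(Σ^n X) = 0 for all n ∈ ℤ}. Then 𝒰 is a localising subcategory of 𝒯 (thick, triangulated, and closed under small coproducts), and for every object X the comma category X/𝒰 has a weakly initial set; consequently the Verdier quotient 𝒯/𝒰 has small hom sets. -/
open CategoryTheory Limits Pretriangulated Opposite

universe v u

/-- The class of morphisms whose cone lies in the subcategory of objects satisfying `P`:
inverting these gives the Verdier quotient `𝒯/𝒰`. -/
def coneW (C : Type u) [Category.{v} C] [HasZeroObject C] [Preadditive C] [HasShift C ℤ]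
    [∀ n : ℤ, (CategoryTheory.shiftFunctor C n).Additive] [Pretriangulated C]
    (P : C → Prop) : MorphismProperty C := fun X Y f =>
  ∃ (Z : C) (g : Y ⟶ Z) (h : Z ⟶ X⟦(1 : ℤ)⟧),
    Triangle.mk f g h ∈ (distTriang C) ∧ P Z

section Coproducts

/-- Every element of a coproduct of abelian groups is a finite sum of elements of the summands. -/
lemma AddCommGrpCat.exists_eq_sum_of_isColimit {α : Type v} {Y : α → AddCommGrpCat.{v}}
    (c : Cofan Y) (hc : IsColimit c) (x : c.pt) :
    ∃ (s : Finset α) (y : ∀ a, Y a), x = ∑ a ∈ s, (c.inj a).hom (y a) := by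
  classical
  let Φ : (Π₀ a, Y a) →+ c.pt := DFinsupp.sumAddHom (fun a => (c.inj a).hom)
  let q : c.pt ⟶ AddCommGrpCat.of (c.pt ⧸ Φ.range) :=
    AddCommGrpCat.ofHom (QuotientAddGroup.mk' Φ.range)
  have hq : q = 0 := by
    refine Cofan.IsColimit.hom_ext hc _ _ (fun a => ?_)
    ext y
    have : (c.inj a).hom y ∈ Φ.range :=
      ⟨DFinsupp.single a y, DFinsupp.sumAddHom_single _ _ _⟩
    simpa [q] using (QuotientAddGroup.eq_zero_iff _).2 this
  have hx : x ∈ Φ.range := by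
    rw [← QuotientAddGroup.eq_zero_iff]
    exact ConcreteCategory.congr_hom hq x
  obtain ⟨y, rfl⟩ := hx
  exact ⟨y.support, fun a => y a, DFinsupp.sumAddHom_apply _ _⟩

variable {C : Type u} [Category.{v} C]

lemma exists_eq_sum_of_preservesCoproduct {α : Type v} (X : α → C) [HasCoproduct X]
    (F : C ⥤ AddCommGrpCat.{v}) [PreservesColimit (Discrete.functor X) F]
    (x : F.obj (∐ X)) :
    ∃ (s : Finset α) (y : ∀ a, F.obj (X a)), x = ∑ a ∈ s, F.map (Sigma.ι X a) (y a) :=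
  AddCommGrpCat.exists_eq_sum_of_isColimit _
    (isColimitCofanMkObjOfIsColimit F _ _ (coproductIsCoproduct X)) x

variable [HasZeroMorphisms C]

open Classical in
/-- The projection of a coproduct onto one of its summands. -/
noncomputable def sigmaProj {α : Type v} (X : α → C) [HasCoproduct X] (a : α) : ∐ X ⟶ X a :=
  Sigma.desc (fun b => if h : b = a then eqToHom (by rw [h]) else 0)

@[simp]
lemma ι_sigmaProj_self {α : Type v} (X : α → C) [HasCoproduct X] (a : α) :
    Sigma.ι X a ≫ sigmaProj X a = 𝟙 _ := by
  simp [sigmaProj]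

lemma ι_sigmaProj_of_ne {α : Type v} (X : α → C) [HasCoproduct X] {a b : α} (h : b ≠ a) :
    Sigma.ι X b ≫ sigmaProj X a = 0 := by
  simp [sigmaProj, h]

end Coproducts

lemma sum_comp_sigmaProj {C : Type u} [Category.{v} C] [Preadditive C] {α : Type v} (X : α → C)
    [HasCoproduct X] {T : C} (s : Finset α) (g : ∀ a, T ⟶ X a) {a : α} (ha : a ∈ s) :
    (∑ b ∈ s, g b ≫ Sigma.ι X b) ≫ sigmaProj X a = g a := by
  rw [Preadditive.sum_comp, Finset.sum_eq_single_of_mem a ha]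
  · simp
  · intro b _ hb
    simp [ι_sigmaProj_of_ne X hb]

section Compact

variable {C : Type u} [Category.{v} C] [Preadditive C] [HasCoproducts.{v} C]

lemma isCompactObj_iff (T : C) :
    IsCompactObj C T ↔ ∀ (α : Type v) (X : α → C) (f : T ⟶ ∐ X),
      ∃ (s : Finset α) (g : ∀ a, T ⟶ X a), f = ∑ a ∈ s, g a ≫ Sigma.ι X a := by
  constructor
  · intro hT α X f
    obtain ⟨_⟩ := hT α
    exact exists_eq_sum_of_preservesCoproduct X (preadditiveCoyoneda.obj (op T)) f
  · intro hT α
    refine ⟨?_⟩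
    let F := preadditiveCoyoneda.obj (op T)
    suffices ∀ X : α → C, PreservesColimit (Discrete.functor X) F from
      preservesColimitsOfShape_of_discrete _
    intro X
    have hι (a : α) (y : F.obj (X a)) :
        sigmaComparison F X (Sigma.ι (fun a => F.obj (X a)) a y) = F.map (Sigma.ι X a) y :=
      ConcreteCategory.congr_hom (ι_comp_sigmaComparison F X a) y
    suffices IsIso (sigmaComparison F X) from PreservesCoproduct.of_iso_comparison F X
    rw [ConcreteCategory.isIso_iff_bijective]
    constructor
    · rw [injective_iff_map_eq_zero]
      intro x hx
      obtain ⟨s, y, rfl⟩ := AddCommGrpCat.exists_eq_sum_of_isColimit _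
        (coproductIsCoproduct (fun a => F.obj (X a))) x
      rw [map_sum] at hx
      have h0 : (∑ b ∈ s, (show T ⟶ X b from y b) ≫ Sigma.ι X b) = 0 :=
        (Finset.sum_congr rfl (fun a _ => (hι a (y a)).symm)).trans hx
      refine Finset.sum_eq_zero (fun a ha => ?_)
      have : y a = 0 := by
        have := sum_comp_sigmaProj X s (fun b => (show T ⟶ X b from y b)) ha
        rw [h0, zero_comp] at this
        exact this.symm
      rw [this, map_zero]
    · intro f
      obtain ⟨s, g, hf⟩ := hT α X f
      refine ⟨∑ a ∈ s, Sigma.ι (fun a => F.obj (X a)) a (show F.obj (X a) from g a), ?_⟩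
      rw [map_sum, hf]
      exact Finset.sum_congr rfl (fun a _ => hι a (g a))

lemma IsCompactObj.of_isZero {T : C} (hT : IsZero T) : IsCompactObj C T := by
  rw [isCompactObj_iff]
  exact fun α X f => ⟨∅, fun _ => 0, hT.eq_of_src _ _⟩

lemma IsCompactObj.of_iso {S T : C} (e : S ≅ T) (hS : IsCompactObj C S) : IsCompactObj C T := by
  rw [isCompactObj_iff] at hS ⊢
  intro α X f
  obtain ⟨s, g, h⟩ := hS α X (e.hom ≫ f)
  refine ⟨s, fun a => e.inv ≫ g a, ?_⟩
  rw [← cancel_epi e.hom, h, Preadditive.comp_sum]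
  simp

variable [HasShift C ℤ] [∀ n : ℤ, (CategoryTheory.shiftFunctor C n).Additive]

lemma IsCompactObj.shift {T : C} (hT : IsCompactObj C T) (n : ℤ) : IsCompactObj C (T⟦n⟧) := by
  rw [isCompactObj_iff] at hT ⊢
  intro α X f
  let Y : α → C := fun a => (X a)⟦-n⟧
  let ψ (a : α) : (Y a)⟦n⟧ ≅ X a := (shiftFunctorCompIsoId C (-n) n (by simp)).app (X a)
  let θ : (∐ Y)⟦n⟧ ≅ ∐ X :=
    (PreservesCoproduct.iso (shiftFunctor C n) Y) ≪≫ Sigma.mapIso ψ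
  have hθ (a : α) : (Sigma.ι Y a)⟦n⟧' ≫ θ.hom = (ψ a).hom ≫ Sigma.ι X a := by
    have : (Sigma.ι Y a)⟦n⟧' ≫ (PreservesCoproduct.iso (shiftFunctor C n) Y).hom =
        Sigma.ι (fun a => (Y a)⟦n⟧) a := by
      rw [← Iso.eq_comp_inv, PreservesCoproduct.inv_hom, ι_comp_sigmaComparison]
    simp only [θ, Iso.trans_hom, reassoc_of% this]
    simp
  obtain ⟨f', hf'⟩ := (shiftFunctor C n).map_surjective (f ≫ θ.inv)
  obtain ⟨s, g, rfl⟩ := hT α Y f'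
  refine ⟨s, fun a => (g a)⟦n⟧' ≫ (ψ a).hom, ?_⟩
  rw [Iso.eq_comp_inv] at hf'
  rw [← hf', Functor.map_sum, Preadditive.sum_comp]
  simp [hθ]

variable [HasZeroObject C] [Pretriangulated C]

lemma IsCompactObj.obj₃ {D : Triangle C} (hD : D ∈ distTriang C)
    (h₁ : IsCompactObj C D.obj₁) (h₂ : IsCompactObj C D.obj₂) : IsCompactObj C D.obj₃ := by
  classical
  replace h₁ := h₁.shift 1
  rw [isCompactObj_iff] at h₁ h₂ ⊢
  intro α X f
  obtain ⟨s, g, hg⟩ := h₂ α X (D.mor₂ ≫ f)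
  have hf : D.mor₂ ≫ (f - ∑ a ∈ s, (f ≫ sigmaProj X a) ≫ Sigma.ι X a) = 0 := by
    rw [Preadditive.comp_sub, sub_eq_zero, Preadditive.comp_sum, hg]
    refine Finset.sum_congr rfl (fun a ha => ?_)
    rw [← sum_comp_sigmaProj X s g ha, ← hg]
    simp
  obtain ⟨k, hk⟩ := D.yoneda_exact₃ hD _ hf
  obtain ⟨t, l, rfl⟩ := h₁ α X k
  refine ⟨s ∪ t, fun a => (if a ∈ s then f ≫ sigmaProj X a else 0) +
    (if a ∈ t then D.mor₃ ≫ l a else 0), ?_⟩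
  rw [sub_eq_iff_eq_add'] at hk
  conv_lhs => rw [hk]
  simp [Preadditive.add_comp, Finset.sum_add_distrib, ite_comp, Preadditive.comp_sum]

lemma IsCompactObj.obj₁ {D : Triangle C} (hD : D ∈ distTriang C)
    (h₂ : IsCompactObj C D.obj₂) (h₃ : IsCompactObj C D.obj₃) : IsCompactObj C D.obj₁ := by
  have := (obj₃ (rot_of_distTriang _ hD) h₂ h₃).shift (-1)
  exact this.of_iso ((shiftFunctorCompIsoId C (1 : ℤ) (-1) (by simp)).app D.obj₁)

lemma IsCompactObj.biprod {S T : C} (hS : IsCompactObj C S) (hT : IsCompactObj C T) :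
    IsCompactObj C (S ⊞ T) :=
  obj₁ (rot_of_distTriang _ (binaryBiproductTriangle_distinguished S T)) hT (hS.shift 1)

end Compact

section ElementwiseMaps

variable {C : Type u} [Category.{v} C] {K : C ⥤ AddCommGrpCat.{v}}

lemma map_comp_apply {X Y Z : C} (f : X ⟶ Y) (g : Y ⟶ Z) (x : K.obj X) :
    K.map (f ≫ g) x = K.map g (K.map f x) := by simp

variable [Preadditive C] [K.Additive]

lemma map_add_apply {X Y : C} (f g : X ⟶ Y) (x : K.obj X) :
    K.map (f + g) x = K.map f x + K.map g x := by
  rw [K.map_add]; rfl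

lemma map_neg_apply {X Y : C} (f : X ⟶ Y) (x : K.obj X) :
    K.map (-f) x = - K.map f x := by
  rw [K.map_neg]; rfl

lemma map_zero_apply {X Y : C} (x : K.obj X) :
    K.map (0 : X ⟶ Y) x = 0 := by
  rw [K.map_zero]; rfl

end ElementwiseMaps

section Homology

open scoped ZeroObject

variable {C : Type u} [Category.{v} C] [Preadditive C] (K : C ⥤ AddCommGrpCat.{v})

/-- `K(X)` is the filtered colimit of the groups `K(T)` over morphisms `T ⟶ X` from compact
objects `T`. -/
structure IsCompactlyDetermined (X : C) : Prop where
  exists_lift (x : K.obj X) :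
    ∃ (T : C) (_ : IsCompactObj C T) (f : T ⟶ X) (t : K.obj T), K.map f t = x
  exists_factorization {T : C} (hT : IsCompactObj C T) (f : T ⟶ X) (t : K.obj T)
    (ht : K.map f t = 0) :
    ∃ (T' : C) (_ : IsCompactObj C T') (u : T ⟶ T') (w : T' ⟶ X), u ≫ w = f ∧ K.map u t = 0

variable {K}

lemma IsCompactlyDetermined.of_isCompactObj {T : C} (hT : IsCompactObj C T) :
    IsCompactlyDetermined K T where
  exists_lift t := ⟨T, hT, 𝟙 T, t, by simp⟩
  exists_factorization {S} _ f t ht := ⟨T, hT, f, 𝟙 T, by simp, ht⟩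

lemma IsCompactlyDetermined.of_retract {X Y : C} (i : X ⟶ Y) (r : Y ⟶ X) (hir : i ≫ r = 𝟙 X)
    (hY : IsCompactlyDetermined K Y) : IsCompactlyDetermined K X where
  exists_lift x := by
    obtain ⟨T, hT, f, t, h⟩ := hY.exists_lift (K.map i x)
    exact ⟨T, hT, f ≫ r, t, by rw [map_comp_apply, h, ← map_comp_apply, hir]; simp⟩
  exists_factorization {T} hT f t ht := by
    obtain ⟨T', hT', u, w, h, h'⟩ := hY.exists_factorization hT (f ≫ i) t
      (by rw [map_comp_apply, ht, map_zero])
    exact ⟨T', hT', u, w ≫ r, by rw [reassoc_of% h, hir, Category.comp_id], h'⟩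

variable [HasZeroObject C]
  [HasShift C ℤ] [∀ n : ℤ, (CategoryTheory.shiftFunctor C n).Additive]
  [Pretriangulated C]

variable (K) in
/-- The exactness condition of a homology theory. -/
abbrev MapsTrianglesToExact : Prop :=
  ∀ (D : Triangle C), D ∈ (distTriang C) → Function.Exact (K.map D.mor₁) (K.map D.mor₂)

lemma exists_compact_lift_of_map_mor₁_eq_zero (hexact : MapsTrianglesToExact K)
    {D : Triangle C} (hD : D ∈ distTriang C)
    (h₃ : IsCompactlyDetermined K (D.obj₃⟦(-1 : ℤ)⟧)) (x : K.obj D.obj₁)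
    (hx : K.map D.mor₁ x = 0) :
    ∃ (R : C) (_ : IsCompactObj C R) (d : R ⟶ D.obj₁) (ρ : K.obj R),
      d ≫ D.mor₁ = 0 ∧ K.map d ρ = x := by
  obtain ⟨z, hz⟩ := (hexact _ (inv_rot_of_distTriang _ hD) x).1 hx
  obtain ⟨R, hR, r, ρ, hr⟩ := h₃.exists_lift z
  let j : D.obj₃⟦(-1 : ℤ)⟧ ⟶ D.obj₁ := D.invRotate.mor₁
  have hj : j ≫ D.mor₁ = 0 := comp_distTriang_mor_zero₁₂ _ (inv_rot_of_distTriang _ hD)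
  have hz' : K.map j z = x := hz
  exact ⟨R, hR, r ≫ j, ρ, by rw [Category.assoc, hj, comp_zero],
    by rw [map_comp_apply, hr, hz']⟩

variable [HasCoproducts.{v} C]

lemma exists_compact_lift_add {X R S : C} (hR : IsCompactObj C R) (hS : IsCompactObj C S)
    (r : R ⟶ X) (s : S ⟶ X) (a : K.obj R) (b : K.obj S) :
    ∃ (T : C) (_ : IsCompactObj C T) (f : T ⟶ X) (t : K.obj T),
      K.map f t = K.map r a + K.map s b := by
  refine ⟨R ⊞ S, hR.biprod hS, biprod.desc r s, K.map biprod.inl a + K.map biprod.inr b, ?_⟩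
  rw [map_add, ← map_comp_apply, ← map_comp_apply, biprod.inl_desc,
    biprod.inr_desc]

lemma exists_compact_fiber (hexact : MapsTrianglesToExact K)
    {D : Triangle C} (hD : D ∈ distTriang C) {T T₁ : C} (hT : IsCompactObj C T)
    (hT₁ : IsCompactObj C T₁) (f : T ⟶ D.obj₂) (u : T ⟶ T₁) (w : T₁ ⟶ D.obj₃)
    (huw : u ≫ w = f ≫ D.mor₂) (t : K.obj T) (hu : K.map u t = 0) :
    ∃ (S : C) (_ : IsCompactObj C S) (σ : S ⟶ T) (a : S ⟶ D.obj₁) (s : K.obj S),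
      σ ≫ f = a ≫ D.mor₁ ∧ K.map σ s = t := by
  obtain ⟨S, σ, δ, hS⟩ := distinguished_cocone_triangle₁ u
  obtain ⟨a, ha, -⟩ := complete_distinguished_triangle_morphism₁ _ _ hS hD f w huw
  obtain ⟨s, hs⟩ := (hexact _ hS t).1 hu
  exact ⟨S, IsCompactObj.obj₁ hS hT hT₁, σ, a, s, ha, hs⟩

lemma exists_compact_cofiber {A B Y : C} (hA : IsCompactObj C A) (hB : IsCompactObj C B)
    (k : A ⟶ B) (m : B ⟶ Y) (hkm : k ≫ m = 0) :
    ∃ (T : C) (_ : IsCompactObj C T) (c : B ⟶ T) (l : T ⟶ Y), c ≫ l = m ∧ k ≫ c = 0 := by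
  obtain ⟨T, c, γ, hT⟩ := distinguished_cocone_triangle k
  obtain ⟨l, hl⟩ := Triangle.yoneda_exact₂ _ hT m hkm
  exact ⟨T, IsCompactObj.obj₃ hT hA hB, c, l, hl.symm, comp_distTriang_mor_zero₁₂ _ hT⟩

variable [K.Additive]

lemma IsCompactlyDetermined.sigma [∀ α : Type v, PreservesColimitsOfShape (Discrete α) K]
    {α : Type v} (X : α → C) (hX : ∀ a, IsCompactlyDetermined K (X a)) :
    IsCompactlyDetermined K (∐ X) where
  exists_lift x := by
    classical
    obtain ⟨s, y, rfl⟩ := exists_eq_sum_of_preservesCoproduct X K x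
    induction s using Finset.induction_on with
    | empty => exact ⟨0, .of_isZero (isZero_zero C), 0, 0, by simp⟩
    | insert a s ha ih =>
      obtain ⟨S, hS, f, t, h⟩ := ih
      obtain ⟨R, hR, g, r, h'⟩ := (hX a).exists_lift (y a)
      rw [Finset.sum_insert ha, ← h, ← h', ← map_comp_apply]
      exact exists_compact_lift_add hR hS _ _ _ _
  exists_factorization {T} hT f t ht := by
    classical
    obtain ⟨s, g, rfl⟩ := (isCompactObj_iff T).1 hT α X f
    have hg (a) (ha : a ∈ s) : K.map (g a) t = 0 := by
      rw [← sum_comp_sigmaProj X s g ha, map_comp_apply, ht, map_zero]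
    clear ht
    induction s using Finset.induction_on with
    | empty => exact ⟨0, .of_isZero (isZero_zero C), 0, 0, by simp, map_zero_apply _⟩
    | insert a s ha ih =>
      obtain ⟨S, hS, u, w, h, h₀⟩ := ih (fun b hb => hg b (Finset.mem_insert_of_mem hb))
      obtain ⟨R, hR, u', w', h', h₀'⟩ :=
        (hX a).exists_factorization hT (g a) t (hg a (Finset.mem_insert_self _ _))
      refine ⟨R ⊞ S, hR.biprod hS, u' ≫ biprod.inl + u ≫ biprod.inr,
        biprod.desc (w' ≫ Sigma.ι X a) w, ?_, ?_⟩
      · simp [Finset.sum_insert ha, ← h, reassoc_of% h']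
      · rw [map_add_apply, map_comp_apply, map_comp_apply, h₀, h₀', map_zero,
          map_zero, add_zero]

lemma IsCompactlyDetermined.obj₂ (hexact : MapsTrianglesToExact K)
    {D : Triangle C} (hD : D ∈ distTriang C)
    (h₁ : IsCompactlyDetermined K D.obj₁) (h₁' : IsCompactlyDetermined K (D.obj₁⟦(1 : ℤ)⟧))
    (h₃ : IsCompactlyDetermined K D.obj₃) (h₃' : IsCompactlyDetermined K (D.obj₃⟦(-1 : ℤ)⟧)) :
    IsCompactlyDetermined K D.obj₂ where
  exists_lift y := by
    obtain ⟨T, hT, f, t, hf⟩ := h₃.exists_lift (K.map D.mor₂ y)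
    obtain ⟨T₁, hT₁, u, w, huw, hu⟩ := h₁'.exists_factorization hT (f ≫ D.mor₃) t (by
      rw [map_comp_apply, hf, ← map_comp_apply, comp_distTriang_mor_zero₂₃ _ hD,
        map_zero_apply])
    obtain ⟨S, hS, σ, a, s, ha, hs⟩ : ∃ (S : C) (_ : IsCompactObj C S) (σ : S ⟶ T)
        (a : S ⟶ D.obj₂) (s : K.obj S), σ ≫ f = a ≫ D.mor₂ ∧ K.map σ s = t :=
      exists_compact_fiber hexact (rot_of_distTriang _ hD) hT hT₁ f u w huw t hu
    obtain ⟨x, hx⟩ := (hexact _ hD (y - K.map a s)).1 (by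
      rw [map_sub, ← hf, ← hs, ← map_comp_apply, ← map_comp_apply, ha, sub_self])
    obtain ⟨R, hR, r, ρ, rfl⟩ := h₁.exists_lift x
    rw [eq_sub_iff_add_eq, ← map_comp_apply] at hx
    rw [← hx]
    exact exists_compact_lift_add hR hS _ _ _ _
  exists_factorization {T} hT f t ht := by
    obtain ⟨T₁, hT₁, u, w, huw, hu⟩ := h₃.exists_factorization hT (f ≫ D.mor₂) t (by
      rw [map_comp_apply, ht, map_zero])
    obtain ⟨S, hS, σ, a, s, ha, hs⟩ := exists_compact_fiber hexact hD hT hT₁ f u w huw t hu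
    obtain ⟨R, hR, d, ρ, hd, hdρ⟩ :=
      exists_compact_lift_of_map_mor₁_eq_zero hexact hD h₃' (K.map a s) (by
        rw [← map_comp_apply, ← ha, map_comp_apply, hs, ht])
    obtain ⟨e, he⟩ : ∃ e : K.obj (R ⊞ S), e = K.map biprod.inl ρ + K.map biprod.inr s :=
      ⟨_, rfl⟩
    obtain ⟨Q, hQ, q, p, hqp, hq⟩ := h₁.exists_factorization (hR.biprod hS)
      (biprod.desc d (-a)) e (by
        rw [he, map_add, ← map_comp_apply, ← map_comp_apply, biprod.inl_desc,
          biprod.inr_desc, map_neg_apply, hdρ, add_neg_cancel])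
    obtain ⟨T', hT', c, l, hcl, hkc⟩ := exists_compact_cofiber (hR.biprod hS) (hT.biprod hQ)
      (biprod.desc 0 σ ≫ biprod.inl + q ≫ biprod.inr) (biprod.desc f (p ≫ D.mor₁)) (by
        ext <;> simp [reassoc_of% hqp, hd, ha])
    refine ⟨T', hT', biprod.inl ≫ c, l, by rw [Category.assoc, hcl, biprod.inl_desc], ?_⟩
    have hσ : K.map (biprod.desc 0 σ) e = t := by
      rw [he, map_add, ← map_comp_apply, ← map_comp_apply, biprod.inl_desc,
        biprod.inr_desc, map_zero_apply, hs, zero_add]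
    have hk : K.map (biprod.desc 0 σ ≫ biprod.inl + q ≫ biprod.inr) e = K.map biprod.inl t := by
      rw [map_add_apply, map_comp_apply, map_comp_apply, hq, hσ, map_zero, add_zero]
    rw [map_comp_apply, ← hk, ← map_comp_apply, hkc, map_zero_apply]

lemma isCompactlyDetermined
    (hgen : ∀ (P : C → Prop),
      (∀ Z : C, IsZero Z → P Z) →
      (∀ ⦃X Y : C⦄, (X ≅ Y) → P X → P Y) →
      (∀ (X : C) (n : ℤ), P X → P (X⟦n⟧)) →
      (∀ (T : Triangle C), T ∈ (distTriang C) → P T.obj₁ → P T.obj₃ → P T.obj₂) →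
      (∀ ⦃X Y : C⦄ (i : X ⟶ Y) (r : Y ⟶ X), i ≫ r = 𝟙 X → P Y → P X) →
      (∀ ⦃α : Type v⦄ (f : α → C), (∀ a, P (f a)) → P (∐ f)) →
      (∀ T : C, IsCompactObj C T → P T) → ∀ X, P X)
    [∀ α : Type v, PreservesColimitsOfShape (Discrete α) K]
    (hexact : MapsTrianglesToExact K) (X : C) : IsCompactlyDetermined K X := by
  have of_iso {X Y : C} (e : X ≅ Y) (hX : IsCompactlyDetermined K X) :
      IsCompactlyDetermined K Y := .of_retract e.inv e.hom e.inv_hom_id hX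
  suffices ∀ m : ℤ, IsCompactlyDetermined K (X⟦m⟧) from
    of_iso ((shiftFunctorZero C ℤ).app X) (this 0)
  refine hgen (fun X => ∀ m : ℤ, IsCompactlyDetermined K (X⟦m⟧)) ?_ ?_ ?_ ?_ ?_ ?_ ?_ X
  · exact fun Z hZ m => .of_isCompactObj (.of_isZero ((shiftFunctor C m).map_isZero hZ))
  · exact fun X Y e hX m => of_iso ((shiftFunctor C m).mapIso e) (hX m)
  · exact fun X n hX m => of_iso ((shiftFunctorAdd C n m).app X) (hX (n + m))
  · intro D hD h₁ h₃ m
    refine .obj₂ hexact (Triangle.shift_distinguished D hD m) (h₁ m) ?_ (h₃ m) ?_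
    · exact of_iso ((shiftFunctorAdd C m 1).app D.obj₁) (h₁ (m + 1))
    · exact of_iso ((shiftFunctorAdd C m (-1)).app D.obj₃) (h₃ (m + -1))
  · exact fun X Y i r hir hY m => .of_retract (i⟦m⟧') (r⟦m⟧')
      (by rw [← Functor.map_comp, hir, CategoryTheory.Functor.map_id]) (hY m)
  · exact fun α f hf m => of_iso (PreservesCoproduct.iso (shiftFunctor C m) f).symm
      (.sigma _ (fun a => hf a m))
  · exact fun T hT m => .of_isCompactObj (hT.shift m)

end Homology

section Acyclic

variable {C : Type u} [Category.{v} C] [HasShift C ℤ] {K : C ⥤ AddCommGrpCat.{v}}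

lemma KAcyclic.of_retract {X Y : C} (i : X ⟶ Y) (r : Y ⟶ X) (hir : i ≫ r = 𝟙 X)
    (hY : KAcyclic C K Y) : KAcyclic C K X := fun n => by
  rw [IsZero.iff_id_eq_zero, ← CategoryTheory.Functor.map_id, ← CategoryTheory.Functor.map_id,
    ← hir, Functor.map_comp, Functor.map_comp, (hY n).eq_of_tgt (K.map (i⟦n⟧')) 0, zero_comp]

lemma KAcyclic.eq_zero {X : C} (hX : KAcyclic C K X) {n : ℤ} (x : K.obj (X⟦n⟧)) : x = 0 :=
  have := AddCommGrpCat.subsingleton_of_isZero (hX n)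
  Subsingleton.elim _ _

lemma KAcyclic.sigma [HasCoproducts.{v} C]
    [∀ α : Type v, PreservesColimitsOfShape (Discrete α) K] {α : Type v} (f : α → C)
    (hf : ∀ a, KAcyclic C K (f a)) : KAcyclic C K (∐ f) := fun n => by
  have (x : K.obj ((∐ f)⟦n⟧)) : x = 0 := by
    obtain ⟨s, y, rfl⟩ := exists_eq_sum_of_preservesCoproduct f (shiftFunctor C n ⋙ K) x
    refine Finset.sum_eq_zero fun a _ => ?_
    rw [(hf a).eq_zero (y a), map_zero]
  have : Subsingleton (K.obj ((∐ f)⟦n⟧)) := ⟨fun x y => by rw [this x, this y]⟩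
  exact AddCommGrpCat.isZero_of_subsingleton _

variable [Preadditive C] [HasZeroObject C] [∀ n : ℤ, (CategoryTheory.shiftFunctor C n).Additive]
  [Pretriangulated C]

lemma MapsTrianglesToExact.isHomological [K.Additive] (hexact : MapsTrianglesToExact K) :
    K.IsHomological where
  exact T hT := (ShortComplex.ab_exact_iff_function_exact _).2 (hexact T hT)

lemma coneW_kAcyclic : coneW C (KAcyclic C K) = K.homologicalKernel.trW := by
  ext X Y f
  rw [ObjectProperty.trW_iff]
  simp only [exists_prop]
  rfl

lemma exists_map_shift_mor₁_eq [K.IsHomological] {F X V : C} {f : F ⟶ X} {g : X ⟶ V}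
    {h : V ⟶ F⟦(1 : ℤ)⟧} (hT : Triangle.mk f g h ∈ distTriang C) (n : ℤ) (x : K.obj (X⟦n⟧))
    (hx : K.map (g⟦n⟧') x = 0) : ∃ y : K.obj (F⟦n⟧), K.map (f⟦n⟧') y = x := by
  let := Functor.ShiftSequence.tautological K ℤ
  exact (ShortComplex.ab_exact_iff _).1 (K.homologySequence_exact₂ _ hT n) x hx

lemma kAcyclic_of_isIso [K.IsHomological] {F X V : C} {f : F ⟶ X} {g : X ⟶ V}
    {h : V ⟶ F⟦(1 : ℤ)⟧} (hT : Triangle.mk f g h ∈ distTriang C)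
    (hf : ∀ n : ℤ, IsIso (K.map (f⟦n⟧'))) : KAcyclic C K V := by
  let := Functor.ShiftSequence.tautological K ℤ
  exact (K.homologicalKernel.trW_iff_of_distinguished _ hT).1
    ((K.mem_homologicalKernel_trW_iff f).2 hf)

end Acyclic

section WeaklyInitial

/-- A morphism inducing zero on all the homology groups `K_n`. -/
def IsKPhantom {C : Type u} [Category.{v} C] [HasShift C ℤ] (K : C ⥤ AddCommGrpCat.{v}) {X Y : C}
    (f : X ⟶ Y) : Prop :=
  ∀ n : ℤ, K.map (f⟦n⟧') = 0

lemma IsKPhantom.sigmaDesc {C : Type u} [Category.{v} C] [HasShift C ℤ] [HasCoproducts.{v} C]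
    {K : C ⥤ AddCommGrpCat.{v}} [∀ α : Type v, PreservesColimitsOfShape (Discrete α) K]
    {α : Type v} {A : α → C} {Y : C}
    (f : ∀ a, A a ⟶ Y)
    (hf : ∀ a, IsKPhantom K (f a)) : IsKPhantom K (Sigma.desc f) := fun n => by
  ext x
  obtain ⟨s, y, rfl⟩ := exists_eq_sum_of_preservesCoproduct A (shiftFunctor C n ⋙ K) x
  rw [map_sum]
  refine Finset.sum_eq_zero fun a _ => ?_
  have : K.map ((Sigma.ι A a)⟦n⟧') ≫ K.map ((Sigma.desc f)⟦n⟧') = 0 := by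
    rw [← K.map_comp, ← Functor.map_comp, Sigma.ι_desc, hf a n]
  exact ConcreteCategory.congr_hom this (y a)

variable {C : Type u} [Category.{v} C] [Preadditive C]
  [HasShift C ℤ] [∀ n : ℤ, (CategoryTheory.shiftFunctor C n).Additive]
  [HasCoproducts.{v} C] {K : C ⥤ AddCommGrpCat.{v}}

lemma exists_compact_lift_shift (hK : ∀ X : C, IsCompactlyDetermined K X) {X : C} (n : ℤ)
    (x : K.obj (X⟦n⟧)) :
    ∃ (T : C) (_ : IsCompactObj C T) (f : T ⟶ X) (t : K.obj (T⟦n⟧)), K.map (f⟦n⟧') t = x := by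
  obtain ⟨T, hT, f, t, rfl⟩ := (hK (X⟦n⟧)).exists_lift x
  let e : (T⟦-n⟧)⟦n⟧ ≅ T := (shiftFunctorCompIsoId C (-n) n (by simp)).app T
  obtain ⟨f', hf'⟩ := (shiftFunctor C n).map_surjective (e.hom ≫ f)
  refine ⟨T⟦-n⟧, hT.shift _, f', K.map e.inv t, ?_⟩
  rw [hf', ← map_comp_apply, e.inv_hom_id_assoc]

variable [HasZeroObject C] [Pretriangulated C] [K.IsHomological]

/-- Every object `X` has a small family of phantom morphisms through which all morphisms from `X`
to acyclic objects factor. -/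
lemma exists_phantom_family (hK : ∀ X : C, IsCompactlyDetermined K X)
    (hsmall : EssentiallySmall.{v} (ObjectProperty.FullSubcategory (IsCompactObj C))) (X : C) :
    ∃ (I : Type v) (N : I → C) (e : ∀ i, X ⟶ N i), (∀ i, IsKPhantom K (e i)) ∧
      ∀ (V : C), KAcyclic C K V → ∀ g : X ⟶ V, ∃ (i : I) (h : N i ⟶ V), e i ≫ h = g := by
  let σ := SmallModel.{v} (ObjectProperty.FullSubcategory (IsCompactObj C))
  let c (s : σ) : C :=
    ((equivSmallModel (ObjectProperty.FullSubcategory (IsCompactObj C))).inverse.obj s).obj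
  have hc (T : C) (hT : IsCompactObj C T) : ∃ s, Nonempty (c s ≅ T) :=
    ⟨_, ⟨(ObjectProperty.ι _).mapIso
      ((equivSmallModel (ObjectProperty.FullSubcategory (IsCompactObj C))).unitIso.app
        ⟨T, hT⟩).symm⟩⟩
  let Elt : Type v := Σ n : ℤ, K.obj (X⟦n⟧)
  choose N e d hd using fun i : Elt → Σ s : σ, (c s ⟶ X) =>
    distinguished_cocone_triangle (Sigma.desc fun p => (i p).2)
  refine ⟨{i // IsKPhantom K (e i)}, fun i => N i, fun i => e i, fun i => i.2, ?_⟩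
  intro V hV g
  obtain ⟨F, q, δ, hF⟩ := distinguished_cocone_triangle₁ g
  have lift (p : Elt) : ∃ (s : σ) (f : c s ⟶ F) (t : K.obj ((c s)⟦p.1⟧)),
      K.map ((f ≫ q)⟦p.1⟧') t = p.2 := by
    obtain ⟨y, hy⟩ := exists_map_shift_mor₁_eq hF p.1 p.2 (hV.eq_zero _)
    obtain ⟨T, hT, f, t, ht⟩ := exists_compact_lift_shift hK p.1 y
    obtain ⟨s, ⟨w⟩⟩ := hc T hT
    refine ⟨s, w.hom ≫ f, K.map (w.inv⟦p.1⟧') t, ?_⟩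
    rw [← map_comp_apply, ← Functor.map_comp, Category.assoc, w.inv_hom_id_assoc,
      Functor.map_comp, map_comp_apply, ht, hy]
  choose s f t ht using lift
  let i : Elt → Σ s : σ, (c s ⟶ X) := fun p => ⟨s p, f p ≫ q⟩
  have hi : IsKPhantom K (e i) := fun n => by
    ext x
    have h₀ : Sigma.desc (fun p => (i p).2) ≫ e i = 0 := comp_distTriang_mor_zero₁₂ _ (hd i)
    have hx : K.map ((i ⟨n, x⟩).2⟦n⟧') (t ⟨n, x⟩) = x := ht ⟨n, x⟩
    have h₁ : (i ⟨n, x⟩).2 ≫ e i = 0 := by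
      rw [← Sigma.ι_desc (fun p => (i p).2) ⟨n, x⟩, Category.assoc, h₀, comp_zero]
    rw [← hx, ← map_comp_apply, ← Functor.map_comp, h₁, Functor.map_zero, map_zero_apply]
    rfl
  have hg : Sigma.desc (fun p => (i p).2) ≫ g = 0 := by
    ext p
    have : q ≫ g = 0 := comp_distTriang_mor_zero₁₂ _ hF
    simp [i, this]
  obtain ⟨h, hh⟩ := Triangle.yoneda_exact₂ _ (hd i) g hg
  exact ⟨⟨i, hi⟩, h, hh.symm⟩

/-- Every object `X` belongs to a small family of objects such that each morphism from a member to
an acyclic object factors through a phantom morphism to another member. -/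
lemma exists_phantom_closed_family (hK : ∀ X : C, IsCompactlyDetermined K X)
    (hsmall : EssentiallySmall.{v} (ObjectProperty.FullSubcategory (IsCompactObj C))) (X : C) :
    ∃ (D : Type v) (A : D → C) (d₀ : D) (_ : X ≅ A d₀),
      ∀ (V : C), KAcyclic C K V → ∀ (d : D) (g : A d ⟶ V),
        ∃ (d' : D) (e : A d ⟶ A d') (h : A d' ⟶ V), IsKPhantom K e ∧ e ≫ h = g := by
  choose I N e he hfac using exists_phantom_family hK hsmall
  let level (n : ℕ) : Σ J : Type v, J → C :=
    n.rec ⟨PUnit, fun _ => X⟩ fun _ L => ⟨Σ j : L.1, I (L.2 j), fun j => N (L.2 j.1) j.2⟩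
  refine ⟨Σ n, (level n).1, fun d => (level d.1).2 d.2, ⟨0, PUnit.unit⟩, Iso.refl X, ?_⟩
  rintro V hV ⟨n, j⟩ g
  obtain ⟨i, h, hh⟩ := hfac _ V hV g
  exact ⟨⟨n + 1, ⟨j, i⟩⟩, e _ i, h, he _ i, hh⟩

variable [∀ α : Type v, PreservesColimitsOfShape (Discrete α) K]

/-- The telescope of a sequence of phantom morphisms is an acyclic weak colimit. -/
lemma exists_acyclic_telescope (A : ℕ → C) (e : ∀ n, A n ⟶ A (n + 1))
    (he : ∀ n, IsKPhantom K (e n)) :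
    ∃ (U : C) (u : A 0 ⟶ U), KAcyclic C K U ∧ ∀ (V : C) (g : ∀ n, A n ⟶ V),
      (∀ n, e n ≫ g (n + 1) = g n) → ∃ h : U ⟶ V, u ≫ h = g 0 := by
  let B (n : ULift.{v} ℕ) : C := A n.down
  let ι (n : ℕ) : A n ⟶ ∐ B := Sigma.ι B ⟨n⟩
  let φ : ∐ B ⟶ ∐ B := Sigma.desc fun n => e n.down ≫ ι (n.down + 1)
  have hφ : IsKPhantom K φ := .sigmaDesc _ fun a n => by
    rw [Functor.map_comp, K.map_comp, he _ n, zero_comp]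
  obtain ⟨U, u, δ, hU⟩ := distinguished_cocone_triangle (𝟙 (∐ B) - φ)
  refine ⟨U, ι 0 ≫ u, kAcyclic_of_isIso hU fun n => ?_, fun V g hg => ?_⟩
  · rw [Functor.map_sub, K.map_sub, hφ n, sub_zero, CategoryTheory.Functor.map_id,
      CategoryTheory.Functor.map_id]
    infer_instance
  · let G : ∐ B ⟶ V := Sigma.desc fun n => g n.down
    have hG (n : ℕ) : ι n ≫ G = g n := Sigma.ι_desc (fun n : ULift.{v} ℕ => g n.down) ⟨n⟩
    have hφG : φ ≫ G = G := by
      ext ⟨n⟩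
      simp [φ, hG, hg, G]
    obtain ⟨h, hh⟩ : ∃ h : U ⟶ V, G = u ≫ h := Triangle.yoneda_exact₂ _ hU G
      (show (𝟙 (∐ B) - φ) ≫ G = 0 by rw [Preadditive.sub_comp, hφG, Category.id_comp, sub_self])
    exact ⟨h, by rw [Category.assoc, ← hh, hG]⟩

lemma exists_weaklyInitial_family (hK : ∀ X : C, IsCompactlyDetermined K X)
    (hsmall : EssentiallySmall.{v} (ObjectProperty.FullSubcategory (IsCompactObj C))) (X : C) :
    ∃ (ι : Type v) (U : ι → C) (e : ∀ i, X ⟶ U i), (∀ i, KAcyclic C K (U i)) ∧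
      ∀ (V : C), KAcyclic C K V → ∀ g : X ⟶ V, ∃ (i : ι) (h : U i ⟶ V), e i ≫ h = g := by
  obtain ⟨D, A, d₀, w, hA⟩ := exists_phantom_closed_family hK hsmall X
  let ι : Type v := Σ s : ℕ → D, (X ⟶ A (s 0)) × {e : ∀ n, A (s n) ⟶ A (s (n + 1)) //
    ∀ n, IsKPhantom K (e n)}
  choose U u hU hfac using fun i : ι => exists_acyclic_telescope _ i.2.2.1 i.2.2.2
  refine ⟨ι, U, fun i => i.2.1 ≫ u i, hU, fun V hV g => ?_⟩
  choose next e h he heh using hA V hV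
  let state (n : ℕ) : Σ d : D, (A d ⟶ V) :=
    n.rec ⟨d₀, w.inv ≫ g⟩ fun _ S => ⟨next S.1 S.2, h S.1 S.2⟩
  let i : ι := ⟨fun n => (state n).1, w.hom, fun n => e (state n).1 (state n).2, fun n => he _ _⟩
  obtain ⟨k, hk⟩ := hfac i V (fun n => (state n).2) fun n => heh _ _
  refine ⟨i, k, ?_⟩
  rw [Category.assoc, hk]
  exact w.hom_inv_id_assoc g

end WeaklyInitial

section VerdierQuotient

variable {C : Type u} [Category.{v} C] [Preadditive C] [HasZeroObject C]
  [HasShift C ℤ] [∀ n : ℤ, (CategoryTheory.shiftFunctor C n).Additive]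
  [Pretriangulated C]

lemma isMultiplicative_homologicalKernel_trW (K : C ⥤ AddCommGrpCat.{v}) [K.IsHomological] :
    K.homologicalKernel.trW.IsMultiplicative := by
  let := Functor.ShiftSequence.tautological K ℤ
  refine { id_mem X := ?_, comp_mem f g hf hg := ?_ }
  · rw [K.mem_homologicalKernel_trW_iff]
    infer_instance
  · rw [K.mem_homologicalKernel_trW_iff] at hf hg ⊢
    intro n
    have := hf n
    have := hg n
    rw [Functor.map_comp]
    infer_instance

lemma exists_fiber_map {X Y Z V F : C} {s : F ⟶ Y} {f : Y ⟶ V} {g : V ⟶ F⟦(1 : ℤ)⟧}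
    (hT : Triangle.mk s f g ∈ distTriang C) {q : X ⟶ Z} (b : X ⟶ Y) (c : Z ⟶ V)
    (hbc : b ≫ f = q ≫ c) {X' : C} {t : X' ⟶ X} {δ : Z ⟶ X'⟦(1 : ℤ)⟧}
    (hX : Triangle.mk t q δ ∈ distTriang C) : ∃ a : X' ⟶ F, t ≫ b = a ≫ s := by
  obtain ⟨a, ha, _⟩ := complete_distinguished_triangle_morphism₁ _ _ hX hT b c hbc.symm
  exact ⟨a, ha⟩

/-- The class of morphisms with cone in a triangulated subcategory has a right calculus of
fractions; given multiplicativity this does not use the octahedral axiom. -/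
lemma hasRightCalculusOfFractions_trW (P : ObjectProperty C) [P.IsStableUnderShift ℤ]
    [P.trW.IsMultiplicative] : P.trW.HasRightCalculusOfFractions where
  exists_rightFraction X Y φ := by
    obtain ⟨Z, f, g, H, mem⟩ := φ.hs
    obtain ⟨X', f', h', mem'⟩ := distinguished_cocone_triangle₁ (φ.f ≫ f)
    obtain ⟨a, ha⟩ := exists_fiber_map H φ.f (𝟙 Z) (by simp) mem'
    exact ⟨MorphismProperty.RightFraction.mk f' ⟨_, _, _, mem', mem⟩ a, ha⟩
  ext Y Z Z' f₁ f₂ s hs hf₁ := by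
    rw [P.trW_iff'] at hs
    obtain ⟨W, g, h, H, mem⟩ := hs
    have hf₂ : (f₁ - f₂) ≫ s = 0 := by rw [Preadditive.sub_comp, hf₁, sub_self]
    obtain ⟨q, hq⟩ : ∃ q : Y ⟶ W, f₁ - f₂ = q ≫ g := Triangle.coyoneda_exact₂ _ H _ hf₂
    obtain ⟨Y', r, t, mem'⟩ := distinguished_cocone_triangle₁ q
    have eq : r ≫ q = 0 := comp_distTriang_mor_zero₁₂ _ mem'
    refine ⟨Y', r, ⟨_, _, _, mem', mem⟩, ?_⟩
    rw [← sub_eq_zero, ← Preadditive.comp_sub, hq, reassoc_of% eq, zero_comp]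

/-- If each comma category `X/P` has a weakly initial set, then the localization at the morphisms
with cone in `P` is locally small. -/
lemma locallySmall_localization_trW (P : ObjectProperty C) [P.trW.HasRightCalculusOfFractions]
    (hP : ∀ X : C, ∃ (ι : Type v) (U : ι → C) (e : ∀ i, X ⟶ U i), (∀ i, P (U i)) ∧
      ∀ (V : C), P V → ∀ g : X ⟶ V, ∃ (i : ι) (h : U i ⟶ V), e i ≫ h = g) :
    LocallySmall.{v} P.trW.Localization where
  hom_small A B := by
    obtain ⟨X, rfl⟩ := (Localization.Construction.objEquiv P.trW).surjective A
    obtain ⟨Y, rfl⟩ := (Localization.Construction.objEquiv P.trW).surjective B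
    change Small.{v} (P.trW.Q.obj X ⟶ P.trW.Q.obj Y)
    obtain ⟨ι, U, e, hU, hfac⟩ := hP X
    choose F s δ hF using fun i => distinguished_cocone_triangle₁ (e i)
    have hs (i : ι) : P.trW (s i) := ⟨_, _, _, hF i, hU i⟩
    have (i : ι) : IsIso (P.trW.Q.map (s i)) := Localization.inverts P.trW.Q P.trW _ (hs i)
    let roof (p : Σ i : ι, (F i ⟶ Y)) : P.trW.Q.obj X ⟶ P.trW.Q.obj Y :=
      inv (P.trW.Q.map (s p.1)) ≫ P.trW.Q.map p.2
    refine small_of_surjective (f := roof) fun f => ?_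
    obtain ⟨φ, hφ⟩ := Localization.exists_rightFraction P.trW.Q P.trW f
    obtain ⟨V, g, d, hV, hPV⟩ := φ.hs
    obtain ⟨i, h, hh⟩ := hfac V hPV g
    obtain ⟨a, ha⟩ := exists_fiber_map hV (𝟙 X) h (by simp [hh]) (hF i)
    refine ⟨⟨i, a ≫ φ.f⟩, ?_⟩
    change inv (P.trW.Q.map (s i)) ≫ P.trW.Q.map (a ≫ φ.f) = f
    rw [hφ, IsIso.inv_comp_eq, Functor.map_comp]
    rw [Category.comp_id] at ha
    rw [ha, Functor.map_comp, Category.assoc, MorphismProperty.RightFraction.map_s_comp_map]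

end VerdierQuotient

/-- For a homology theory `K` on a compactly generated triangulated category, the kernel
`𝒰 = ker K_*` is a localising subcategory, each `X/𝒰` has a weakly initial set, and
consequently the Verdier quotient `𝒯/𝒰` is locally small. -/
theorem stmt19 (C : Type u) [Category.{v} C] [HasZeroObject C] [Preadditive C]
    [HasShift C ℤ] [∀ n : ℤ, (CategoryTheory.shiftFunctor C n).Additive]
    [Pretriangulated C] [HasCoproducts.{v} C]
    -- `𝒯` is compactly generated:
    (hsmall : EssentiallySmall.{v} (ObjectProperty.FullSubcategory (IsCompactObj C)))
    (hgen : ∀ (P : C → Prop),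
      (∀ Z : C, IsZero Z → P Z) →
      (∀ ⦃X Y : C⦄, (X ≅ Y) → P X → P Y) →
      (∀ (X : C) (n : ℤ), P X → P (X⟦n⟧)) →
      (∀ (T : Triangle C), T ∈ (distTriang C) → P T.obj₁ → P T.obj₃ → P T.obj₂) →
      (∀ ⦃X Y : C⦄ (i : X ⟶ Y) (r : Y ⟶ X), i ≫ r = 𝟙 X → P Y → P X) →
      (∀ ⦃α : Type v⦄ (f : α → C), (∀ a, P (f a)) → P (∐ f)) →
      (∀ T : C, IsCompactObj C T → P T) → ∀ X, P X)
    -- `K` is a homology theory: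
    (K : C ⥤ AddCommGrpCat.{v}) [K.Additive]
    [∀ α : Type v, PreservesColimitsOfShape (Discrete α) K]
    (hexact : ∀ (T : Triangle C), T ∈ (distTriang C) →
      Function.Exact (K.map T.mor₁) (K.map T.mor₂)) :
    -- `𝒰 = ker K_*` is a localising subcategory: ...
    ((∀ Z : C, IsZero Z → KAcyclic C K Z) ∧
      (∀ ⦃X Y : C⦄, (X ≅ Y) → KAcyclic C K X → KAcyclic C K Y) ∧
      (∀ (X : C) (n : ℤ), KAcyclic C K X → KAcyclic C K (X⟦n⟧)) ∧
      (∀ (T : Triangle C), T ∈ (distTriang C) →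
        KAcyclic C K T.obj₁ → KAcyclic C K T.obj₃ → KAcyclic C K T.obj₂) ∧
      (∀ ⦃X Y : C⦄ (i : X ⟶ Y) (r : Y ⟶ X), i ≫ r = 𝟙 X →
        KAcyclic C K Y → KAcyclic C K X) ∧
      (∀ ⦃α : Type v⦄ (f : α → C), (∀ a, KAcyclic C K (f a)) → KAcyclic C K (∐ f))) ∧
    -- ... every comma category `X/𝒰` has a weakly initial set ...
    (∀ X : C, ∃ (ι : Type v) (U : ι → C) (e : ∀ i, X ⟶ U i),
      (∀ i, KAcyclic C K (U i)) ∧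
        ∀ (V : C), KAcyclic C K V → ∀ g : X ⟶ V, ∃ (i : ι) (h : U i ⟶ V), e i ≫ h = g) ∧
    -- ... and consequently the Verdier quotient `𝒯/𝒰` has small hom sets
    LocallySmall.{v} (coneW C (KAcyclic C K)).Localization := by
  have := MapsTrianglesToExact.isHomological hexact
  have := isMultiplicative_homologicalKernel_trW K
  have := hasRightCalculusOfFractions_trW K.homologicalKernel
  have hinit := exists_weaklyInitial_family (isCompactlyDetermined hgen hexact) hsmall
  refine ⟨⟨?_, ?_, ?_, ?_, ?_, ?_⟩, hinit, ?_⟩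
  · exact fun Z hZ n => (shiftFunctor C n ⋙ K).map_isZero hZ
  · exact fun X Y e hX => K.homologicalKernel.prop_of_iso e hX
  · exact fun X n hX => K.homologicalKernel.le_shift n X hX
  · exact fun T hT h₁ h₃ => K.homologicalKernel.ext_of_isTriangulatedClosed₂ T hT h₁ h₃
  · exact fun X Y i r hir hY => hY.of_retract i r hir
  · exact fun α f hf => .sigma f hf
  · rw [coneW_kAcyclic]
    exact locallySmall_localization_trW K.homologicalKernel hinit
end
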